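/- arXiv:1404.7098 — 6 statements merged into one kernel-verified Lean document; each statement's English description precedes it below -/
import Mathlib

section
/- Fix μ>0 and Y∈ℝ⁴, and let G(X) = 1/⟨X̂−Ŷ, X̂−Ŷ⟩₍₁,₄₎, a smooth function of X on ℝ⁴∖{Y}. Then on ℝ⁴∖{Y}: (i) (d̃eg G)(X) = (1 − √(μ⁻²+N(Y))/√(μ⁻²+N(X))) · 2μ⁻² / (⟨X̂−Ŷ, X̂−Ŷ⟩₍₁,₄₎)², and (ii) □̃_μ G = 0, where d̃eg and □̃_μ act in the variable X. -/
noncomputable section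

/-- `N(X) = (x⁰)² + (x¹)² + (x²)² + (x³)²` for `X ∈ ℝ⁴`. -/
def Nq (X : Fin 4 → ℝ) : ℝ := ∑ i, X i ^ 2

/-- The indefinite inner product `⟨W,W′⟩₍₁,₄₎` on `ℝ⁵`. -/
def form14 (W W' : Fin 5 → ℝ) : ℝ :=
  W 0 * W' 0 - W 1 * W' 1 - W 2 * W' 2 - W 3 * W' 3 - W 4 * W' 4

/-- `X̂ = (√(μ⁻² + N(X)), x⁰, x¹, x², x³) ∈ ℝ⁵`. -/
def hat (μ : ℝ) (X : Fin 4 → ℝ) : Fin 5 → ℝ :=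
  Fin.cons (Real.sqrt ((μ ^ 2)⁻¹ + Nq X)) X

/-- The `i`-th standard basis vector of `ℝ⁴`. -/
def e4 (i : Fin 4) : Fin 4 → ℝ := Pi.single i 1

/-- The partial derivative `∂f/∂xⁱ`. -/
def pd (i : Fin 4) (f : (Fin 4 → ℝ) → ℝ) (X : Fin 4 → ℝ) : ℝ := fderiv ℝ f X (e4 i)

/-- The Laplacian `□f = Σᵢ ∂²f/∂(xⁱ)²`. -/
def lap (f : (Fin 4 → ℝ) → ℝ) (X : Fin 4 → ℝ) : ℝ := ∑ i, pd i (pd i f) X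

/-- The degree operator `deg f = Σᵢ xⁱ ∂f/∂xⁱ`. -/
def degOp (f : (Fin 4 → ℝ) → ℝ) (X : Fin 4 → ℝ) : ℝ := ∑ i, X i * pd i f X

/-- `d̃eg f = f + deg f`. -/
def tdeg (f : (Fin 4 → ℝ) → ℝ) (X : Fin 4 → ℝ) : ℝ := f X + degOp f X

/-- The conformal Laplacian `□̃_μ f = □f + μ²(deg(deg f) + 3·deg f + 2f)`. -/
def boxTilde (μ : ℝ) (f : (Fin 4 → ℝ) → ℝ) (X : Fin 4 → ℝ) : ℝ :=
  lap f X + μ ^ 2 * (degOp (degOp f) X + 3 * degOp f X + 2 * f X)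

/-- The linear functional with gradient vector `v`. -/
def gradL (v : Fin 4 → ℝ) : (Fin 4 → ℝ) →L[ℝ] ℝ :=
  ∑ i, v i • (ContinuousLinearMap.proj i : (Fin 4 → ℝ) →L[ℝ] ℝ)

lemma gradL_apply (v w : Fin 4 → ℝ) : gradL v w = ∑ i, v i * w i := by
  simp [gradL]

lemma gradL_e4 (v : Fin 4 → ℝ) (i : Fin 4) : gradL v (e4 i) = v i := by
  simp [gradL_apply, e4, Pi.single_apply]

lemma pd_of {f : (Fin 4 → ℝ) → ℝ} {v X : Fin 4 → ℝ} (h : HasFDerivAt f (gradL v) X) (i : Fin 4) :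
    pd i f X = v i := by
  rw [pd, h.fderiv, gradL_e4]

lemma sqrt_sq_eq {μ : ℝ} (hμ : 0 < μ) (X : Fin 4 → ℝ) :
    0 < Real.sqrt ((μ ^ 2)⁻¹ + Nq X) ∧
      Real.sqrt ((μ ^ 2)⁻¹ + Nq X) ^ 2 = (μ ^ 2)⁻¹ + Nq X := by
  have h : 0 < (μ ^ 2)⁻¹ + Nq X := by
    have : 0 ≤ Nq X := Finset.sum_nonneg fun i _ => sq_nonneg _
    positivity
  exact ⟨Real.sqrt_pos.2 h, Real.sq_sqrt h.le⟩

lemma form_eq {μ : ℝ} (hμ : 0 < μ) (X Y : Fin 4 → ℝ) :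
    form14 (hat μ X - hat μ Y) (hat μ X - hat μ Y) =
      2 * (μ ^ 2)⁻¹ - 2 * Real.sqrt ((μ ^ 2)⁻¹ + Nq X) * Real.sqrt ((μ ^ 2)⁻¹ + Nq Y)
        + 2 * ∑ i, X i * Y i := by
  have h1 := (sqrt_sq_eq hμ X).2
  have h2 := (sqrt_sq_eq hμ Y).2
  have e : ∀ Z : Fin 4 → ℝ, hat μ Z 0 = Real.sqrt ((μ ^ 2)⁻¹ + Nq Z) ∧ hat μ Z 1 = Z 0 ∧
      hat μ Z 2 = Z 1 ∧ hat μ Z 3 = Z 2 ∧ hat μ Z 4 = Z 3 := fun Z => ⟨rfl, rfl, rfl, rfl, rfl⟩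
  obtain ⟨a0, a1, a2, a3, a4⟩ := e X
  obtain ⟨b0, b1, b2, b3, b4⟩ := e Y
  simp only [form14, Pi.sub_apply, a0, a1, a2, a3, a4, b0, b1, b2, b3, b4]
  generalize Real.sqrt ((μ ^ 2)⁻¹ + Nq X) = r at *
  generalize Real.sqrt ((μ ^ 2)⁻¹ + Nq Y) = s at *
  simp only [Nq, Fin.sum_univ_four] at *
  linear_combination h1 + h2

lemma form_ne {μ : ℝ} (hμ : 0 < μ) (X Y : Fin 4 → ℝ) (h : X ≠ Y) :
    form14 (hat μ X - hat μ Y) (hat μ X - hat μ Y) ≠ 0 := by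
  rw [form_eq hμ]
  obtain ⟨r0, h1⟩ := sqrt_sq_eq hμ X
  obtain ⟨s0, h2⟩ := sqrt_sq_eq hμ Y
  generalize Real.sqrt ((μ ^ 2)⁻¹ + Nq X) = r at *
  generalize Real.sqrt ((μ ^ 2)⁻¹ + Nq Y) = s at *
  have ha : 0 < (μ ^ 2)⁻¹ := by positivity
  generalize (μ ^ 2)⁻¹ = a at *
  intro hq
  have hrs : r * s = a + ∑ i, X i * Y i := by linarith
  have hcs : (∑ i, X i * Y i) ^ 2 ≤ Nq X * Nq Y := Finset.sum_mul_sq_le_sq_mul_sq _ _ _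
  have hsub : ∑ i, (X i - Y i) ^ 2 = Nq X + Nq Y - 2 * ∑ i, X i * Y i := by
    simp only [Nq, Fin.sum_univ_four]; ring
  have hprod : (a + Nq X) * (a + Nq Y) = (a + ∑ i, X i * Y i) ^ 2 := by
    rw [← h1, ← h2, ← hrs]; ring
  have hle : ∑ i, (X i - Y i) ^ 2 ≤ 0 := by
    rw [hsub]; by_contra hc; push Not at hc
    nlinarith [mul_pos ha hc]
  have h0 : ∑ i, (X i - Y i) ^ 2 = 0 :=
    le_antisymm hle (Finset.sum_nonneg fun i _ => sq_nonneg _)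
  rw [Finset.sum_eq_zero_iff_of_nonneg fun i _ => sq_nonneg _] at h0
  apply h
  funext i
  have := h0 i (Finset.mem_univ i)
  exact sub_eq_zero.1 (pow_eq_zero_iff two_ne_zero |>.1 this)

lemma hasF_congr {f : (Fin 4 → ℝ) → ℝ} {L : (Fin 4 → ℝ) →L[ℝ] ℝ} {v X : Fin 4 → ℝ}
    (h : HasFDerivAt f L X) (hv : ∀ w, L w = ∑ i, v i * w i) : HasFDerivAt f (gradL v) X := by
  convert h using 1
  ext1 w
  rw [hv, gradL_apply]

lemma hasF_coord (X : Fin 4 → ℝ) (i : Fin 4) :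
    HasFDerivAt (fun X : Fin 4 → ℝ => X i) (gradL (e4 i)) X :=
  hasF_congr (hasFDerivAt_apply (𝕜 := ℝ) i X) (fun w => by simp [e4, Pi.single_apply])

lemma hasF_Nq (X : Fin 4 → ℝ) : HasFDerivAt Nq (gradL (fun i => 2 * X i)) X := by
  have : HasFDerivAt (fun X : Fin 4 → ℝ => ∑ i, X i ^ 2) _ X :=
    HasFDerivAt.fun_sum (u := Finset.univ) fun i _ => (hasF_coord X i).pow 2
  refine hasF_congr this fun w => ?_
  simp [gradL_apply, e4, Pi.single_apply, mul_assoc]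

lemma hasF_r {μ : ℝ} (hμ : 0 < μ) (X : Fin 4 → ℝ) :
    HasFDerivAt (fun X => Real.sqrt ((μ ^ 2)⁻¹ + Nq X))
      (gradL (fun i => X i / Real.sqrt ((μ ^ 2)⁻¹ + Nq X))) X := by
  obtain ⟨r0, h1⟩ := sqrt_sq_eq hμ X
  have hne : (μ ^ 2)⁻¹ + Nq X ≠ 0 := by rw [← h1]; positivity
  refine hasF_congr (((hasF_Nq X).const_add ((μ ^ 2)⁻¹)).sqrt hne) fun w => ?_
  simp only [_root_.smul_apply, gradL_apply, smul_eq_mul, Finset.mul_sum]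
  refine Finset.sum_congr rfl fun i _ => ?_
  field_simp

lemma hasF_rinv {μ : ℝ} (hμ : 0 < μ) (X : Fin 4 → ℝ) :
    HasFDerivAt (fun X => (Real.sqrt ((μ ^ 2)⁻¹ + Nq X))⁻¹)
      (gradL (fun i => -(X i / Real.sqrt ((μ ^ 2)⁻¹ + Nq X) ^ 3))) X := by
  obtain ⟨r0, h1⟩ := sqrt_sq_eq hμ X
  have := (hasDerivAt_inv r0.ne').comp_hasFDerivAt X (hasF_r hμ X)
  refine hasF_congr this fun w => ?_
  simp only [_root_.smul_apply, gradL_apply, smul_eq_mul, Finset.mul_sum]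
  refine Finset.sum_congr rfl fun i _ => ?_
  field_simp

/-- The `i`th partial derivative of `G`, in closed form. -/
def dG (μ : ℝ) (Y : Fin 4 → ℝ) (G : (Fin 4 → ℝ) → ℝ) (i : Fin 4) (X : Fin 4 → ℝ) : ℝ :=
  -2 * (Y i - Real.sqrt ((μ ^ 2)⁻¹ + Nq Y) * (X i * (Real.sqrt ((μ ^ 2)⁻¹ + Nq X))⁻¹)) * G X ^ 2

lemma hasF_G {μ : ℝ} (hμ : 0 < μ) {Y : Fin 4 → ℝ} {G : (Fin 4 → ℝ) → ℝ}
    (hG : ∀ X, G X = (form14 (hat μ X - hat μ Y) (hat μ X - hat μ Y))⁻¹)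
    (X : Fin 4 → ℝ) (h : X ≠ Y) :
    HasFDerivAt G (gradL (fun i => dG μ Y G i X)) X := by
  have hn := form_ne hμ X Y h
  have hGX := hG X
  have hc : HasFDerivAt (fun X : Fin 4 → ℝ => ∑ i, X i * Y i) _ X :=
    HasFDerivAt.fun_sum (u := Finset.univ) fun i _ => (hasF_coord X i).mul_const (Y i)
  have hQ := ((((hasF_r hμ X).const_mul 2).mul_const
    (Real.sqrt ((μ ^ 2)⁻¹ + Nq Y))).const_sub (2 * (μ ^ 2)⁻¹)).add (hc.const_mul 2)
  rw [form_eq hμ] at hn hGX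
  have hI := (hasDerivAt_inv (𝕜 := ℝ) hn).comp_hasFDerivAt X hQ
  have hGe : G = fun X => (2 * (μ ^ 2)⁻¹ - 2 * Real.sqrt ((μ ^ 2)⁻¹ + Nq X) *
      Real.sqrt ((μ ^ 2)⁻¹ + Nq Y) + 2 * ∑ i, X i * Y i)⁻¹ := by
    funext Z; rw [hG, form_eq hμ]
  have hI' := hI.congr_of_eventuallyEq (f₁ := G) (by rw [hGe]; exact Filter.EventuallyEq.rfl)
  refine hasF_congr hI' fun w => ?_
  simp only [dG, hGX]
  simp [gradL_apply, e4, Pi.single_apply, Fin.sum_univ_four]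
  ring

lemma hasF_dG {μ : ℝ} (hμ : 0 < μ) {Y : Fin 4 → ℝ} {G : (Fin 4 → ℝ) → ℝ}
    (hG : ∀ X, G X = (form14 (hat μ X - hat μ Y) (hat μ X - hat μ Y))⁻¹)
    (X : Fin 4 → ℝ) (h : X ≠ Y) (i : Fin 4) :
    HasFDerivAt (dG μ Y G i) (gradL (fun j =>
      -2 * (-Real.sqrt ((μ ^ 2)⁻¹ + Nq Y) * (e4 i j * (Real.sqrt ((μ ^ 2)⁻¹ + Nq X))⁻¹
        - X i * (X j / Real.sqrt ((μ ^ 2)⁻¹ + Nq X) ^ 3))) * G X ^ 2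
      + -2 * (Y i - Real.sqrt ((μ ^ 2)⁻¹ + Nq Y) * (X i * (Real.sqrt ((μ ^ 2)⁻¹ + Nq X))⁻¹))
        * (2 * G X * dG μ Y G j X))) X := by
  have h1 := (((((hasF_coord X i).mul (hasF_rinv hμ X)).const_mul
    (Real.sqrt ((μ ^ 2)⁻¹ + Nq Y))).const_sub (Y i)).const_mul (-2)).mul ((hasF_G hμ hG X h).pow 2)
  refine hasF_congr h1 fun w => ?_
  simp [gradL_apply, Fin.sum_univ_four]
  ring

lemma deg_eq {μ : ℝ} (hμ : 0 < μ) {Y : Fin 4 → ℝ} {G : (Fin 4 → ℝ) → ℝ}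
    (hG : ∀ X, G X = (form14 (hat μ X - hat μ Y) (hat μ X - hat μ Y))⁻¹)
    (X : Fin 4 → ℝ) (h : X ≠ Y) :
    degOp G X = -G X + 2 * (μ ^ 2)⁻¹ *
      (1 - Real.sqrt ((μ ^ 2)⁻¹ + Nq Y) * (Real.sqrt ((μ ^ 2)⁻¹ + Nq X))⁻¹) * G X ^ 2 := by
  simp only [degOp, pd_of (hasF_G hμ hG X h)]
  have hn := form_ne hμ X Y h
  have hGX := hG X
  rw [form_eq hμ] at hn hGX
  obtain ⟨r0, h1⟩ := sqrt_sq_eq hμ X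
  simp only [dG]
  rw [hGX]
  generalize Real.sqrt ((μ ^ 2)⁻¹ + Nq X) = r at *
  generalize Real.sqrt ((μ ^ 2)⁻¹ + Nq Y) = s at *
  generalize (μ ^ 2)⁻¹ = a at *
  obtain ⟨Q, hQ⟩ : ∃ Q, Q = 2 * a - 2 * r * s + 2 * ∑ i, X i * Y i := ⟨_, rfl⟩
  rw [← hQ] at hn ⊢
  simp only [Nq, Fin.sum_univ_four] at *
  field_simp
  linear_combination (r) * hQ - 2 * s * h1

lemma hasF_deg {μ : ℝ} (hμ : 0 < μ) {Y : Fin 4 → ℝ} {G : (Fin 4 → ℝ) → ℝ}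
    (hG : ∀ X, G X = (form14 (hat μ X - hat μ Y) (hat μ X - hat μ Y))⁻¹)
    (X : Fin 4 → ℝ) (h : X ≠ Y) :
    HasFDerivAt (degOp G) (gradL (fun j => -dG μ Y G j X
      + 2 * (μ ^ 2)⁻¹ * (Real.sqrt ((μ ^ 2)⁻¹ + Nq Y) *
        (X j / Real.sqrt ((μ ^ 2)⁻¹ + Nq X) ^ 3)) * G X ^ 2
      + 2 * (μ ^ 2)⁻¹ * (1 - Real.sqrt ((μ ^ 2)⁻¹ + Nq Y) * (Real.sqrt ((μ ^ 2)⁻¹ + Nq X))⁻¹)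
        * (2 * G X * dG μ Y G j X))) X := by
  have hg := hasF_G hμ hG X h
  have h1 := hg.neg.add (((((hasF_rinv hμ X).const_mul
    (Real.sqrt ((μ ^ 2)⁻¹ + Nq Y))).const_sub 1).const_mul (2 * (μ ^ 2)⁻¹)).mul (hg.pow 2))
  have h2 := h1.congr_of_eventuallyEq (f₁ := degOp G) (by
    filter_upwards [isOpen_ne.mem_nhds h] with Z hZ
    exact deg_eq hμ hG Z hZ)
  refine hasF_congr h2 fun w => ?_
  simp [gradL_apply, Fin.sum_univ_four]
  ring

lemma box_zero {μ : ℝ} (hμ : 0 < μ) {Y : Fin 4 → ℝ} {G : (Fin 4 → ℝ) → ℝ}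
    (hG : ∀ X, G X = (form14 (hat μ X - hat μ Y) (hat μ X - hat μ Y))⁻¹)
    (X : Fin 4 → ℝ) (h : X ≠ Y) : boxTilde μ G X = 0 := by
  have hpp : ∀ i, HasFDerivAt (pd i G) _ X := fun i =>
    (hasF_dG hμ hG X h i).congr_of_eventuallyEq (f₁ := pd i G) (by
      filter_upwards [isOpen_ne.mem_nhds h] with Z hZ
      exact pd_of (hasF_G hμ hG Z hZ) i)
  have hl : lap G X = ∑ i, _ := Finset.sum_congr rfl fun i _ => pd_of (hpp i) i
  have hd : degOp (degOp G) X = ∑ i, X i * _ :=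
    Finset.sum_congr rfl fun i _ => by rw [pd_of (hasF_deg hμ hG X h) i]
  rw [boxTilde, hl, hd, deg_eq hμ hG X h]
  have hn := form_ne hμ X Y h
  have hGX := hG X
  rw [form_eq hμ] at hn hGX
  obtain ⟨r0, h1⟩ := sqrt_sq_eq hμ X
  obtain ⟨s0, h2⟩ := sqrt_sq_eq hμ Y
  simp only [dG]
  rw [hGX]
  generalize Real.sqrt ((μ ^ 2)⁻¹ + Nq X) = r at *
  generalize Real.sqrt ((μ ^ 2)⁻¹ + Nq Y) = s at *
  have ha : 0 < (μ ^ 2)⁻¹ := by positivity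
  have hm : μ ^ 2 = ((μ ^ 2)⁻¹)⁻¹ := by simp
  generalize (μ ^ 2)⁻¹ = a at *
  rw [hm]
  obtain ⟨Q, hQ⟩ : ∃ Q, Q = 2 * a - 2 * r * s + 2 * ∑ i, X i * Y i := ⟨_, rfl⟩
  rw [← hQ] at hn ⊢
  have ee : ∀ i, e4 i i = 1 := fun i => by simp [e4]
  simp only [ee]
  have hc : ∑ i, X i * Y i = (Q - 2 * a + 2 * r * s) / 2 := by linarith
  have hN : ∑ i, X i ^ 2 = r ^ 2 - a := by rw [h1, Nq]; ring
  have hM : ∑ i, Y i ^ 2 = s ^ 2 - a := by rw [h2, Nq]; ring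
  clear hGX hQ h1 h2 hl hd hpp hG hm
  -- the two sums in terms of the invariants
  have S1 : (∑ i, (-2 * (-s * (1 * r⁻¹ - X i * (X i / r ^ 3))) * Q⁻¹ ^ 2 +
      -2 * (Y i - s * (X i * r⁻¹)) * (2 * Q⁻¹ * (-2 * (Y i - s * (X i * r⁻¹)) * Q⁻¹ ^ 2))))
      = 2 * s * (4 * r⁻¹ - (∑ i, X i ^ 2) / r ^ 3) * Q⁻¹ ^ 2
        + 8 * Q⁻¹ ^ 3 * ((∑ i, Y i ^ 2) - 2 * s * r⁻¹ * (∑ i, X i * Y i)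
          + s ^ 2 * r⁻¹ ^ 2 * ∑ i, X i ^ 2) := by
    simp only [Fin.sum_univ_four]; ring
  have S2 : (∑ i, X i * (-(-2 * (Y i - s * (X i * r⁻¹)) * Q⁻¹ ^ 2)
      + 2 * a * (s * (X i / r ^ 3)) * Q⁻¹ ^ 2
      + 2 * a * (1 - s * r⁻¹) * (2 * Q⁻¹ * (-2 * (Y i - s * (X i * r⁻¹)) * Q⁻¹ ^ 2))))
      = 2 * ((∑ i, X i * Y i) - s * r⁻¹ * ∑ i, X i ^ 2) * Q⁻¹ ^ 2
        + 2 * a * s * (∑ i, X i ^ 2) / r ^ 3 * Q⁻¹ ^ 2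
        - 8 * a * (1 - s * r⁻¹) * Q⁻¹ ^ 3 * ((∑ i, X i * Y i) - s * r⁻¹ * ∑ i, X i ^ 2) := by
    simp only [Fin.sum_univ_four]; ring
  rw [S1, S2, hc, hN, hM]
  field_simp
  ring

/-- For fixed `μ > 0` and `Y ∈ ℝ⁴`, the function `G(X) = 1/⟨X̂−Ŷ, X̂−Ŷ⟩₍₁,₄₎` satisfies, on
`ℝ⁴ ∖ {Y}`:
(i) `d̃eg G = (1 − √(μ⁻²+N(Y))/√(μ⁻²+N(X))) · 2μ⁻² / (⟨X̂−Ŷ, X̂−Ŷ⟩₍₁,₄₎)²`, and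
(ii) `□̃_μ G = 0`. -/
theorem stmt1 (μ : ℝ) (hμ : 0 < μ) (Y : Fin 4 → ℝ)
    (G : (Fin 4 → ℝ) → ℝ)
    (hG : ∀ X, G X = (form14 (hat μ X - hat μ Y) (hat μ X - hat μ Y))⁻¹) :
    ∀ X, X ≠ Y →
      tdeg G X =
        (1 - Real.sqrt ((μ ^ 2)⁻¹ + Nq Y) / Real.sqrt ((μ ^ 2)⁻¹ + Nq X)) * (2 * (μ ^ 2)⁻¹) /
          (form14 (hat μ X - hat μ Y) (hat μ X - hat μ Y)) ^ 2 ∧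
      boxTilde μ G X = 0 := by
  intro X h
  refine ⟨?_, box_zero hμ hG X h⟩
  rw [tdeg, deg_eq hμ hG X h, hG X]
  ring
end
end

section
/- Let p be a nonnegative integer and set l = p/2. The functions s₁(t) = (t−1)^l/(t+1)^{l+1} and s₂(t) = (t+1)^l/(t−1)^{l+1} (real powers of positive reals) each satisfy the ordinary differential equation (t²−1)·s″(t) + 4t·s′(t) − (4l(l+1)/(t²−1))·s(t) + 2·s(t) = 0 for all real t > 1. -/
noncomputable section

lemma ode_aux (l c : ℝ) (hc : c ^ 2 = (2 * l + 1) ^ 2) (s : ℝ → ℝ)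
    (hs : ∀ t : ℝ, 1 < t → HasDerivAt s (s t * ((c - t) / (t ^ 2 - 1))) t) (t : ℝ) (ht : 1 < t) :
    (t ^ 2 - 1) * deriv (deriv s) t + 4 * t * deriv s t
          - (4 * l * (l + 1) / (t ^ 2 - 1)) * s t + 2 * s t = 0 := by
  have hq : t ^ 2 - 1 ≠ 0 := by nlinarith
  have he : deriv s =ᶠ[nhds t] fun t => s t * ((c - t) / (t ^ 2 - 1)) := by
    filter_upwards [Ioi_mem_nhds ht] with x hx
    exact (hs x hx).deriv
  have h1 : HasDerivAt (fun x : ℝ => c - x) (-1) t := (hasDerivAt_id' t).const_sub c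
  have h2 : HasDerivAt (fun x : ℝ => x ^ 2 - 1) (2 * t) t := by
    simpa using (hasDerivAt_pow 2 t).sub_const 1
  have h3 := (hs t ht).fun_mul (h1.fun_div h2 hq)
  rw [he.deriv_eq, h3.deriv, (hs t ht).deriv]
  have h4 : 4 * l * (l + 1) = c ^ 2 - 1 := by rw [hc]; ring
  rw [h4]
  field_simp
  ring

/-- With `l = p/2` a half-integer, the functions `s₁(t) = (t−1)^l/(t+1)^{l+1}` and
`s₂(t) = (t+1)^l/(t−1)^{l+1}` both satisfy, for all `t > 1`, the ODE
`(t²−1)·s″ + 4t·s′ − (4l(l+1)/(t²−1))·s + 2·s = 0`. -/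
theorem stmt6 (p : ℕ) (l : ℝ) (hl : l = (p : ℝ) / 2)
    (s₁ s₂ : ℝ → ℝ)
    (hs₁ : s₁ = fun t : ℝ => (t - 1) ^ l / (t + 1) ^ (l + 1))
    (hs₂ : s₂ = fun t : ℝ => (t + 1) ^ l / (t - 1) ^ (l + 1)) :
    ∀ t : ℝ, 1 < t →
      ((t ^ 2 - 1) * deriv (deriv s₁) t + 4 * t * deriv s₁ t
          - (4 * l * (l + 1) / (t ^ 2 - 1)) * s₁ t + 2 * s₁ t = 0) ∧
      ((t ^ 2 - 1) * deriv (deriv s₂) t + 4 * t * deriv s₂ t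
          - (4 * l * (l + 1) / (t ^ 2 - 1)) * s₂ t + 2 * s₂ t = 0) := by
  intro t ht
  have key : ∀ (a b x : ℝ), 0 < x + a → 0 < x + b →
      HasDerivAt (fun t : ℝ => (t + a) ^ l / (t + b) ^ (l + 1))
        ((x + a) ^ l / (x + b) ^ (l + 1) * (l / (x + a) - (l + 1) / (x + b))) x := by
    intro a b x ha hb
    have h1 := ((hasDerivAt_id' x).add_const a).rpow_const (p := l) (Or.inl ha.ne')
    have h2 := ((hasDerivAt_id' x).add_const b).rpow_const (p := l + 1) (Or.inl hb.ne')
    have hB := (Real.rpow_pos_of_pos hb (l + 1)).ne'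
    refine (h1.fun_div h2 hB).congr_deriv ?_
    rw [Real.rpow_sub_one ha.ne', Real.rpow_sub_one hb.ne']
    field_simp
  constructor
  · refine ode_aux l (2 * l + 1) rfl s₁ (fun x hx => ?_) t ht
    subst hs₁
    have h := key (-1) 1 x (by linarith) (by linarith)
    simp only [← sub_eq_add_neg] at h
    refine h.congr_deriv ?_
    have e1 : x - 1 ≠ 0 := by linarith
    have e2 : x + 1 ≠ 0 := by linarith
    have e : x ^ 2 - 1 = (x - 1) * (x + 1) := by ring
    simp only [e]
    congr 1
    field_simp
    ring
  · refine ode_aux l (-(2 * l + 1)) (by ring) s₂ (fun x hx => ?_) t ht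
    subst hs₂
    have h := key 1 (-1) x (by linarith) (by linarith)
    simp only [← sub_eq_add_neg] at h
    refine h.congr_deriv ?_
    have e1 : x - 1 ≠ 0 := by linarith
    have e2 : x + 1 ≠ 0 := by linarith
    have e : x ^ 2 - 1 = (x - 1) * (x + 1) := by ring
    simp only [e]
    congr 1
    field_simp
    ring
end
end

section
/- Fix μ>0. For all X, Y ∈ ℝ⁴ with N(X) < N(Y) one has the absolutely convergent expansion −1/⟨X̂−Ŷ, X̂−Ŷ⟩₍₁,₄₎ = Σ_{l∈{0,1/2,1,…}} Σ_{m,n=−l}^{l} [ t^l_{m n̲}(X) / ((1+μ²N(X))^{1/2}+1)^{2l+1} ] · [ μ^{4l+2}·t^l_{n m̲}(Y⁺) / ((1+μ²N(Y))^{1/2}−1)^{2l+1} ], the outer sum taken over l = 0, 1/2, 1, 3/2, …. -/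
noncomputable section

/-- The matrix `Z(V) = [[v⁰−iv³, −iv¹−v²],[−iv¹+v², v⁰+iv³]]` with `det Z(V) = N(V)`. -/
def Zmat (V : Fin 4 → ℂ) : Matrix (Fin 2) (Fin 2) ℂ :=
  !![V 0 - Complex.I * V 3, -Complex.I * V 1 - V 2;
     -Complex.I * V 1 + V 2, V 0 + Complex.I * V 3]

/-- The matrix coefficient `t^l_{n m̲}(Z)`: here `p = 2l`, `a = l−m`, `b = l−n`, and
`tcoef p a b Z` is the coefficient of `s^b` in `(s z₁₁+z₂₁)^a (s z₁₂+z₂₂)^{p−a}`. -/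
def tcoef (p a b : ℕ) (Z : Matrix (Fin 2) (Fin 2) ℂ) : ℂ :=
  ((Polynomial.C (Z 0 0) * Polynomial.X + Polynomial.C (Z 1 0)) ^ a *
   (Polynomial.C (Z 0 1) * Polynomial.X + Polynomial.C (Z 1 1)) ^ (p - a)).coeff b

/-- `t^l_{n m̲}(X)` for `X ∈ ℝ⁴`. -/
def tcoefR (p a b : ℕ) (X : Fin 4 → ℝ) : ℂ := tcoef p a b (Zmat fun i => (X i : ℂ))

/-- The quaternionic conjugate `X⁺ = (x⁰, −x¹, −x², −x³)`. -/
def qconj (X : Fin 4 → ℝ) : Fin 4 → ℝ := ![X 0, -X 1, -X 2, -X 3]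

/-- The term of the expansion indexed by `l` (encoded `p = 2l`) and `m, n ∈ {−l,…,l}`:
with `a = l−n`, `b = l−m`, it is
`[t^l_{m n̲}(X)/((1+μ²N(X))^{1/2}+1)^{2l+1}] · [μ^{4l+2} t^l_{n m̲}(Y⁺)/((1+μ²N(Y))^{1/2}−1)^{2l+1}]`,
where `t^l_{m n̲}(X) = tcoefR p a b X` and `t^l_{n m̲}(Y⁺) = tcoefR p b a (Y⁺)`. -/
def expTerm (μ : ℝ) (X Y : Fin 4 → ℝ) (q : Σ p : ℕ, Fin (p + 1) × Fin (p + 1)) : ℂ :=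
  (tcoefR q.1 q.2.1 q.2.2 X /
      ((Real.sqrt (1 + μ ^ 2 * Nq X) + 1 : ℝ) : ℂ) ^ (q.1 + 1)) *
  (((μ ^ (2 * q.1 + 2) : ℝ) : ℂ) * tcoefR q.1 q.2.2 q.2.1 (qconj Y) /
      ((Real.sqrt (1 + μ ^ 2 * Nq Y) - 1 : ℝ) : ℂ) ^ (q.1 + 1))

open Polynomial in
lemma aux_homog (p a : ℕ) (ha : a ≤ p) (z w u v : ℂ) :
    ((C z * X + C w) ^ a * (C u * X + C v) ^ (p - a) : ℂ[X]).homogenize p =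
    (MvPolynomial.C z * MvPolynomial.X 0 + MvPolynomial.C w * MvPolynomial.X 1) ^ a *
    (MvPolynomial.C u * MvPolynomial.X 0 + MvPolynomial.C v * MvPolynomial.X 1) ^ (p - a) := by
  have key : ∀ z w : ℂ, (MvPolynomial.C z * MvPolynomial.X 0 +
      MvPolynomial.C w * MvPolynomial.X 1 : MvPolynomial (Fin 2) ℂ).IsHomogeneous 1 := by
    intro z w
    exact (MvPolynomial.isHomogeneous_C_mul_X z 0).add (MvPolynomial.isHomogeneous_C_mul_X w 1)
  apply homogenize_eq_of_isHomogeneous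
  · have := ((key z w).pow a).mul ((key u v).pow (p - a))
    convert this using 1
    omega
  · simp [Polynomial.algebraMap_eq]

open Polynomial in
lemma aux_subst (p a : ℕ) (ha : a ≤ p) (Z : Matrix (Fin 2) (Fin 2) ℂ) (A B : ℂ[X]) :
    ∑ b ∈ Finset.range (p + 1), C (tcoef p a b Z) * (A ^ b * B ^ (p - b)) =
    (C (Z 0 0) * A + C (Z 1 0) * B) ^ a * (C (Z 0 1) * A + C (Z 1 1) * B) ^ (p - a) := by
  have h := congrArg (MvPolynomial.aeval ![A, B]) (aux_homog p a ha (Z 0 0) (Z 1 0) (Z 0 1) (Z 1 1))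
  rw [homogenize, map_sum, Finset.Nat.sum_antidiagonal_eq_sum_range_succ_mk] at h
  simp only [map_mul, map_add, map_pow, MvPolynomial.aeval_X, MvPolynomial.aeval_C] at h
  rw [← Polynomial.algebraMap_eq]
  refine Eq.trans (Finset.sum_congr rfl ?_) h
  intro b hb
  rw [MvPolynomial.aeval_monomial]
  congr 1
  rw [Finsupp.prod_fintype _ _ (by simp)]
  simp [Fin.prod_univ_two]

lemma aux_mul (p a c : ℕ) (ha : a ≤ p) (Z W : Matrix (Fin 2) (Fin 2) ℂ) :
    ∑ b ∈ Finset.range (p + 1), tcoef p a b Z * tcoef p b c W = tcoef p a c (W * Z) := by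
  have h := congrArg (fun f => Polynomial.coeff f c) (aux_subst p a ha Z
    (Polynomial.C (W 0 0) * Polynomial.X + Polynomial.C (W 1 0))
    (Polynomial.C (W 0 1) * Polynomial.X + Polynomial.C (W 1 1)))
  simp only [Polynomial.finsetSum_coeff, Polynomial.coeff_C_mul] at h
  refine Eq.trans h ?_
  rw [tcoef]
  simp only [Matrix.mul_apply, Fin.sum_univ_two, map_add, map_mul]
  congr 3 <;> ring

open Polynomial in
lemma aux_lin_pow (R : Type*) [CommRing R] (x y : R) (p a : ℕ) :
    ((C x * X + C y : R[X]) ^ p).coeff a = x ^ a * y ^ (p - a) * p.choose a := by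
  rw [add_pow, finsetSum_coeff]
  have : ∀ b ∈ Finset.range (p + 1), ((C x * X) ^ b * C y ^ (p - b) * (p.choose b : R[X])).coeff a
      = if a = b then x ^ a * y ^ (p - a) * p.choose a else 0 := by
    intro b hb
    rw [mul_pow, ← C_pow, ← C_pow, ← C_eq_natCast, mul_assoc, mul_assoc, coeff_C_mul, mul_comm (X ^ b),
      ← C_mul, coeff_C_mul, coeff_X_pow]
    split_ifs with h
    · subst h; simp; ring
    · simp
  rw [Finset.sum_congr rfl this, Finset.sum_ite_eq]
  split_ifs with h
  · rfl
  · rw [Nat.choose_eq_zero_of_lt (by simpa using h)]; simp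

open Polynomial in
lemma aux_symm (p a b : ℕ) (Z : Matrix (Fin 2) (Fin 2) ℂ) :
    (p.choose a : ℂ) * tcoef p a b Z = p.choose b * tcoef p b a Z.transpose := by
  have key : ∀ (a b : ℕ) (Z : Matrix (Fin 2) (Fin 2) ℂ), (p.choose a : ℂ) * tcoef p a b Z =
    (((C (C (Z 0 0) * X + C (Z 1 0)) * X + C (C (Z 0 1) * X + C (Z 1 1)) : ℂ[X][X]) ^ p).coeff a).coeff b := by
    intro a b Z
    rw [aux_lin_pow, tcoef, ← C_eq_natCast, coeff_mul_C, mul_comm]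
  have hsw : ∀ (a b : ℕ) (f : ℂ[X][X]), (f.coeff a).coeff b = ((Bivariate.swap (R := ℂ) f).coeff b).coeff a := by
    intro a b f
    induction f using Polynomial.induction_on' with
    | add f g hf hg => simp only [map_add, coeff_add, hf, hg]
    | monomial n f =>
      induction f using Polynomial.induction_on' with
      | add f g hf hg => simp only [map_add, coeff_add, hf, hg]
      | monomial m c =>
        rw [Bivariate.swap_monomial_monomial]
        simp only [coeff_monomial]
        split_ifs <;> simp_all [coeff_monomial]
  rw [key, key, hsw]
  congr 2
  rw [map_pow]
  congr 1
  simp only [map_add, map_mul, Bivariate.swap_X, Bivariate.swap_Y, Bivariate.swap_C_C,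
    Matrix.transpose_apply]
  ring

open Polynomial in
lemma aux_tri (p a : ℕ) (Z : Matrix (Fin 2) (Fin 2) ℂ) (h : Z 0 1 = 0 ∨ Z 1 0 = 0) :
    tcoef p a a Z = Z 0 0 ^ a * Z 1 1 ^ (p - a) := by
  rw [tcoef]
  rcases h with h | h
  · rw [h, C_0, zero_mul, zero_add, ← C_pow, coeff_mul_C, aux_lin_pow]
    simp
  · rw [h, C_0, add_zero, mul_pow, ← C_pow, mul_assoc, coeff_C_mul, mul_comm (X ^ a)]
    have := coeff_mul_X_pow ((C (Z 0 1) * X + C (Z 1 1)) ^ (p - a)) a 0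
    rw [zero_add] at this
    rw [this, aux_lin_pow]
    simp

lemma aux_star (p a b : ℕ) (Z : Matrix (Fin 2) (Fin 2) ℂ) :
    tcoef p a b (Z.map star) = star (tcoef p a b Z) := by
  have h : ∀ f : Polynomial ℂ, star (f.coeff b) = (f.map (starRingEnd ℂ)).coeff b := by
    intro f; simp
  rw [tcoef, tcoef, h]
  simp

lemma aux_bound (p a b : ℕ) (ha : a ≤ p) (hb : b ≤ p) (Z : Matrix (Fin 2) (Fin 2) ℂ) (N : ℝ)
    (hZ : Z.conjTranspose * Z = (N : ℂ) • (1 : Matrix (Fin 2) (Fin 2) ℂ)) :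
    ‖tcoef p a b Z‖ ^ 2 * p.choose a ≤ p.choose b * N ^ p := by
  have h1 := aux_mul p a a ha Z Z.conjTranspose
  rw [hZ, aux_tri p a _ (by simp)] at h1
  have h2 : ∀ b ∈ Finset.range (p + 1), tcoef p a b Z * tcoef p b a Z.conjTranspose
      = ((‖tcoef p a b Z‖ ^ 2 * p.choose a / p.choose b : ℝ) : ℂ) := by
    intro b hb
    have hb' : b ≤ p := by simpa [Nat.lt_succ_iff] using hb
    have hc : (p.choose b : ℂ) ≠ 0 := by exact_mod_cast (Nat.choose_pos hb').ne'
    have h3 := aux_symm p a b Z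
    have h4 : tcoef p b a Z.transpose = p.choose a * tcoef p a b Z / p.choose b := by
      rw [eq_div_iff hc, h3]; ring
    have h5 : Z.conjTranspose = Z.transpose.map star := rfl
    rw [h5, aux_star, h4]
    push_cast
    rw [← Complex.mul_conj']
    simp
    ring
  rw [Finset.sum_congr rfl h2, ← Complex.ofReal_sum] at h1
  have h6 : ∑ b ∈ Finset.range (p + 1), (‖tcoef p a b Z‖ ^ 2 * p.choose a / p.choose b : ℝ)
      = N ^ p := by
    apply Complex.ofReal_injective
    rw [h1]
    simp [← pow_add, Nat.add_sub_cancel' ha]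
  have h7 := Finset.single_le_sum
    (f := fun b => (‖tcoef p a b Z‖ ^ 2 * p.choose a / p.choose b : ℝ))
    (fun i _ => by positivity) (Finset.mem_range.2 (Nat.lt_succ_of_le hb))
  rw [h6] at h7
  have : (0 : ℝ) < p.choose b := by exact_mod_cast Nat.choose_pos hb
  rw [div_le_iff₀ this] at h7
  linarith

def chiS (p : ℕ) (M : Matrix (Fin 2) (Fin 2) ℂ) : ℂ :=
  ∑ a ∈ Finset.range (p + 1), tcoef p a a M

lemma aux_chi_comm (p : ℕ) (Z W : Matrix (Fin 2) (Fin 2) ℂ) : chiS p (Z * W) = chiS p (W * Z) := by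
  rw [chiS, chiS]
  have hh : ∀ Z W : Matrix (Fin 2) (Fin 2) ℂ, ∑ a ∈ Finset.range (p + 1), tcoef p a a (Z * W) =
      ∑ a ∈ Finset.range (p + 1), ∑ b ∈ Finset.range (p + 1), tcoef p a b W * tcoef p b a Z := by
    intro Z W
    refine Finset.sum_congr rfl fun a ha => ?_
    rw [aux_mul p a a (by simpa [Nat.lt_succ_iff] using ha)]
  rw [hh, hh, Finset.sum_comm]
  simp only [mul_comm]

lemma aux_chi_tri (M : Matrix (Fin 2) (Fin 2) ℂ) (h : M 0 1 = 0 ∨ M 1 0 = 0) (p : ℕ) :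
    chiS (p + 2) M = M.trace * chiS (p + 1) M - M.det * chiS p M := by
  have e : ∀ p, chiS p M = ∑ a ∈ Finset.range (p + 1), M 0 0 ^ a * M 1 1 ^ (p - a) := by
    intro p
    exact Finset.sum_congr rfl fun a _ => aux_tri p a M h
  have r : ∀ p, chiS (p + 1) M = M 0 0 ^ (p + 1) + M 1 1 * chiS p M := by
    intro p
    rw [e, e, Finset.sum_range_succ, Finset.mul_sum, add_comm]
    congr 1
    · simp
    · refine Finset.sum_congr rfl fun a ha => ?_
      have : a ≤ p := by simpa [Nat.lt_succ_iff] using ha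
      rw [Nat.succ_sub this, pow_succ]; ring
  rw [r (p + 1), r p, Matrix.trace_fin_two, Matrix.det_fin_two]
  rcases h with h | h <;> rw [h] <;> ring

lemma aux_chi_rec (M : Matrix (Fin 2) (Fin 2) ℂ) (p : ℕ) :
    chiS (p + 2) M = M.trace * chiS (p + 1) M - M.det * chiS p M := by
  by_cases h : M 0 1 = 0
  · exact aux_chi_tri M (Or.inl h) p
  · obtain ⟨c, hc⟩ : ∃ c : ℂ, M 0 1 * c ^ 2 - (M 0 0 - M 1 1) * c - M 1 0 = 0 := by
      obtain ⟨s, hs⟩ := IsAlgClosed.exists_pow_nat_eq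
        (discrim (M 0 1) (-(M 0 0 - M 1 1)) (-M 1 0)) (n := 2) (by norm_num)
      obtain ⟨c, hc⟩ := exists_quadratic_eq_zero h ⟨s, by rw [← hs, sq]⟩
      exact ⟨c, by linear_combination hc⟩
    set S : Matrix (Fin 2) (Fin 2) ℂ := !![1, 0; c, 1] with hS
    set S' : Matrix (Fin 2) (Fin 2) ℂ := !![1, 0; -c, 1] with hS'
    have h1 : S' * S = 1 := by
      rw [hS, hS']; ext i j; fin_cases i <;> fin_cases j <;> simp [Matrix.mul_apply]
    have hchi : ∀ p, chiS p M = chiS p (S * M * S') := by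
      intro p
      rw [aux_chi_comm, ← Matrix.mul_assoc, h1, Matrix.one_mul]
    have htr : M.trace = (S * M * S').trace := by
      rw [Matrix.trace_mul_comm, ← Matrix.mul_assoc, h1, Matrix.one_mul]
    have hdet : M.det = (S * M * S').det := by
      rw [Matrix.det_mul_comm, ← Matrix.mul_assoc, h1, Matrix.one_mul]
    rw [hchi, hchi, hchi, htr, hdet]
    apply aux_chi_tri
    right
    simp only [hS, hS', Matrix.mul_apply, Fin.sum_univ_two]
    simp
    linear_combination -hc

lemma aux_chi_zero (M : Matrix (Fin 2) (Fin 2) ℂ) : chiS 0 M = 1 := by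
  simp [chiS, tcoef]

lemma aux_chi_one (M : Matrix (Fin 2) (Fin 2) ℂ) : chiS 1 M = M.trace := by
  simp [chiS, tcoef, Finset.sum_range_succ, Matrix.trace_fin_two, add_comm]

lemma aux_gen (M : Matrix (Fin 2) (Fin 2) ℂ) (r S : ℂ)
    (h : HasSum (fun p => r ^ (p + 1) * chiS p M) S) :
    S * (1 - M.trace * r + M.det * r ^ 2) = r := by
  have h1 := (hasSum_nat_add_iff' 1).2 h
  have h2 := (hasSum_nat_add_iff' 2).2 h
  have h3 := (h1.mul_left (M.trace * r)).sub (h.mul_left (M.det * r ^ 2))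
  have h5 : (fun n => r ^ (n + 2 + 1) * chiS (n + 2) M) = fun b => M.trace * r *
      (r ^ (b + 1 + 1) * chiS (b + 1) M) - M.det * r ^ 2 * (r ^ (b + 1) * chiS b M) := by
    funext n
    rw [aux_chi_rec]; ring
  rw [h5] at h2
  have h4 := h2.unique h3
  simp [Finset.sum_range_succ, aux_chi_zero, aux_chi_one] at h4
  linear_combination h4

lemma aux_Zmat (X : Fin 4 → ℝ) :
    (Zmat fun i => (X i : ℂ)).conjTranspose * (Zmat fun i => (X i : ℂ)) =
      ((Nq X : ℝ) : ℂ) • (1 : Matrix (Fin 2) (Fin 2) ℂ) := by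
  have hI : Complex.I ^ 2 = -1 := Complex.I_sq
  ext i j
  fin_cases i <;> fin_cases j <;>
    simp [Zmat, Matrix.mul_apply, Nq, Fin.sum_univ_four, Fin.sum_univ_two] <;> ring_nf <;>
    (try simp only [hI]) <;> ring

lemma aux_qconj (Y : Fin 4 → ℝ) : Nq (qconj Y) = Nq Y := by
  simp [Nq, qconj, Fin.sum_univ_four]

lemma aux_tr (X Y : Fin 4 → ℝ) :
    ((Zmat fun i => (qconj Y i : ℂ)) * (Zmat fun i => (X i : ℂ))).trace =
      ((2 * ∑ i, X i * Y i : ℝ) : ℂ) := by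
  have hI : Complex.I ^ 2 = -1 := Complex.I_sq
  rw [Matrix.trace_fin_two]
  simp [Zmat, Matrix.mul_apply, qconj, Fin.sum_univ_four, Fin.sum_univ_two]
  ring_nf
  simp only [hI]
  ring

lemma aux_det (X : Fin 4 → ℝ) : (Zmat fun i => (X i : ℂ)).det = ((Nq X : ℝ) : ℂ) := by
  have hI : Complex.I ^ 2 = -1 := Complex.I_sq
  rw [Matrix.det_fin_two]
  simp [Zmat, Nq, Fin.sum_univ_four]
  ring_nf
  simp only [hI]
  ring

lemma aux_Nq_nonneg (X : Fin 4 → ℝ) : 0 ≤ Nq X := by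
  rw [Nq]; positivity

lemma aux_prod_bound (p a b : ℕ) (ha : a ≤ p) (hb : b ≤ p) (X Y : Fin 4 → ℝ) :
    ‖tcoefR p a b X‖ * ‖tcoefR p b a Y‖ ≤ Real.sqrt (Nq X * Nq Y) ^ p := by
  have h1 := aux_bound p a b ha hb _ _ (aux_Zmat X)
  have h2 := aux_bound p b a hb ha _ _ (aux_Zmat Y)
  have hX := aux_Nq_nonneg X
  have hY := aux_Nq_nonneg Y
  have ca : (0 : ℝ) < p.choose a := by exact_mod_cast Nat.choose_pos ha
  have cb : (0 : ℝ) < p.choose b := by exact_mod_cast Nat.choose_pos hb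
  have h3 := mul_le_mul h1 h2 (by positivity) (by positivity)
  rw [← tcoefR, ← tcoefR] at h3
  refine (sq_le_sq₀ (by positivity) (by positivity)).1 ?_
  rw [← pow_mul, mul_comm p 2, pow_mul, Real.sq_sqrt (by positivity), mul_pow, mul_pow]
  have hc : (0 : ℝ) < p.choose a * p.choose b := by positivity
  refine le_of_mul_le_mul_right ?_ hc
  linarith


theorem stmt10 (μ : ℝ) (hμ : 0 < μ) (X Y : Fin 4 → ℝ) (hXY : Nq X < Nq Y) :
    Summable (fun q : Σ p : ℕ, Fin (p + 1) × Fin (p + 1) => ‖expTerm μ X Y q‖) ∧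
    HasSum (expTerm μ X Y)
      ((-(form14 (hat μ X - hat μ Y) (hat μ X - hat μ Y))⁻¹ : ℝ) : ℂ) := by
  have hX := aux_Nq_nonneg X
  have hY := aux_Nq_nonneg Y
  set A := Real.sqrt (1 + μ ^ 2 * Nq X) with hA
  set B := Real.sqrt (1 + μ ^ 2 * Nq Y) with hB
  have hA2 : A ^ 2 = 1 + μ ^ 2 * Nq X := Real.sq_sqrt (by positivity)
  have hB2 : B ^ 2 = 1 + μ ^ 2 * Nq Y := Real.sq_sqrt (by positivity)
  have hA0 : 0 ≤ A := Real.sqrt_nonneg _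
  have hAB : A < B := by
    apply Real.sqrt_lt_sqrt (by positivity)
    have : 0 < μ ^ 2 := by positivity
    nlinarith
  have hA1 : 1 ≤ A := by
    rw [hA, Real.one_le_sqrt]
    have : 0 ≤ μ ^ 2 * Nq X := by positivity
    linarith
  have hB1 : 0 < B - 1 := by linarith
  have hA1' : 0 < A + 1 := by linarith
  set r : ℝ := μ ^ 2 / ((A + 1) * (B - 1)) with hr
  have hr0 : 0 < r := by positivity
  set k : ℝ := r * Real.sqrt (Nq X * Nq Y) with hk
  have hk0 : 0 ≤ k := by positivity
  have hNN : r ^ 2 * (Nq X * Nq Y) = ((A - 1) * (B + 1)) / ((A + 1) * (B - 1)) := by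
    have e1 : Nq X = (A ^ 2 - 1) / μ ^ 2 := by field_simp; linarith
    have e2 : Nq Y = (B ^ 2 - 1) / μ ^ 2 := by field_simp; linarith
    rw [hr, e1, e2]
    field_simp
    ring
  have hk1 : k < 1 := by
    have h2 : k ^ 2 < 1 := by
      rw [hk, mul_pow, Real.sq_sqrt (by positivity), hNN, div_lt_one (by positivity)]
      nlinarith
    nlinarith
  have hterm : ∀ q, expTerm μ X Y q = (r : ℂ) ^ (q.1 + 1) *
      (tcoefR q.1 q.2.1 q.2.2 X * tcoefR q.1 q.2.2 q.2.1 (qconj Y)) := by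
    intro q
    rw [expTerm, hr]
    push_cast
    rw [div_pow, mul_pow, ← pow_mul, show 2 * q.1 + 2 = 2 * (q.1 + 1) by ring, div_mul_div_comm]
    ring
  have hbound : ∀ q : (Σ p : ℕ, Fin (p + 1) × Fin (p + 1)), ‖expTerm μ X Y q‖ ≤ r * k ^ q.1 := by
    intro q
    have h1 := aux_prod_bound q.1 q.2.1 q.2.2 (Nat.lt_succ_iff.1 q.2.1.2)
      (Nat.lt_succ_iff.1 q.2.2.2) X (qconj Y)
    rw [aux_qconj] at h1
    rw [hterm, norm_mul, norm_mul, norm_pow, Complex.norm_real, Real.norm_of_nonneg hr0.le]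
    calc _ ≤ r ^ (q.1 + 1) * Real.sqrt (Nq X * Nq Y) ^ q.1 := by gcongr
      _ = _ := by rw [hk]; ring
  have hsumk : Summable (fun q : (Σ p : ℕ, Fin (p + 1) × Fin (p + 1)) => r * k ^ q.1) := by
    rw [summable_sigma_of_nonneg (fun q => by positivity)]
    refine ⟨fun p => Summable.of_finite, ?_⟩
    have hkn : ‖k‖ < 1 := by rwa [Real.norm_of_nonneg hk0]
    have s0 := summable_pow_mul_geometric_of_norm_lt_one 0 hkn
    have s1 := summable_pow_mul_geometric_of_norm_lt_one 1 hkn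
    have s2 := summable_pow_mul_geometric_of_norm_lt_one 2 hkn
    refine (((s2.add (s1.mul_left 2)).add s0).mul_left r).congr ?_
    intro p
    simp [tsum_fintype]
    ring
  have hsum : Summable (fun q : Σ p : ℕ, Fin (p + 1) × Fin (p + 1) => ‖expTerm μ X Y q‖) :=
    Summable.of_nonneg_of_le (fun _ => norm_nonneg _) hbound hsumk
  refine ⟨hsum, ?_⟩
  have hS := hsum.of_norm.hasSum
  set S := ∑' q, expTerm μ X Y q with hSdef
  set M := (Zmat fun i => (qconj Y i : ℂ)) * (Zmat fun i => (X i : ℂ)) with hM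
  have hS2 : HasSum (fun p => (r : ℂ) ^ (p + 1) * chiS p M) S := by
    have h1 := hS.sigma (fun p => hasSum_fintype _)
    have h2 : (fun p => (r : ℂ) ^ (p + 1) * chiS p M) =
        fun p => ∑ c : Fin (p + 1) × Fin (p + 1), expTerm μ X Y ⟨p, c⟩ := by
     funext p
     simp only [hterm]
     rw [← Finset.mul_sum, Fintype.sum_prod_type, chiS, Finset.sum_range]
     congr 1
     refine Finset.sum_congr rfl fun a _ => ?_
     rw [hM, ← aux_mul p a a (Nat.lt_succ_iff.1 a.2), Finset.sum_range]
     rfl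
    rw [h2]; exact h1
  have hfin := aux_gen M r S hS2
  rw [hM, aux_tr, Matrix.det_mul, aux_det (qconj Y), aux_det X, aux_qconj] at hfin
  have hD : -(form14 (hat μ X - hat μ Y) (hat μ X - hat μ Y)) * r =
      1 - (2 * ∑ i, X i * Y i) * r + Nq Y * Nq X * r ^ 2 := by
    have e1 : Real.sqrt ((μ ^ 2)⁻¹ + Nq X) = A / μ := by
      rw [hA, Real.sqrt_eq_iff_mul_self_eq (by positivity) (by positivity), ← sq, div_pow, hA2]
      field_simp
    have e2 : Real.sqrt ((μ ^ 2)⁻¹ + Nq Y) = B / μ := by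
      rw [hB, Real.sqrt_eq_iff_mul_self_eq (by positivity) (by positivity), ← sq, div_pow, hB2]
      field_simp
    have e3 : form14 (hat μ X - hat μ Y) (hat μ X - hat μ Y) =
        (A / μ - B / μ) ^ 2 - (Nq X + Nq Y - 2 * ∑ i, X i * Y i) := by
      have h1 : (hat μ X - hat μ Y) 0 = A / μ - B / μ := by simp [hat, e1, e2]
      have h2 : ∀ i : Fin 4, (hat μ X - hat μ Y) i.succ = X i - Y i := by intro i; simp [hat]
      have h3 := h2 0
      have h4 := h2 1
      have h5 := h2 2
      have h6 := h2 3
      simp only [Fin.succ_zero_eq_one, Fin.succ_one_eq_two] at h3 h4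
      change (hat μ X - hat μ Y) 3 = _ at h5
      change (hat μ X - hat μ Y) 4 = _ at h6
      rw [form14, h1, h3, h4, h5, h6, Nq, Nq]
      simp only [Fin.sum_univ_four]
      ring
    have e4 : Nq X = (A ^ 2 - 1) / μ ^ 2 := by field_simp; linarith
    have e5 : Nq Y = (B ^ 2 - 1) / μ ^ 2 := by field_simp; linarith
    have e6 : Nq Y * Nq X * r ^ 2 = ((A - 1) * (B + 1)) / ((A + 1) * (B - 1)) := by
      rw [← hNN]; ring
    rw [e6, e3, e4, e5, hr]
    field_simp
    ring
  have hfin2 : S * ((-(form14 (hat μ X - hat μ Y) (hat μ X - hat μ Y)) : ℝ) : ℂ) = 1 := by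
    have hrc : (r : ℂ) ≠ 0 := by exact_mod_cast hr0.ne'
    apply mul_right_cancel₀ hrc
    rw [mul_assoc, ← Complex.ofReal_mul, hD, one_mul]
    refine Eq.trans ?_ hfin
    push_cast
    ring
  rw [← inv_neg, Complex.ofReal_inv, ← eq_inv_of_mul_eq_one_left hfin2]
  exact hS
end
end

section
/- Let Z = (z⁰,z¹,z²,z³) ∈ ℂ⁴ satisfy Im z⁰ > √((Im z¹)² + (Im z²)² + (Im z³)²). Then the integral (1/4π) ∫_{ℝ³} exp( i( z⁰·|p⃗| + z¹p¹ + z²p² + z³p³ ) ) dp¹dp²dp³ / |p⃗| converges absolutely (where |p⃗| = √((p¹)²+(p²)²+(p³)²)) and equals 1/( (z¹)² + (z²)² + (z³)² − (z⁰)² ). -/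
noncomputable section

open MeasureTheory

abbrev LCE := EuclideanSpace ℝ (Fin 3)
abbrev LCW := WithLp 2 (ℝ × ℂ)

lemma lc_int1 {δ : ℝ} (hδ : 0 < δ) : Integrable (fun p : LCE => Real.exp (-δ * ‖p‖)) := by
  have := (integrable_fun_norm_addHaar (volume : Measure LCE)
    (f := fun r : ℝ => Real.exp (-δ * r))).2 ?_
  · exact this
  · have h := integrableOn_rpow_mul_exp_neg_mul_rpow (p := 1) (s := 2) (b := δ)
      (by norm_num) (by norm_num) hδ
    refine h.congr_fun (fun x hx => ?_) measurableSet_Ioi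
    simp

lemma lc_int2 {δ : ℝ} (hδ : 0 < δ) :
    Integrable (fun p : LCE => Real.exp (-δ * ‖p‖) / ‖p‖) := by
  have := (integrable_fun_norm_addHaar (volume : Measure LCE)
    (f := fun r : ℝ => Real.exp (-δ * r) / r)).2 ?_
  · exact this
  · have h := integrableOn_rpow_mul_exp_neg_mul_rpow (p := 1) (s := 1) (b := δ)
      (by norm_num) (by norm_num) hδ
    refine h.congr_fun (fun x hx => ?_) measurableSet_Ioi
    have : x ≠ 0 := ne_of_gt hx
    simp
    field_simp

/-- integrand -/
def lcF (z0 : ℂ) (a b : LCE) (l : ℂ) (p : LCE) : ℂ :=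
  Complex.exp (Complex.I * (z0 * (‖p‖ : ℂ) + ((inner ℝ a p : ℝ) : ℂ)
    + l * ((inner ℝ b p : ℝ) : ℂ))) / (‖p‖ : ℂ)

lemma lcF_meas (z0 : ℂ) (a b : LCE) (l : ℂ) : Measurable (lcF z0 a b l) := by
  unfold lcF
  apply Measurable.div
  · apply Continuous.measurable
    fun_prop
  · apply Continuous.measurable
    fun_prop

lemma lc_exp_bound (z0 : ℂ) (a b : LCE) (l : ℂ) (p : LCE) {δ : ℝ}
    (h : |l.im| * ‖b‖ ≤ z0.im - δ) :
    ‖Complex.exp (Complex.I * (z0 * (‖p‖ : ℂ) + ((inner ℝ a p : ℝ) : ℂ)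
      + l * ((inner ℝ b p : ℝ) : ℂ)))‖ ≤ Real.exp (-δ * ‖p‖) := by
  rw [Complex.norm_exp]
  apply Real.exp_le_exp.2
  simp
  have h1 : |l.im * inner ℝ b p| ≤ |l.im| * ‖b‖ * ‖p‖ := by
    rw [abs_mul, mul_assoc]
    gcongr
    exact abs_real_inner_le_norm b p
  have h2 := mul_le_mul_of_nonneg_right h (norm_nonneg p)
  have h3 := neg_le_of_abs_le h1
  linarith

lemma lcF_bound (z0 : ℂ) (a b : LCE) (l : ℂ) (p : LCE) {δ : ℝ}
    (h : |l.im| * ‖b‖ ≤ z0.im - δ) :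
    ‖lcF z0 a b l p‖ ≤ Real.exp (-δ * ‖p‖) / ‖p‖ := by
  unfold lcF
  rw [norm_div, Complex.norm_real, norm_norm]
  gcongr
  exact lc_exp_bound z0 a b l p h

lemma lcF_int (z0 : ℂ) (a b : LCE) (l : ℂ) {δ : ℝ} (hδ : 0 < δ)
    (h : |l.im| * ‖b‖ ≤ z0.im - δ) : Integrable (lcF z0 a b l) :=
  (lc_int2 hδ).mono' (lcF_meas z0 a b l).aestronglyMeasurable
    (.of_forall fun p => lcF_bound z0 a b l p h)

lemma lcF_diff (z0 : ℂ) (a b : LCE) (l : ℂ) {δ : ℝ} (hδ : 0 < δ)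
    (h : |l.im| * ‖b‖ < z0.im - δ) :
    DifferentiableAt ℂ (fun l => ∫ p, lcF z0 a b l p) l := by
  have hopen : IsOpen {l : ℂ | |l.im| * ‖b‖ < z0.im - δ} :=
    isOpen_lt (by fun_prop) continuous_const
  refine (hasDerivAt_integral_of_dominated_loc_of_deriv_le (hopen.mem_nhds h)
    (F' := fun l p => Complex.I * ((inner ℝ b p : ℝ) : ℂ) * lcF z0 a b l p)
    (bound := fun p => ‖b‖ * Real.exp (-δ * ‖p‖))
    (.of_forall fun l => (lcF_meas z0 a b l).aestronglyMeasurable)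
    (lcF_int z0 a b l hδ h.le) ?_ ?_ ((lc_int1 hδ).const_mul _) ?_).2.differentiableAt
  · refine Measurable.aestronglyMeasurable (Measurable.mul ?_ (lcF_meas z0 a b l))
    apply Continuous.measurable
    fun_prop
  · refine .of_forall fun p l hl => ?_
    have h1 := lcF_bound z0 a b l p (le_of_lt hl)
    have h2 := abs_real_inner_le_norm b p
    rw [norm_mul, norm_mul, Complex.norm_I, one_mul, Complex.norm_real, Real.norm_eq_abs]
    rcases eq_or_ne p 0 with rfl | hp
    · simp; 
    · have hp' : 0 < ‖p‖ := norm_pos_iff.2 hp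
      calc _ ≤ (‖b‖ * ‖p‖) * (Real.exp (-δ * ‖p‖) / ‖p‖) := by gcongr
        _ = _ := by field_simp
  · refine .of_forall fun p l hl => ?_
    unfold lcF
    have : HasDerivAt (fun l : ℂ => Complex.I * (z0 * (‖p‖ : ℂ) + ((inner ℝ a p : ℝ) : ℂ)
      + l * ((inner ℝ b p : ℝ) : ℂ))) (Complex.I * (1 * ((inner ℝ b p : ℝ) : ℂ))) l :=
      (((hasDerivAt_id l).mul_const _).const_add _).const_mul _
    convert! (this.cexp.div_const (‖p‖ : ℂ)) using 1
    ring

lemma lc_inner (z0 : ℂ) (hz : 0 < z0.im) (x : ℝ) :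
    ∫ q : ℂ, Complex.exp (Complex.I * (z0 * (√(x ^ 2 + ‖q‖ ^ 2) : ℝ))) / (√(x ^ 2 + ‖q‖ ^ 2) : ℝ)
      = 2 * Real.pi * Complex.I / z0 * Complex.exp (Complex.I * (z0 * (|x| : ℝ))) := by
  have hz0 : z0 ≠ 0 := by rintro rfl; simp at hz
  have := integral_fun_norm_addHaar (volume : Measure ℂ)
    (fun r : ℝ => Complex.exp (Complex.I * (z0 * (√(x ^ 2 + r ^ 2) : ℝ))) / (√(x ^ 2 + r ^ 2) : ℝ))
  rw [this]
  have key : ∫ y in Set.Ioi (0:ℝ), y ^ (Module.finrank ℝ ℂ - 1) •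
      (Complex.exp (Complex.I * (z0 * (√(x ^ 2 + y ^ 2) : ℝ))) / (√(x ^ 2 + y ^ 2) : ℝ))
      = 0 - Complex.exp (Complex.I * (z0 * (√(x ^ 2 + 0 ^ 2) : ℝ))) / (Complex.I * z0) := by
    apply integral_Ioi_of_hasDerivAt_of_tendsto
      (f := fun y : ℝ => Complex.exp (Complex.I * (z0 * (√(x ^ 2 + y ^ 2) : ℝ))) / (Complex.I * z0))
    · apply Continuous.continuousWithinAt
      fun_prop
    · intro y hy
      have hpos : 0 < x ^ 2 + y ^ 2 := by
        have : 0 < y := hy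
        positivity
      have h1 : HasDerivAt (fun y : ℝ => √(x ^ 2 + y ^ 2)) (2 * y / (2 * √(x ^ 2 + y ^ 2))) y := by
        have h2 : HasDerivAt (fun y : ℝ => x ^ 2 + y ^ 2) (2 * y) y := by
          simpa using (hasDerivAt_pow 2 y).const_add (x ^ 2)
        exact h2.sqrt hpos.ne'
      have h3 := (((h1.ofReal_comp).const_mul z0).const_mul Complex.I).cexp.div_const
        (Complex.I * z0)
      convert! h3 using 1
      have : ((√(x ^ 2 + y ^ 2) : ℝ) : ℂ) ≠ 0 := by
        exact_mod_cast (Real.sqrt_pos.2 hpos).ne'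
      simp
      field_simp
    · refine Integrable.mono' (exp_neg_integrableOn_Ioi 0 hz) ?_ ?_
      · apply Measurable.aestronglyMeasurable
        fun_prop
      · refine (ae_restrict_mem measurableSet_Ioi).mono fun y hy => ?_
        have hy : 0 < y := hy
        have hle : y ≤ √(x ^ 2 + y ^ 2) := Real.le_sqrt_of_sq_le (by nlinarith [sq_nonneg x])
        have hp := hy.trans_le hle
        simp [Complex.norm_exp, abs_of_pos hy, abs_of_pos hp]
        rw [← mul_div_assoc, div_le_iff₀ hp, mul_comm]
        gcongr
    · rw [tendsto_zero_iff_norm_tendsto_zero]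
      have h0 : Filter.Tendsto (fun y : ℝ => Real.exp (-z0.im * y) / ‖Complex.I * z0‖)
          Filter.atTop (nhds 0) := by
        rw [← zero_div ‖Complex.I * z0‖]
        apply Filter.Tendsto.div_const
        apply Real.tendsto_exp_atBot.comp
        exact Filter.tendsto_id.const_mul_atTop_of_neg (by linarith)
      refine squeeze_zero (fun _ => norm_nonneg _) (fun y => ?_) h0
      have hle : y ≤ √(x ^ 2 + y ^ 2) := Real.le_sqrt_of_sq_le (by nlinarith [sq_nonneg x])
      rw [norm_div]
      gcongr
      simp [Complex.norm_exp]
      gcongr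
  rw [key]
  simp [Measure.real, Complex.volume_ball, Real.sqrt_sq_eq_abs]
  field_simp
  simp [Complex.I_sq]

lemma lc_outer (z0 : ℂ) (hz : 0 < z0.im) (k : ℝ) :
    (∫ x : ℝ, Complex.exp (Complex.I * (k * x)) * Complex.exp (Complex.I * (z0 * (|x| : ℝ))))
      * ((k : ℂ) ^ 2 - z0 ^ 2) = -2 * Complex.I * z0 := by
  set f : ℝ → ℂ := fun x =>
    Complex.exp (Complex.I * (k * x)) * Complex.exp (Complex.I * (z0 * (|x| : ℝ))) with hf
  have h1 : Set.EqOn (fun x : ℝ => Complex.exp (Complex.I * (k + z0) * x)) f (Set.Ioi 0) := by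
    intro x hx
    simp only [hf, ← Complex.exp_add, abs_of_pos (show 0 < x from hx)]
    ring_nf
  have h2 : Set.EqOn (fun x : ℝ => Complex.exp (Complex.I * (k - z0) * x)) f (Set.Iic 0) := by
    intro x hx
    simp only [hf, ← Complex.exp_add, abs_of_nonpos (show x ≤ 0 from hx)]
    push_cast
    ring_nf
  have r1 : (Complex.I * (k + z0)).re < 0 := by simpa using hz
  have r2 : 0 < (Complex.I * (k - z0)).re := by simpa using hz
  have n1 : (k:ℂ) + z0 ≠ 0 := by rintro h; rw [h] at r1; simp at r1
  have n2 : (k:ℂ) - z0 ≠ 0 := by rintro h; rw [h] at r2; simp at r2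
  have i1 := (integrableOn_exp_mul_complex_Ioi r1 0).congr_fun h1 measurableSet_Ioi
  have i2 := (integrableOn_exp_mul_complex_Iic r2 0).congr_fun h2 measurableSet_Iic
  have hs := intervalIntegral.integral_Iic_add_Ioi i2 i1
  rw [← hs, ← setIntegral_congr_fun measurableSet_Ioi h1,
    ← setIntegral_congr_fun measurableSet_Iic h2, integral_exp_mul_complex_Ioi r1,
    integral_exp_mul_complex_Iic r2]
  simp
  field_simp
  ring_nf
  simp [Complex.I_sq]
  ring

lemma lc_real (z0 : ℂ) (hz : 0 < z0.im) (k : LCE) :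
    (∫ p, lcF z0 k 0 0 p) * ((‖k‖ : ℂ) ^ 2 - z0 ^ 2) = 4 * Real.pi := by
  have hz0 : z0 ≠ 0 := by rintro rfl; simp at hz
  have hdim : Module.finrank ℝ LCW = 3 := by
    rw [(WithLp.linearEquiv 2 ℝ (ℝ × ℂ)).finrank_eq]
    simp
  obtain ⟨L, hL⟩ : ∃ L : LCE ≃ₗᵢ[ℝ] LCW, L k = WithLp.toLp 2 (‖k‖, 0) := by
    let L0 : LCE ≃ₗᵢ[ℝ] LCW := (EuclideanSpace.basisFun (Fin 3) ℝ).equiv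
      (stdOrthonormalBasis ℝ LCW) (finCongr hdim.symm)
    have hn : ‖L0 k‖ = ‖(WithLp.toLp 2 (‖k‖, 0) : LCW)‖ := by
      rw [L0.norm_map, WithLp.prod_norm_eq_of_L2]
      simp
    exact ⟨L0.trans (Submodule.reflection (Submodule.span ℝ {L0 k - WithLp.toLp 2 (‖k‖, 0)})ᗮ),
      Submodule.reflection_sub hn⟩
  set g : ℝ × ℂ → ℂ := fun w => Complex.exp (Complex.I * (‖k‖ * w.1)) *
    (Complex.exp (Complex.I * (z0 * (√(w.1 ^ 2 + ‖w.2‖ ^ 2) : ℝ))) / (√(w.1 ^ 2 + ‖w.2‖ ^ 2) : ℝ))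
    with hg
  have hfg : ∀ p, lcF z0 k 0 0 p = g (WithLp.ofLp (L p)) := by
    intro p
    have e1 : ‖p‖ = √((L p).fst ^ 2 + ‖(L p).snd‖ ^ 2) := by
      rw [← L.norm_map, WithLp.prod_norm_eq_of_L2]
      simp
    have e2 : inner ℝ k p = ‖k‖ * (L p).fst := by
      rw [← L.inner_map_map, hL, WithLp.prod_inner_apply]
      simp [mul_comm]
    simp only [lcF, hg]
    rw [e2, e1, ← mul_div_assoc, ← Complex.exp_add]
    simp [mul_add, add_comm]
  have mp : MeasurePreserving (fun p => WithLp.ofLp (L p) : LCE → ℝ × ℂ) volume volume :=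
    (WithLp.volume_preserving_ofLp ℝ ℂ).comp L.measurePreserving
  have me : MeasurableEmbedding (fun p => WithLp.ofLp (L p) : LCE → ℝ × ℂ) :=
    (MeasurableEquiv.toLp 2 (ℝ × ℂ)).symm.measurableEmbedding.comp
      L.toHomeomorph.measurableEmbedding
  have hint : Integrable (lcF z0 k 0 0) := lcF_int z0 k 0 0 (δ := z0.im) hz (by simp)
  have hfg' : lcF z0 k 0 0 = g ∘ (fun p => WithLp.ofLp (L p) : LCE → ℝ × ℂ) := funext hfg
  have hgint : Integrable g := by
    rw [hfg'] at hint
    exact (mp.integrable_comp_emb me).1 hint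
  have hI : ∫ p, lcF z0 k 0 0 p = ∫ w, g w := by
    rw [hfg']
    exact mp.integral_comp me g
  rw [hI]
  rw [Measure.volume_eq_prod] at hgint ⊢
  rw [integral_prod g hgint]
  simp only [hg, integral_const_mul, lc_inner z0 hz]
  have ho := lc_outer z0 hz ‖k‖
  simp_rw [mul_left_comm (Complex.exp (Complex.I * (_ * _)))]
  rw [integral_const_mul, mul_assoc, ho]
  field_simp
  ring_nf
  simp [Complex.I_sq]

lemma lc_main (z0 : ℂ) (a b : LCE) (h : ‖b‖ < z0.im) :
    Integrable (lcF z0 a b Complex.I) ∧ (∫ p, lcF z0 a b Complex.I p) *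
      ((‖a‖ : ℂ) ^ 2 + 2 * Complex.I * (inner ℝ a b : ℝ) - (‖b‖ : ℂ) ^ 2 - z0 ^ 2)
      = 4 * Real.pi := by
  obtain ⟨δ, hδ, hδ'⟩ : ∃ δ > 0, ‖b‖ < z0.im - δ := 
    ⟨(z0.im - ‖b‖) / 2, by linarith, by linarith⟩
  have hz : 0 < z0.im := (norm_nonneg b).trans_lt h
  refine ⟨lcF_int z0 a b Complex.I hδ (by simpa using hδ'.le), ?_⟩
  set U : Set ℂ := {l : ℂ | |l.im| * ‖b‖ < z0.im - δ} with hU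
  have hopen : IsOpen U := isOpen_lt (by fun_prop) continuous_const
  have hconv : Convex ℝ U := by
    have : ConvexOn ℝ Set.univ (fun l : ℂ => |l.im| * ‖b‖) := by
      have h1 : ConvexOn ℝ Set.univ (fun x : ℝ => ‖x‖) := convexOn_univ_norm
      have h2 := (h1.comp_linearMap Complex.imLm).smul (norm_nonneg b)
      simpa [Function.comp_def, mul_comm] using h2
    simpa using this.convex_lt (z0.im - δ)
  have hd : ∀ l ∈ U, DifferentiableAt ℂ (fun l => ∫ p, lcF z0 a b l p) l :=
    fun l hl => lcF_diff z0 a b l hδ hl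
  have hD : DifferentiableOn ℂ (fun l => (∫ p, lcF z0 a b l p) *
      ((‖a‖ : ℂ) ^ 2 + 2 * l * (inner ℝ a b : ℝ) + l ^ 2 * (‖b‖ : ℂ) ^ 2 - z0 ^ 2)) U := by
    intro l hl
    exact ((hd l hl).mul (by fun_prop)).differentiableWithinAt
  have h0 : (0 : ℂ) ∈ U := by
    simp only [hU, Set.mem_ofPred_eq, Complex.zero_im, abs_zero, zero_mul]
    exact (norm_nonneg b).trans_lt hδ'
  have hE := (hD.analyticOnNhd hopen).eqOn_of_preconnected_of_frequently_eq
    (g := fun _ => 4 * (Real.pi : ℂ)) analyticOnNhd_const hconv.isPreconnected h0 ?_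
  · have := hE (x := Complex.I) (by simpa [hU] using hδ')
    simp only [Complex.I_sq] at this
    rw [← this]
    ring
  · have hreal : ∀ t : ℝ, (∫ p, lcF z0 a b t p) *
      ((‖a‖ : ℂ) ^ 2 + 2 * t * (inner ℝ a b : ℝ) + t ^ 2 * (‖b‖ : ℂ) ^ 2 - z0 ^ 2)
        = 4 * Real.pi := by
      intro t
      rw [← lc_real z0 hz (a + t • b)]
      congr 1
      · congr 1
        ext p
        simp [lcF, inner_add_left, inner_smul_left, add_assoc]
      · congr 1
        have := norm_add_sq_real a (t • b)
        rw [norm_smul, inner_smul_right, mul_pow, Real.norm_eq_abs, sq_abs] at this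
        have h' := congrArg (fun x : ℝ => (x : ℂ)) this
        push_cast at h'
        rw [h']
        ring
    have ht : Filter.Tendsto (fun t : ℝ => (t : ℂ)) (nhdsWithin 0 {0}ᶜ) (nhdsWithin 0 {0}ᶜ) := by
      refine tendsto_nhdsWithin_iff.2 ⟨?_, ?_⟩
      · have := Complex.continuous_ofReal.tendsto 0
        rw [Complex.ofReal_zero] at this
        exact this.mono_left nhdsWithin_le_nhds
      · filter_upwards [self_mem_nhdsWithin] with t ht
        simpa using ht
    exact ht.frequently (Filter.Frequently.of_forall hreal)

/-- If `Z = (z⁰,z¹,z²,z³) ∈ ℂ⁴` satisfies `Im z⁰ > √((Im z¹)² + (Im z²)² + (Im z³)²)`, then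
`(1/4π) ∫_{ℝ³} exp(i(z⁰|p⃗| + z¹p¹ + z²p² + z³p³)) d³p/|p⃗|` converges absolutely and equals
`1/((z¹)² + (z²)² + (z³)² − (z⁰)²)`. -/
theorem stmt14 (z : Fin 4 → ℂ)
    (hz : Real.sqrt ((z 1).im ^ 2 + (z 2).im ^ 2 + (z 3).im ^ 2) < (z 0).im) :
    Integrable (fun p : EuclideanSpace ℝ (Fin 3) =>
      Complex.exp (Complex.I *
        (z 0 * (‖p‖ : ℂ) + z 1 * (p 0 : ℂ) + z 2 * (p 1 : ℂ) + z 3 * (p 2 : ℂ))) /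
        (‖p‖ : ℂ)) ∧
    (1 / (4 * (Real.pi : ℂ))) *
      ∫ p : EuclideanSpace ℝ (Fin 3),
        Complex.exp (Complex.I *
          (z 0 * (‖p‖ : ℂ) + z 1 * (p 0 : ℂ) + z 2 * (p 1 : ℂ) + z 3 * (p 2 : ℂ))) /
          (‖p‖ : ℂ)
      = 1 / ((z 1) ^ 2 + (z 2) ^ 2 + (z 3) ^ 2 - (z 0) ^ 2) := by
  set a : LCE := !₂[(z 1).re, (z 2).re, (z 3).re] with ha
  set b : LCE := !₂[(z 1).im, (z 2).im, (z 3).im] with hb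
  have hbn : ‖b‖ < (z 0).im := by
    rw [EuclideanSpace.norm_eq]
    simpa [hb, Fin.sum_univ_three] using hz
  have hF : (fun p : EuclideanSpace ℝ (Fin 3) =>
      Complex.exp (Complex.I *
        (z 0 * (‖p‖ : ℂ) + z 1 * (p 0 : ℂ) + z 2 * (p 1 : ℂ) + z 3 * (p 2 : ℂ))) /
        (‖p‖ : ℂ)) = lcF (z 0) a b Complex.I := by
    ext p
    unfold lcF
    congr 3
    conv_lhs => rw [← Complex.re_add_im (z 1), ← Complex.re_add_im (z 2), ← Complex.re_add_im (z 3)]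
    simp [-Complex.re_add_im, ha, hb, PiLp.inner_apply, Fin.sum_univ_three]
    ring
  obtain ⟨h1, h2⟩ := lc_main (z 0) a b hbn
  rw [hF]
  refine ⟨h1, ?_⟩
  have hden : ((‖a‖ : ℂ) ^ 2 + 2 * Complex.I * (inner ℝ a b : ℝ) - (‖b‖ : ℂ) ^ 2 - (z 0) ^ 2)
      = (z 1) ^ 2 + (z 2) ^ 2 + (z 3) ^ 2 - (z 0) ^ 2 := by
    conv_rhs => rw [← Complex.re_add_im (z 1), ← Complex.re_add_im (z 2), ← Complex.re_add_im (z 3)]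
    have e1 : (‖a‖ : ℂ) ^ 2 = (z 1).re ^ 2 + (z 2).re ^ 2 + (z 3).re ^ 2 := by
      rw [← Complex.ofReal_pow, EuclideanSpace.real_norm_sq_eq]
      simp [ha, Fin.sum_univ_three]
    have e2 : (‖b‖ : ℂ) ^ 2 = (z 1).im ^ 2 + (z 2).im ^ 2 + (z 3).im ^ 2 := by
      rw [← Complex.ofReal_pow, EuclideanSpace.real_norm_sq_eq]
      simp [hb, Fin.sum_univ_three]
    rw [e1, e2]
    simp [-Complex.re_add_im, ha, hb, PiLp.inner_apply, Fin.sum_univ_three]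
    linear_combination (-((z 1).im : ℂ) ^ 2 - ((z 2).im : ℂ) ^ 2 - ((z 3).im : ℂ) ^ 2) * Complex.I_sq
  rw [hden] at h2
  have hpi : (4 * (Real.pi : ℂ)) ≠ 0 := by
    simp [Real.pi_ne_zero]
  have hne : (z 1) ^ 2 + (z 2) ^ 2 + (z 3) ^ 2 - (z 0) ^ 2 ≠ 0 := by
    intro h
    rw [h, mul_zero] at h2
    exact hpi h2.symm
  rw [one_div, one_div, ← h2, mul_inv]
  have hint : (∫ p, lcF (z 0) a b Complex.I p) ≠ 0 := by
    intro h
    rw [h, zero_mul] at h2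
    exact hpi h2.symm
  change _ * (∫ p, lcF (z 0) a b Complex.I p) = _
  field_simp
end
end

section
/- Let φ₁, φ₂ ∈ ℂ[z⁰,z¹,z²,z³] be harmonic polynomials (□φᵢ = 0), let R₁, R₂ > 0, and let W ∈ ℂ⁴ be such that Rᵢ²·1 − Z(W)Z(W)* is positive definite for i = 1,2. Then (1/(2π²)²) ∫_{S³_{R₁}} ∫_{S³_{R₂}} (d̃eg φ₁)(X₁) · (d̃eg φ₂)(X₂) / ( N(W−X₁) · N(W−X₂) ) dS(X₂) dS(X₁) / (R₁R₂) = φ₁(W)·φ₂(W), where N(W−X) = Σᵢ(wⁱ−xⁱ)² ∈ ℂ. -/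
noncomputable section

open MeasureTheory MvPolynomial Matrix
open scoped ComplexOrder

/-- Euclidean 4-space. -/
abbrev E4 := EuclideanSpace ℝ (Fin 4)

/-- `N(V) = Σᵢ (vⁱ)²` for `V ∈ ℂ⁴`. -/
def NC (V : Fin 4 → ℂ) : ℂ := ∑ i, V i ^ 2

/-- The Laplacian `□f = Σᵢ ∂²f/∂(zⁱ)²` of a polynomial. -/
def lapP (f : MvPolynomial (Fin 4) ℂ) : MvPolynomial (Fin 4) ℂ :=
  ∑ i, pderiv i (pderiv i f)

/-- `d̃eg f = f + Σᵢ zⁱ ∂f/∂zⁱ` as a polynomial. -/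
def tdegP (f : MvPolynomial (Fin 4) ℂ) : MvPolynomial (Fin 4) ℂ :=
  f + ∑ i, X i * pderiv i f

/-- Evaluation of a polynomial in `z⁰,…,z³` at a real point `X ∈ ℝ⁴ ⊂ ℂ⁴`. -/
def evalR (f : MvPolynomial (Fin 4) ℂ) (x : E4) : ℂ :=
  eval (fun i => ((x i : ℝ) : ℂ)) f

/-- Integral of `g` over the sphere `S³_R ⊂ ℝ⁴` of radius `R` centered at the origin with
respect to the (non-normalized) Euclidean surface measure `dS`, of total mass `2π²R³`:
it is `R³` times the integral over the unit sphere with its Euclidean surface measure. -/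
def sphereInt (R : ℝ) (g : E4 → ℂ) : ℂ :=
  (R ^ 3 : ℝ) • ∫ ω : Metric.sphere (0 : E4) 1,
    g (R • (ω : E4)) ∂(volume : Measure E4).toSphere

def radI (k : ℕ) : ℝ := ∫ r in Set.Ioi (0:ℝ), r ^ k * Real.exp (-r ^ 2)

def gaussM (k : ℕ) : ℝ := ∫ x : ℝ, x ^ k * Real.exp (-x ^ 2)

lemma radI_eq (k : ℕ) : radI k = 1 / 2 * Real.Gamma (((k:ℝ) + 1) / 2) := by
  have h := integral_rpow_mul_exp_neg_rpow (p := 2) (q := k) (by norm_num)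
    (by have : (0:ℝ) ≤ k := k.cast_nonneg
        linarith)
  rw [← h, radI]
  apply setIntegral_congr_fun measurableSet_Ioi
  intro x hx
  simp

lemma radI_pos (k : ℕ) : 0 < radI k := by
  rw [radI_eq]
  have := Real.Gamma_pos_of_pos (s := ((k:ℝ) + 1) / 2) (by positivity)
  positivity

lemma radI_add_two (k : ℕ) : radI (k + 2) = ((k:ℝ) + 1) / 2 * radI k := by
  rw [radI_eq, radI_eq]
  have : (((k + 2 : ℕ) : ℝ) + 1) / 2 = ((k:ℝ) + 1) / 2 + 1 := by push_cast; ring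
  rw [this, Real.Gamma_add_one (by positivity)]
  ring

lemma gaussM_odd (k : ℕ) (hk : Odd k) : gaussM k = 0 := by
  have h : gaussM k = - gaussM k := by
    conv_lhs => rw [gaussM, ← integral_neg_eq_self]
    rw [gaussM, ← integral_neg]
    congr 1
    ext x
    rw [hk.neg_pow]
    simp
  linarith

lemma gaussM_even (k : ℕ) (hk : Even k) : gaussM k = 2 * radI k := by
  rw [gaussM, radI, ← integral_comp_abs (f := fun r => r ^ k * Real.exp (-r ^ 2))]
  congr 1
  ext x
  rw [hk.pow_abs]
  simp

lemma gaussM_add_two (k : ℕ) : gaussM (k + 2) = ((k:ℝ) + 1) / 2 * gaussM k := by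
  rcases Nat.even_or_odd k with h | h
  · rw [gaussM_even _ (h.add (by decide)), gaussM_even _ h, radI_add_two]; ring
  · rw [gaussM_odd _ (h.add_even (by decide)), gaussM_odd _ h]; ring

lemma gaussM_zero : gaussM 0 = Real.sqrt Real.pi := by
  have := integral_gaussian 1
  simpa [gaussM] using this

lemma radI_three : radI 3 = 1 / 2 := by
  rw [radI_eq]
  have : (((3:ℕ):ℝ) + 1) / 2 = 2 := by norm_num
  rw [this, Real.Gamma_two]; norm_num

/-- real monomial integral over the sphere -/
def sphM (a : Fin 4 → ℕ) : ℝ :=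
  ∫ ω : Metric.sphere (0 : E4) 1, ∏ i, (ω : E4) i ^ a i ∂(volume : Measure E4).toSphere

lemma sphM_mul_radI (a : Fin 4 → ℕ) : sphM a * radI ((∑ i, a i) + 3) = ∏ i, gaussM (a i) := by
  symm
  have h1 : ∏ i, gaussM (a i) = ∫ x : E4, ∏ i, (x i ^ a i * Real.exp (-x i ^ 2)) := by
    simp only [gaussM]
    rw [← integral_fintype_prod_volume_eq_prod]
    rw [← (EuclideanSpace.volume_preserving_symm_measurableEquiv_toLp (Fin 4)).integral_comp
      (MeasurableEquiv.measurableEmbedding _)]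
    rfl
  have h2 : ∀ x : E4, ∏ i, (x i ^ a i * Real.exp (-x i ^ 2))
      = (∏ i, x i ^ a i) * Real.exp (-‖x‖ ^ 2) := by
    intro x
    rw [Finset.prod_mul_distrib, ← Real.exp_sum, EuclideanSpace.norm_sq_eq]
    simp
  rw [h1]
  simp only [h2]
  have hdim : Module.finrank ℝ E4 - 1 = 3 := by simp
  calc _ = ∫ x : ({(0)}ᶜ : Set E4), (∏ i, x.1 i ^ a i) * Real.exp (-‖x.1‖ ^ 2)
            ∂((volume : Measure E4).comap (↑)) := by
        rw [integral_subtype_comap (measurableSet_singleton _).compl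
          fun x : E4 ↦ (∏ i, x i ^ a i) * Real.exp (-‖x‖ ^ 2), restrict_compl_singleton]
    _ = ∫ y : Metric.sphere (0 : E4) 1 × Set.Ioi (0:ℝ),
          (∏ i, (y.1 : E4) i ^ a i) * ((y.2 : ℝ) ^ (∑ i, a i) * Real.exp (-(y.2 : ℝ) ^ 2))
          ∂(volume : Measure E4).toSphere.prod (.volumeIoiPow (Module.finrank ℝ E4 - 1)) := by
        rw [← (volume : Measure E4).measurePreserving_homeomorphUnitSphereProd.integral_comp
          (Homeomorph.measurableEmbedding _)]
        congr 1
        ext x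
        have hx : ‖x.1‖ ≠ 0 := norm_ne_zero_iff.2 x.2
        simp only [homeomorphUnitSphereProd_apply_snd_coe, homeomorphUnitSphereProd_apply_fst_coe]
        rw [← mul_assoc, ← Finset.prod_pow_eq_pow_sum, ← Finset.prod_mul_distrib]
        congr 1
        apply Finset.prod_congr rfl
        intro i _
        rw [← mul_pow]
        congr 1
        simp
        field_simp
    _ = sphM a * ∫ x : Set.Ioi (0 : ℝ), ((x : ℝ) ^ (∑ i, a i) * Real.exp (-(x : ℝ) ^ 2))
          ∂.volumeIoiPow (Module.finrank ℝ E4 - 1) := by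
        rw [integral_prod_mul (μ := (volume : Measure E4).toSphere)
          (f := fun ω : Metric.sphere (0 : E4) 1 => ∏ i, (ω : E4) i ^ a i)
          (g := fun x : Set.Ioi (0:ℝ) => ((x : ℝ) ^ (∑ i, a i) * Real.exp (-(x : ℝ) ^ 2)))]
        rfl
    _ = _ := by
        congr 1
        rw [hdim]
        simp only [Measure.volumeIoiPow, ENNReal.ofReal]
        rw [integral_withDensity_eq_integral_smul,
          integral_subtype_comap measurableSet_Ioi fun x : ℝ ↦ Real.toNNReal (x ^ 3) •
            ((x : ℝ) ^ (∑ i, a i) * Real.exp (-(x : ℝ) ^ 2)), radI]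
        · apply setIntegral_congr_fun measurableSet_Ioi
          intro x hx
          simp only
          rw [NNReal.smul_def, Real.coe_toNNReal _ (pow_nonneg (le_of_lt hx) _), smul_eq_mul]
          ring
        · exact (measurable_subtype_coe.pow_const _).real_toNNReal

lemma sphM_zero : sphM 0 = 2 * Real.pi ^ 2 := by
  have h := sphM_mul_radI 0
  simp [radI_three, gaussM_zero] at h
  have h4 : √Real.pi ^ 4 = Real.pi ^ 2 := by
    rw [show (4:ℕ) = 2 * 2 from rfl, pow_mul, Real.sq_sqrt Real.pi_pos.le]
  rw [h4] at h
  linarith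

lemma prod_update_gauss (a : Fin 4 → ℕ) (i : Fin 4) (k : ℕ) :
    ∏ j, gaussM (Function.update a i k j) =
      gaussM k * ∏ j ∈ Finset.univ.erase i, gaussM (a j) := by
  rw [← Finset.mul_prod_erase _ _ (Finset.mem_univ i)]
  congr 1
  · simp
  · apply Finset.prod_congr rfl
    intro j hj
    rw [Function.update_of_ne (Finset.ne_of_mem_erase hj)]

/-- key recursion -/
lemma sphM_rec (a : Fin 4 → ℕ) (i : Fin 4) (k : ℕ) (hk : a i = k) :
    (((∑ j, a j : ℕ) : ℝ) + 4) * sphM (Function.update a i (k + 2)) = ((k:ℝ) + 1) * sphM a := by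
  have h1 := sphM_mul_radI (Function.update a i (k + 2))
  have h2 := sphM_mul_radI a
  have h3 : ∑ j, Function.update a i (k+2) j = (∑ j, a j) + 2 := by
    rw [← Finset.add_sum_erase _ _ (Finset.mem_univ i), ← Finset.add_sum_erase _ a (Finset.mem_univ i)]
    rw [Finset.sum_congr rfl (g := a)]
    · simp [hk]; ring
    · intro j hj
      rw [Function.update_of_ne (Finset.ne_of_mem_erase hj)]
  have h4 := prod_update_gauss a i (a i)
  rw [Function.update_eq_self] at h4
  rw [prod_update_gauss, gaussM_add_two, h3] at h1
  rw [h4, hk] at h2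
  rw [show (∑ j, a j) + 2 + 3 = ((∑ j, a j) + 3) + 2 by ring, radI_add_two] at h1
  have h5 := radI_pos ((∑ j, a j) + 3)
  apply mul_right_cancel₀ h5.ne'
  push_cast at h1 ⊢
  linear_combination 2 * h1 - (k+1) * h2

lemma sphM_odd (a : Fin 4 → ℕ) (i : Fin 4) (hk : a i = 1) : sphM a = 0 := by
  have h := sphM_mul_radI a
  rw [Finset.prod_eq_zero (Finset.mem_univ i) (by rw [hk, gaussM_odd 1 (by decide)])] at h
  exact (mul_eq_zero.1 h).resolve_right (radI_pos _).ne'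

lemma continuous_evalR (p : MvPolynomial (Fin 4) ℂ) : Continuous (evalR p) := by
  have h1 : Continuous fun v : Fin 4 → ℂ => eval v p := MvPolynomial.continuous_eval p
  exact h1.comp (by fun_prop)

lemma integrable_cont {f : Metric.sphere (0 : E4) 1 → ℂ} (hf : Continuous f) :
    Integrable f (volume : Measure E4).toSphere :=
  hf.integrable_of_hasCompactSupport (HasCompactSupport.of_compactSpace f)

lemma integrable_evalR (p : MvPolynomial (Fin 4) ℂ) :
    Integrable (fun ω : Metric.sphere (0 : E4) 1 => evalR p (ω : E4))
      (volume : Measure E4).toSphere :=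
  integrable_cont ((continuous_evalR p).comp continuous_subtype_val)

/-- integral of a polynomial over the unit sphere -/
def Lam : MvPolynomial (Fin 4) ℂ →ₗ[ℂ] ℂ where
  toFun p := ∫ ω : Metric.sphere (0 : E4) 1, evalR p (ω : E4) ∂(volume : Measure E4).toSphere
  map_add' p q := by
    rw [← integral_add (integrable_evalR p) (integrable_evalR q)]
    simp [evalR]
  map_smul' c p := by
    simp only [RingHom.id_apply, smul_eq_mul]
    rw [← integral_const_mul]
    simp [evalR, smul_eval]

lemma Lam_apply (p : MvPolynomial (Fin 4) ℂ) : Lam p =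
    ∫ ω : Metric.sphere (0 : E4) 1, evalR p (ω : E4) ∂(volume : Measure E4).toSphere := rfl

lemma Lam_monomial (a : Fin 4 →₀ ℕ) (c : ℂ) : Lam (monomial a c) = c * (sphM a : ℂ) := by
  rw [Lam_apply, sphM, ← integral_complex_ofReal, ← integral_const_mul]
  congr 1
  ext ω
  rw [evalR, eval_monomial]
  simp [Finsupp.prod_fintype]

lemma Lam_pderiv_monomial (i : Fin 4) (a : Fin 4 →₀ ℕ) (c : ℂ) :
    Lam (pderiv i (monomial a c)) = ((a.degree : ℂ) + 3) * Lam (X i * monomial a c) := by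
  rw [pderiv_monomial, X, monomial_mul, Lam_monomial, Lam_monomial]
  rcases hk : a i with _ | k
  · rw [sphM_odd (⇑(Finsupp.single i 1 + a : Fin 4 →₀ ℕ)) i (by simp [hk])]
    simp
  · have h := sphM_rec (a - Finsupp.single i 1 : Fin 4 →₀ ℕ) i k (by simp [hk])
    have h1 : Function.update (⇑(a - Finsupp.single i 1 : Fin 4 →₀ ℕ)) i (k + 2)
        = ⇑(Finsupp.single i 1 + a : Fin 4 →₀ ℕ) := by
      ext j
      by_cases hj : j = i
      · subst hj; simp [hk]; omega
      · simp [Function.update_of_ne hj, Finsupp.single_apply, Ne.symm hj]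
    have h2 : ∑ j, (a - Finsupp.single i 1 : Fin 4 →₀ ℕ) j + 1 = a.degree := by
      rw [Finsupp.degree_eq_sum]
      rw [← Finset.add_sum_erase _ _ (Finset.mem_univ i),
        ← Finset.add_sum_erase _ a (Finset.mem_univ i)]
      rw [Finset.sum_congr rfl (g := a)]
      · simp [hk]; ring
      · intro j hj
        simp [Finsupp.single_apply, (Finset.ne_of_mem_erase hj).symm]
    rw [h1] at h
    have h' := congrArg (fun x : ℝ => (x : ℂ)) h
    rw [← h2]
    push_cast at h' ⊢
    linear_combination (-c) * h'

lemma Lam_pderiv {p : MvPolynomial (Fin 4) ℂ} {d : ℕ} (hp : p.IsHomogeneous d) (i : Fin 4) :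
    Lam (pderiv i p) = ((d : ℂ) + 3) * Lam (X i * p) := by
  rw [p.as_sum, map_sum, map_sum, Finset.mul_sum, map_sum, Finset.mul_sum]
  apply Finset.sum_congr rfl
  intro a ha
  have hd : a.degree = d := by
    by_contra h
    exact (mem_support_iff.1 ha) (hp.coeff_eq_zero h)
  rw [Lam_pderiv_monomial, hd]

/-- the polynomial `|x|²` -/
def r2 : MvPolynomial (Fin 4) ℂ := ∑ i, X i ^ 2

lemma evalR_r2 (ω : Metric.sphere (0 : E4) 1) : evalR r2 (ω : E4) = 1 := by
  have h : ‖(ω : E4)‖ = 1 := by simp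
  have h2 := EuclideanSpace.norm_sq_eq (ω : E4)
  rw [h] at h2
  simp only [Real.norm_eq_abs, sq_abs, one_pow] at h2
  simp only [evalR, r2, map_sum, map_pow, eval_X]
  have h3 := congrArg (fun x : ℝ => (x : ℂ)) h2
  push_cast at h3
  exact h3.symm

lemma Lam_r2 (p : MvPolynomial (Fin 4) ℂ) : Lam (r2 * p) = Lam p := by
  rw [Lam_apply, Lam_apply]
  congr 1
  ext ω
  have := evalR_r2 ω
  simp only [evalR] at this ⊢
  rw [map_mul, this, one_mul]

lemma hom_mul_pderiv {u v : MvPolynomial (Fin 4) ℂ} {a b : ℕ} (hu : u.IsHomogeneous a)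
    (hv : v.IsHomogeneous b) (i : Fin 4) : (u * pderiv i v).IsHomogeneous (a + b - 1) := by
  rcases b with _ | b
  · rw [← totalDegree_zero_iff_isHomogeneous, totalDegree_eq_zero_iff_eq_C] at hv
    rw [hv, pderiv_C, mul_zero]
    exact isHomogeneous_zero _ _ _
  · exact hu.mul hv.pderiv

lemma Lam_orth {u v : MvPolynomial (Fin 4) ℂ} {a b : ℕ} (hu : u.IsHomogeneous a)
    (hv : v.IsHomogeneous b) (hlu : lapP u = 0) (hlv : lapP v = 0) (hab : a ≠ b) :
    Lam (u * v) = 0 := by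
  have h1 : ∑ i, pderiv i (u * pderiv i v - v * pderiv i u) = 0 := by
    have : ∑ i, pderiv i (u * pderiv i v - v * pderiv i u) = u * lapP v - v * lapP u := by
      simp only [lapP, Finset.mul_sum, ← Finset.sum_sub_distrib]
      apply Finset.sum_congr rfl
      intro i _
      simp only [map_sub, Derivation.leibniz, smul_eq_mul]
      ring
    rw [this, hlu, hlv]; simp
  have h2 : ∑ i, (X i * (u * pderiv i v - v * pderiv i u)) = (b : MvPolynomial (Fin 4) ℂ) * (u * v) - a * (u * v) := by
    have e1 := hu.sum_X_mul_pderiv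
    have e2 := hv.sum_X_mul_pderiv
    rw [nsmul_eq_mul] at e1 e2
    have : ∑ i, (X i * (u * pderiv i v - v * pderiv i u)) =
        u * (∑ i, X i * pderiv i v) - v * (∑ i, X i * pderiv i u) := by
      simp only [Finset.mul_sum, ← Finset.sum_sub_distrib]
      apply Finset.sum_congr rfl
      intro i _
      ring
    rw [this, e1, e2]; ring
  have h3 : ∀ i, (u * pderiv i v - v * pderiv i u).IsHomogeneous (a + b - 1) := fun i =>
    (hom_mul_pderiv hu hv i).sub (by rw [add_comm a b]; exact hom_mul_pderiv hv hu i)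
  have h4 := congrArg Lam h1
  rw [map_sum, map_zero] at h4
  simp only [fun i => Lam_pderiv (h3 i) i] at h4
  rw [← Finset.mul_sum, ← map_sum, h2] at h4
  have h5 : (((a + b - 1 : ℕ) : ℂ) + 3) ≠ 0 := by exact_mod_cast Nat.succ_ne_zero (a + b - 1 + 2)
  have h6 := (mul_eq_zero.1 h4).resolve_left h5
  have h7 : (b : MvPolynomial (Fin 4) ℂ) * (u * v) - a * (u * v) = ((b:ℂ) - a) • (u * v) := by
    simp [MvPolynomial.smul_eq_C_mul, sub_mul]
  rw [h7, map_smul, smul_eq_mul] at h6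
  refine (mul_eq_zero.1 h6).resolve_left ?_
  rw [← ne_eq, sub_ne_zero]
  exact_mod_cast hab.symm

/-- the linear form `Σ wᵢ xᵢ` -/
def tW (W : Fin 4 → ℂ) : MvPolynomial (Fin 4) ℂ := ∑ i, C (W i) * X i

/-- directional derivative -/
def DW (W : Fin 4 → ℂ) (p : MvPolynomial (Fin 4) ℂ) : MvPolynomial (Fin 4) ℂ :=
  ∑ i, C (W i) * pderiv i p

/-- Gegenbauer (Chebyshev second kind) polynomials -/
def Cn (W : Fin 4 → ℂ) : ℕ → MvPolynomial (Fin 4) ℂ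
  | 0 => 1
  | 1 => 2 * tW W
  | (n + 2) => 2 * tW W * Cn W (n + 1) - C (NC W) * r2 * Cn W n

lemma tW_hom (W : Fin 4 → ℂ) : (tW W).IsHomogeneous 1 :=
  IsHomogeneous.sum _ _ _ fun i _ => by
    simpa using (isHomogeneous_C (Fin 4) (W i)).mul (isHomogeneous_X ℂ i)

lemma r2_hom : r2.IsHomogeneous 2 :=
  IsHomogeneous.sum _ _ _ fun i _ => isHomogeneous_X_pow i 2

lemma Cn_hom (W : Fin 4 → ℂ) : ∀ n, (Cn W n).IsHomogeneous n
  | 0 => isHomogeneous_one _ _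
  | 1 => by
    have := (tW_hom W).C_mul 2
    rwa [map_ofNat] at this
  | (n + 2) => by
    rw [Cn]
    have h1 := ((tW_hom W).C_mul 2).mul (Cn_hom W (n+1))
    have h2 := (r2_hom.C_mul (NC W)).mul (Cn_hom W n)
    rw [map_ofNat] at h1
    rw [show 1 + (n + 1) = n + 2 by ring] at h1
    rw [add_comm] at h2
    exact h1.sub h2

lemma DW_mul (W) (p q : MvPolynomial (Fin 4) ℂ) : DW W (p * q) = p * DW W q + q * DW W p := by
  simp only [DW, Finset.mul_sum, ← Finset.sum_add_distrib]
  apply Finset.sum_congr rfl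
  intro i _
  simp only [Derivation.leibniz, smul_eq_mul]
  ring

lemma DW_sub (W) (p q : MvPolynomial (Fin 4) ℂ) : DW W (p - q) = DW W p - DW W q := by
  simp only [DW, ← Finset.sum_sub_distrib, map_sub, mul_sub]

lemma DW_C (W) (c : ℂ) : DW W (C c) = 0 := by simp [DW]
lemma DW_one (W) : DW W 1 = 0 := by simp [DW]
lemma DW_two (W) : DW W 2 = 0 := by
  have := DW_C W 2
  rwa [map_ofNat] at this

lemma DW_tW (W) : DW W (tW W) = C (NC W) := by
  simp [DW, tW, NC, pderiv_X, Pi.single_apply, sq]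

lemma DW_r2 (W) : DW W r2 = 2 * tW W := by
  simp [DW, r2, tW, pderiv_X, Pi.single_apply, Finset.mul_sum]
  apply Finset.sum_congr rfl
  intro i _
  ring

lemma DW_Cn (W : Fin 4 → ℂ) : ∀ n : ℕ, DW W (Cn W (n+1)) =
    ((n : MvPolynomial (Fin 4) ℂ) + 2) * C (NC W) * Cn W n
  | 0 => by simp only [Cn, DW_mul, DW_tW, DW_two]; push_cast; ring
  | 1 => by
    simp only [Cn, DW_mul, DW_sub, DW_tW, DW_two, DW_C, DW_one, DW_r2]
    push_cast
    ring
  | (n + 2) => by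
    have h1 := DW_Cn W (n + 1)
    have h2 := DW_Cn W n
    rw [Cn]
    simp only [DW_mul, DW_sub, DW_tW, DW_two, DW_C, DW_r2, h1, h2]
    conv_rhs => rw [show n + 2 = n + 1 + 1 from rfl]
    rw [show Cn W (n + 1 + 1) = 2 * tW W * Cn W (n + 1) - C (NC W) * r2 * Cn W n from rfl]
    push_cast
    ring

lemma lapP_add (p q : MvPolynomial (Fin 4) ℂ) : lapP (p + q) = lapP p + lapP q := by
  simp [lapP, Finset.sum_add_distrib]

lemma lapP_sub (p q : MvPolynomial (Fin 4) ℂ) : lapP (p - q) = lapP p - lapP q := by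
  simp [lapP, Finset.sum_sub_distrib]

lemma lapP_C_mul (c : ℂ) (p : MvPolynomial (Fin 4) ℂ) : lapP (C c * p) = C c * lapP p := by
  simp [lapP, Finset.mul_sum]

lemma lapP_tW_mul (W) (p : MvPolynomial (Fin 4) ℂ) :
    lapP (tW W * p) = tW W * lapP p + 2 * DW W p := by
  have h : ∀ i, pderiv i (tW W) = C (W i) := fun i => by
    simp [tW, pderiv_X, Pi.single_apply]
  simp only [lapP, DW, Finset.mul_sum, ← Finset.sum_add_distrib]
  apply Finset.sum_congr rfl
  intro i _
  simp only [Derivation.leibniz, smul_eq_mul, map_add, h, pderiv_C]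
  ring

lemma lapP_r2_mul {p : MvPolynomial (Fin 4) ℂ} {d : ℕ} (hp : p.IsHomogeneous d) :
    lapP (r2 * p) = r2 * lapP p + (8 + 4 * (d : MvPolynomial (Fin 4) ℂ)) * p := by
  have h : ∀ i, pderiv i r2 = 2 * X i := fun i => by
    simp [r2, pderiv_X, Pi.single_apply]
  have h2 : ∀ i : Fin 4, pderiv i (2 : MvPolynomial (Fin 4) ℂ) = 0 := fun i => by
    have : (2 : MvPolynomial (Fin 4) ℂ) = C 2 := by rw [map_ofNat]
    rw [this, pderiv_C]
  have e := hp.sum_X_mul_pderiv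
  rw [nsmul_eq_mul] at e
  have : (8 + 4 * (d : MvPolynomial (Fin 4) ℂ)) * p = 8 * p + 4 * ∑ i, X i * pderiv i p := by
    rw [e]; ring
  rw [this]
  simp only [lapP, Fin.sum_univ_four, Derivation.leibniz, smul_eq_mul, map_add, h, h2, pderiv_X_self]
  ring

lemma lapP_Cn (W : Fin 4 → ℂ) : ∀ n : ℕ, lapP (Cn W n) = 0
  | 0 => by simp [Cn, lapP]
  | 1 => by
    have : Cn W 1 = C 2 * (tW W * 1) := by rw [map_ofNat, mul_one, Cn]
    rw [this, lapP_C_mul, lapP_tW_mul, DW_one]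
    simp [lapP]
  | (n + 2) => by
    have : Cn W (n + 2) = C 2 * (tW W * Cn W (n + 1)) - C (NC W) * (r2 * Cn W n) := by
      rw [Cn, map_ofNat]; ring
    rw [this, lapP_sub, lapP_C_mul, lapP_C_mul, lapP_tW_mul, lapP_r2_mul (Cn_hom W n),
      lapP_Cn W n, lapP_Cn W (n+1), DW_Cn, map_ofNat]
    ring

lemma lapP_DW (W) {p : MvPolynomial (Fin 4) ℂ} (hp : lapP p = 0) : lapP (DW W p) = 0 := by
  have : lapP (DW W p) = DW W (lapP p) := by
    have hc : ∀ (i j : Fin 4), ∀ q : MvPolynomial (Fin 4) ℂ,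
        pderiv i (pderiv j q) = pderiv j (pderiv i q) := fun i j q => by
      have : ⁅(pderiv i : Derivation ℂ (MvPolynomial (Fin 4) ℂ) (MvPolynomial (Fin 4) ℂ)),
          (pderiv j : Derivation ℂ (MvPolynomial (Fin 4) ℂ) (MvPolynomial (Fin 4) ℂ))⁆ = 0 := by
        apply MvPolynomial.derivation_ext
        intro k
        simp [Derivation.commutator_apply, pderiv_X, Pi.single_apply, apply_ite]
      have h2 := congrArg (fun D => D q) this
      simpa [Derivation.commutator_apply, sub_eq_zero] using h2
    simp only [lapP, DW, map_sum, pderiv_C_mul, Finset.mul_sum]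
    rw [Finset.sum_comm]
    apply Finset.sum_congr rfl
    intro i _
    apply Finset.sum_congr rfl
    intro j _
    rw [hc i j (pderiv j p), hc i j p]
  rw [this, hp]; simp [DW]

lemma DW_hom (W) {p : MvPolynomial (Fin 4) ℂ} {n : ℕ} (hp : p.IsHomogeneous n) :
    (DW W p).IsHomogeneous (n - 1) :=
  IsHomogeneous.sum _ _ _ fun i _ => hp.pderiv.C_mul _

lemma eval_DW (W) {p : MvPolynomial (Fin 4) ℂ} {n : ℕ} (hp : p.IsHomogeneous n) :
    eval W (DW W p) = n * eval W p := by
  have h := congrArg (eval W) hp.sum_X_mul_pderiv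
  simpa [DW] using h

lemma Lam_DW (W) {p : MvPolynomial (Fin 4) ℂ} {d : ℕ} (hp : p.IsHomogeneous d) :
    Lam (DW W p) = ((d : ℂ) + 3) * Lam (tW W * p) := by
  simp only [DW, tW, Finset.sum_mul, map_sum, Finset.mul_sum, ← MvPolynomial.smul_eq_C_mul,
    map_smul, smul_eq_mul, Algebra.smul_mul_assoc]
  apply Finset.sum_congr rfl
  intro i _
  rw [Lam_pderiv hp]
  ring

lemma Lam_repr (W : Fin 4 → ℂ) : ∀ (m : ℕ) (φ : MvPolynomial (Fin 4) ℂ), φ.IsHomogeneous m →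
    lapP φ = 0 → ((m : ℂ) + 1) * Lam (φ * Cn W m) = 2 * (Real.pi : ℂ) ^ 2 * eval W φ := by
  intro m
  induction m with
  | zero =>
    intro φ hφ _
    rw [← totalDegree_zero_iff_isHomogeneous, totalDegree_eq_zero_iff_eq_C] at hφ
    rw [hφ, Cn, mul_one, C_apply, Lam_monomial, Finsupp.coe_zero, sphM_zero]
    simp
    ring
  | succ m ih =>
    intro φ hφ hl
    have h1 : Lam (φ * Cn W (m + 1)) = 2 * Lam (tW W * (φ * Cn W m)) := by
      have e2 : ∀ q, Lam (2 * q) = 2 * Lam q := fun q => by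
        rw [← smul_eq_mul (2:ℂ), ← map_smul, MvPolynomial.smul_eq_C_mul, map_ofNat]
      rcases m with _ | m
      · rw [← e2]; congr 1; simp only [Cn]; ring
      · have : φ * Cn W (m + 1 + 1) = 2 * (tW W * (φ * Cn W (m + 1)))
            - NC W • (r2 * (φ * Cn W m)) := by
          rw [MvPolynomial.smul_eq_C_mul, Cn]; ring
        rw [this, map_sub, e2, map_smul, Lam_r2, Lam_orth hφ (Cn_hom W m) hl (lapP_Cn W m) (by omega)]
        simp
    have h2 : Lam (φ * DW W (Cn W m)) = 0 := by
      rcases m with _ | m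
      · simp [Cn, DW_one]
      · rw [DW_Cn]
        have : φ * (((m : MvPolynomial (Fin 4) ℂ) + 2) * C (NC W) * Cn W m)
            = (((m:ℂ) + 2) * NC W) • (φ * Cn W m) := by
          rw [MvPolynomial.smul_eq_C_mul]
          simp only [map_mul, map_add, map_natCast, map_ofNat]
          ring
        rw [this, map_smul, Lam_orth hφ (Cn_hom W m) hl (lapP_Cn W m) (by omega)]
        simp
    have h3 := Lam_DW W (hφ.mul (Cn_hom W m))
    rw [DW_mul, map_add, h2, zero_add, mul_comm (Cn W m)] at h3
    have h4 := ih (DW W φ) (DW_hom W hφ) (lapP_DW W hl)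
    rw [eval_DW W hφ, h3] at h4
    have h5 : ((m:ℂ) + 1) ≠ 0 := by exact_mod_cast Nat.succ_ne_zero m
    rw [h1]
    apply mul_left_cancel₀ h5
    push_cast at h4 ⊢
    linear_combination h4

lemma lapP_homComp {φ : MvPolynomial (Fin 4) ℂ} (h : lapP φ = 0) (n : ℕ) :
    lapP (homogeneousComponent n φ) = 0 := by
  ext d
  have h1 := congrArg (coeff d) h
  simp only [lapP, coeff_sum, coeff_pderiv, coeff_homogeneousComponent, coeff_zero] at h1 ⊢
  by_cases hd : d.degree + 2 = n
  · rw [← h1]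
    apply Finset.sum_congr rfl
    intro i _
    rw [if_pos]
    simp [← hd, add_assoc]
  · apply Finset.sum_eq_zero
    intro i _
    rw [if_neg]
    · simp
    · simpa [add_assoc] using hd

lemma tdegP_hom {φ : MvPolynomial (Fin 4) ℂ} {m : ℕ} (h : φ.IsHomogeneous m) :
    tdegP φ = ((m : ℂ) + 1) • φ := by
  rw [tdegP, h.sum_X_mul_pderiv, nsmul_eq_mul, MvPolynomial.smul_eq_C_mul]
  simp
  ring

lemma cheb_bound {c : ℕ → ℂ} {τ N l μ : ℂ} {ρ : ℝ} (h0 : c 0 = 1) (h1 : c 1 = 2 * τ)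
    (h2 : ∀ n, c (n + 2) = 2 * τ * c (n + 1) - N * c n)
    (hs : l + μ = 2 * τ) (hp : l * μ = N) (hl : ‖l‖ ≤ ρ) (hμ : ‖μ‖ ≤ ρ) (n : ℕ) :
    ‖c n‖ ≤ ((n : ℝ) + 1) * ρ ^ n := by
  have hρ : 0 ≤ ρ := (norm_nonneg _).trans hl
  have key : ∀ n, c (n + 1) = l * c n + μ ^ (n + 1) := by
    intro n
    induction n with
    | zero => rw [h0, h1, ← hs]; ring
    | succ n ih =>
      rw [h2, ← hs, ← hp]
      have : μ ^ (n + 1 + 1) = μ * (c (n + 1) - l * c n) := by rw [ih]; ring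
      rw [this]; ring
  induction n with
  | zero => simp [h0]
  | succ n ih =>
    rw [key]
    calc ‖l * c n + μ ^ (n + 1)‖ ≤ ‖l‖ * ‖c n‖ + ‖μ‖ ^ (n + 1) := by
          refine (norm_add_le _ _).trans ?_
          rw [norm_mul, norm_pow]
      _ ≤ ρ * (((n : ℝ) + 1) * ρ ^ n) + ρ ^ (n + 1) := by gcongr
      _ = _ := by push_cast; ring

lemma summable_bd {ρ : ℝ} (h0 : 0 ≤ ρ) (h1 : ρ < 1) :
    Summable fun n : ℕ => ((n : ℝ) + 1) * ρ ^ n := by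
  have hρ : ‖ρ‖ < 1 := by rwa [Real.norm_of_nonneg h0]
  have a := summable_pow_mul_geometric_of_norm_lt_one 1 hρ
  have b := summable_geometric_of_norm_lt_one hρ
  refine (a.add b).congr fun n => ?_
  ring

lemma cheb_hasSum {c : ℕ → ℂ} {τ N : ℂ} {ρ : ℝ} (h0 : c 0 = 1) (h1 : c 1 = 2 * τ)
    (h2 : ∀ n, c (n + 2) = 2 * τ * c (n + 1) - N * c n) (hρ0 : 0 ≤ ρ) (hρ1 : ρ < 1)
    (hb : ∀ n, ‖c n‖ ≤ ((n : ℝ) + 1) * ρ ^ n) (hne : 1 - 2 * τ + N ≠ 0) :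
    HasSum c (1 / (1 - 2 * τ + N)) := by
  have hsum : Summable c := Summable.of_norm_bounded (summable_bd hρ0 hρ1) hb
  have hpart : ∀ M, (1 - 2 * τ + N) * ∑ n ∈ Finset.range (M + 1), c n
      = 1 - c (M + 1) + N * c M := by
    intro M
    induction M with
    | zero => simp [h0, h1]
    | succ M ih => rw [Finset.sum_range_succ, mul_add, ih, h2]; ring
  have ht := hsum.tendsto_atTop_zero
  have ht1 := (Filter.tendsto_add_atTop_iff_nat 1).2 ht
  have l1 : Filter.Tendsto (fun M => 1 - c (M + 1) + N * c M) Filter.atTop (nhds (1 - 0 + N * 0)) :=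
    (tendsto_const_nhds.sub ht1).add (ht.const_mul N)
  have l2 := ((Filter.tendsto_add_atTop_iff_nat 1).2 hsum.hasSum.tendsto_sum_nat).const_mul
    (1 - 2 * τ + N)
  simp only [hpart] at l2
  have l3 := tendsto_nhds_unique l2 l1
  have : 1 / (1 - 2 * τ + N) = ∑' n, c n := by
    rw [div_eq_iff hne, mul_comm, l3, mul_zero, sub_zero, add_zero]
  rw [this]
  exact hsum.hasSum

lemma posDef_lower {M : Matrix (Fin 2) (Fin 2) ℂ} (hM : M.PosDef) :
    ∃ ε : ℝ, 0 < ε ∧ ∀ x : Fin 2 → ℂ,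
      ε * (‖x 0‖ ^ 2 + ‖x 1‖ ^ 2) ≤ (star x ⬝ᵥ (M *ᵥ x)).re := by
  have hcont : Continuous fun x : EuclideanSpace ℂ (Fin 2) =>
      (star (x : Fin 2 → ℂ) ⬝ᵥ (M *ᵥ (x : Fin 2 → ℂ))).re := by
    simp only [dotProduct, mulVec, Fin.sum_univ_two, Pi.star_apply]
    fun_prop
  obtain ⟨y, hy, hmin⟩ := (isCompact_sphere (0 : EuclideanSpace ℂ (Fin 2)) 1).exists_isMinOn
    (NormedSpace.sphere_nonempty.2 zero_le_one) hcont.continuousOn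
  have hy0 : (y : Fin 2 → ℂ) ≠ 0 := by
    intro h
    have : y = 0 := by ext i; exact congrFun h i
    rw [this] at hy
    simp at hy
  refine ⟨_, hM.re_dotProduct_pos hy0, fun x => ?_⟩
  by_cases hx : x = 0
  · simp [hx]
  set s : ℝ := ‖(WithLp.toLp 2 x : EuclideanSpace ℂ (Fin 2))‖ with hs
  have hs2 : s ^ 2 = ‖x 0‖ ^ 2 + ‖x 1‖ ^ 2 := by
    rw [hs, EuclideanSpace.norm_sq_eq, Fin.sum_univ_two]
  have hs0 : 0 < s := by
    rw [hs, norm_pos_iff]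
    intro h
    exact hx (by ext i; exact congrFun (congrArg WithLp.ofLp h) i)
  have hm := hmin (a := ((s⁻¹ : ℝ) : ℂ) • (WithLp.toLp 2 x : EuclideanSpace ℂ (Fin 2))) (by
    rw [mem_sphere_zero_iff_norm, norm_smul, ← hs]
    simp [abs_of_pos hs0, hs0.ne'])
  simp only [Set.mem_ofPred_eq] at hm
  have hscale : (star (((s⁻¹ : ℝ) : ℂ) • x) ⬝ᵥ (M *ᵥ (((s⁻¹ : ℝ) : ℂ) • x))).re
      = (s ^ 2)⁻¹ * (star x ⬝ᵥ (M *ᵥ x)).re := by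
    rw [star_smul, mulVec_smul, smul_dotProduct, dotProduct_smul, smul_smul, smul_eq_mul]
    have : star ((s⁻¹ : ℝ) : ℂ) * ((s⁻¹ : ℝ) : ℂ) = (((s ^ 2)⁻¹ : ℝ) : ℂ) := by
      rw [Complex.star_def, Complex.conj_ofReal]
      push_cast
      rw [← mul_inv, sq]
    rw [this, Complex.re_ofReal_mul]
  have hm2 : (star (y : Fin 2 → ℂ) ⬝ᵥ (M *ᵥ (y : Fin 2 → ℂ))).re
      ≤ (s ^ 2)⁻¹ * (star x ⬝ᵥ (M *ᵥ x)).re := by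
    rw [← hscale]; exact hm
  rw [← hs2]
  rw [inv_mul_eq_div, le_div_iff₀ (by positivity)] at hm2
  exact hm2

lemma quad_form (W : Fin 4 → ℂ) (R : ℝ) (x : Fin 2 → ℂ) :
    (star x ⬝ᵥ ((((R ^ 2 : ℝ) : ℂ) • (1 : Matrix (Fin 2) (Fin 2) ℂ)
              - Zmat W * (Zmat W).conjTranspose) *ᵥ x)).re
    = R ^ 2 * (‖x 0‖ ^ 2 + ‖x 1‖ ^ 2) - (‖(star x ᵥ* Zmat W) 0‖ ^ 2 + ‖(star x ᵥ* Zmat W) 1‖ ^ 2) := by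
  have hn : ∀ v : Fin 2 → ℂ, (star v ⬝ᵥ v).re = ‖v 0‖ ^ 2 + ‖v 1‖ ^ 2 := by
    intro v
    simp only [dotProduct, Fin.sum_univ_two, Pi.star_apply, Complex.star_def, Complex.add_re]
    rw [← Complex.normSq_eq_conj_mul_self, ← Complex.normSq_eq_conj_mul_self]
    simp only [Complex.ofReal_re, Complex.normSq_eq_norm_sq]
  rw [sub_mulVec, dotProduct_sub, smul_mulVec, one_mulVec, dotProduct_smul, smul_eq_mul,
    Complex.sub_re, Complex.re_ofReal_mul, hn, ← mulVec_mulVec, dotProduct_mulVec]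
  congr 1
  have : (Zmat W).conjTranspose *ᵥ x = star (star x ᵥ* Zmat W) := by
    rw [star_vecMul, star_star]
  rw [this, dotProduct_comm, hn]

lemma det_Zmat (V : Fin 4 → ℂ) : (Zmat V).det = NC V := by
  rw [Zmat, det_fin_two_of, NC, Fin.sum_univ_four]
  linear_combination (-(V 3)^2 - (V 1)^2) * Complex.I_sq

lemma Zmat_unitary (ω : Metric.sphere (0 : E4) 1) (v : Fin 2 → ℂ) :
    ‖(v ᵥ* Zmat (fun i => (((ω : E4) i : ℝ) : ℂ))) 0‖ ^ 2 +
      ‖(v ᵥ* Zmat (fun i => (((ω : E4) i : ℝ) : ℂ))) 1‖ ^ 2 = ‖v 0‖ ^ 2 + ‖v 1‖ ^ 2 := by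
  have h : ‖(ω : E4)‖ = 1 := by simp
  have h2 := EuclideanSpace.norm_sq_eq (ω : E4)
  rw [h] at h2
  simp only [Real.norm_eq_abs, sq_abs, one_pow, Fin.sum_univ_four] at h2
  simp only [vecMul, dotProduct, Fin.sum_univ_two, Zmat, of_apply, cons_val_zero, cons_val_one, 
    cons_val', cons_val_fin_one, ← Complex.normSq_eq_norm_sq, Complex.normSq_apply,
    Complex.add_re, Complex.add_im, Complex.mul_re, Complex.mul_im, Complex.sub_re, Complex.sub_im,
    Complex.ofReal_re, Complex.ofReal_im, Complex.I_re, Complex.I_im, Complex.neg_re, Complex.neg_im]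
  linear_combination (-((v 0).re ^ 2 + (v 0).im ^ 2 + (v 1).re ^ 2 + (v 1).im ^ 2)) * h2

lemma root_bound {W : Fin 4 → ℂ} {R : ℝ} (hR : 0 < R)
    (hW : (((R ^ 2 : ℝ) : ℂ) • (1 : Matrix (Fin 2) (Fin 2) ℂ)
              - Zmat W * (Zmat W).conjTranspose).PosDef) :
    ∃ ρ : ℝ, 0 ≤ ρ ∧ ρ < 1 ∧ ∀ (ω : Metric.sphere (0 : E4) 1) (z : ℂ),
      NC (W - fun i => z * R * (((ω : E4) i : ℝ) : ℂ)) = 0 → ‖z‖ ≤ ρ := by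
  obtain ⟨ε, hε, hl⟩ := posDef_lower hW
  refine ⟨√(1 - ε / R ^ 2), Real.sqrt_nonneg _, ?_, ?_⟩
  · rw [Real.sqrt_lt' one_pos]
    have : 0 < ε / R ^ 2 := by positivity
    linarith
  intro ω z hz
  rw [← det_Zmat] at hz
  obtain ⟨v, hv, hv0⟩ := exists_vecMul_eq_zero_iff.2 hz
  have hZ : Zmat (W - fun i => z * R * (((ω : E4) i : ℝ) : ℂ))
      = Zmat W - (z * R) • Zmat (fun i => (((ω : E4) i : ℝ) : ℂ)) := by
    ext i j
    fin_cases i <;> fin_cases j <;> simp [Zmat] <;> ring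
  rw [hZ, vecMul_sub, sub_eq_zero, vecMul_smul] at hv0
  have h1 := hl (star v)
  rw [quad_form, star_star, hv0] at h1
  simp only [Pi.smul_apply, smul_eq_mul, norm_mul, mul_pow, ← mul_add, Pi.star_apply, norm_star] at h1
  rw [Zmat_unitary] at h1
  have hs : 0 < ‖v 0‖ ^ 2 + ‖v 1‖ ^ 2 := by
    by_contra hcon
    have a0 : ‖v 0‖ ^ 2 = 0 := by nlinarith [sq_nonneg ‖v 0‖, sq_nonneg ‖v 1‖]
    have a1 : ‖v 1‖ ^ 2 = 0 := by nlinarith [sq_nonneg ‖v 0‖, sq_nonneg ‖v 1‖]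
    apply hv
    ext i
    fin_cases i
    · simpa using a0
    · simpa using a1
  rw [← sub_mul] at h1
  have h2 := le_of_mul_le_mul_right h1 hs
  rw [Complex.norm_real, Real.norm_of_nonneg hR.le] at h2
  have h3 : ‖z‖ ^ 2 ≤ 1 - ε / R ^ 2 := by
    rw [le_sub_comm, div_le_iff₀ (by positivity)]
    linarith
  exact Real.le_sqrt_of_sq_le h3

lemma NC_expand (V : Fin 4 → ℂ) (z : ℂ) (ω : Metric.sphere (0 : E4) 1) :
    NC (V - fun i => z * (((ω : E4) i : ℝ) : ℂ))
      = z ^ 2 - 2 * evalR (tW V) (ω : E4) * z + NC V := by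
  have h := evalR_r2 ω
  simp only [evalR, r2, tW, map_add, map_mul, map_pow, eval_X, eval_C, NC, Pi.sub_apply,
    Fin.sum_univ_four] at h ⊢
  linear_combination z ^ 2 * h

lemma exists_roots (b c : ℂ) : ∃ l μ : ℂ, l + μ = b ∧ l * μ = c := by
  obtain ⟨s, hs⟩ := IsAlgClosed.exists_pow_nat_eq (b ^ 2 - 4 * c) (n := 2) (by norm_num)
  exact ⟨(b + s) / 2, (b - s) / 2, by ring, by linear_combination (-1/4) * hs⟩

/-- the single-sphere formula on the unit sphere, homogeneous case -/
lemma unit_formula {φ : MvPolynomial (Fin 4) ℂ} {m : ℕ} (hφ : φ.IsHomogeneous m)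
    (hl : lapP φ = 0) {V : Fin 4 → ℂ} {ρ : ℝ} (hρ0 : 0 ≤ ρ) (hρ1 : ρ < 1)
    (hρ : ∀ (ω : Metric.sphere (0 : E4) 1) (z : ℂ),
      NC (V - fun i => z * (((ω : E4) i : ℝ) : ℂ)) = 0 → ‖z‖ ≤ ρ) :
    ((m : ℂ) + 1) * ∫ ω : Metric.sphere (0 : E4) 1,
      evalR φ (ω : E4) * (1 / NC (V - fun i => (((ω : E4) i : ℝ) : ℂ)))
        ∂(volume : Measure E4).toSphere = 2 * (Real.pi : ℂ) ^ 2 * eval V φ := by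
  rw [← Lam_repr V m φ hφ hl]
  congr 1
  obtain ⟨B, hB⟩ := (isCompact_univ (X := Metric.sphere (0 : E4) 1)).exists_bound_of_continuousOn
    ((continuous_evalR φ).comp continuous_subtype_val).continuousOn
  have rec0 : ∀ ω : Metric.sphere (0 : E4) 1, evalR (Cn V 0) (ω : E4) = 1 := fun ω => by
    simp [evalR, Cn]
  have rec1 : ∀ ω : Metric.sphere (0 : E4) 1,
      evalR (Cn V 1) (ω : E4) = 2 * evalR (tW V) (ω : E4) := fun ω => by
    simp [evalR, Cn]
  have rec2 : ∀ (ω : Metric.sphere (0 : E4) 1) (n : ℕ), evalR (Cn V (n + 2)) (ω : E4)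
      = 2 * evalR (tW V) (ω : E4) * evalR (Cn V (n + 1)) (ω : E4)
        - NC V * evalR (Cn V n) (ω : E4) := fun ω n => by
    have h := evalR_r2 ω
    simp only [evalR] at h
    simp [evalR, Cn, h]
  have hbound : ∀ (ω : Metric.sphere (0 : E4) 1) (n : ℕ),
      ‖evalR (Cn V n) (ω : E4)‖ ≤ ((n : ℝ) + 1) * ρ ^ n := by
    intro ω
    obtain ⟨l, μ, hs, hp⟩ := exists_roots (2 * evalR (tW V) (ω : E4)) (NC V)
    refine cheb_bound (rec0 ω) (rec1 ω) (rec2 ω) hs hp (hρ ω l ?_) (hρ ω μ ?_)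
    · rw [NC_expand, ← hs, ← hp]; ring
    · rw [NC_expand, ← hs, ← hp]; ring
  have hsum : HasSum (fun n => ∫ ω : Metric.sphere (0 : E4) 1,
      evalR φ (ω : E4) * evalR (Cn V n) (ω : E4) ∂(volume : Measure E4).toSphere)
      (∫ ω : Metric.sphere (0 : E4) 1,
      evalR φ (ω : E4) * (1 / NC (V - fun i => (((ω : E4) i : ℝ) : ℂ)))
        ∂(volume : Measure E4).toSphere) := by
    apply hasSum_integral_of_dominated_convergence (fun (n : ℕ) _ => B * (((n : ℝ) + 1) * ρ ^ n))
    · intro n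
      exact (((continuous_evalR φ).comp continuous_subtype_val).mul
        ((continuous_evalR (Cn V n)).comp continuous_subtype_val)).aestronglyMeasurable
    · intro n
      refine Filter.Eventually.of_forall fun ω => ?_
      rw [norm_mul]
      exact mul_le_mul (hB ω (Set.mem_univ _)) (hbound ω n) (norm_nonneg _)
        ((norm_nonneg _).trans (hB ω (Set.mem_univ _)))
    · exact Filter.Eventually.of_forall fun ω => (summable_bd hρ0 hρ1).mul_left B
    · exact integrable_const _
    · refine Filter.Eventually.of_forall fun ω => ?_
      have e := NC_expand V 1 ω
      simp only [one_mul] at e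
      have hne : 1 - 2 * evalR (tW V) (ω : E4) + NC V ≠ 0 := by
        intro h0
        have := hρ ω 1 (by rw [NC_expand, ← h0]; ring)
        rw [norm_one] at this
        linarith
      rw [e, show (1:ℂ) ^ 2 - 2 * evalR (tW V) (ω : E4) * 1 + NC V
        = 1 - 2 * evalR (tW V) (ω : E4) + NC V by ring]
      exact (cheb_hasSum (rec0 ω) (rec1 ω) (rec2 ω) hρ0 hρ1 (hbound ω) hne).mul_left _
  have hcoef : ∀ n, ∫ ω : Metric.sphere (0 : E4) 1,
      evalR φ (ω : E4) * evalR (Cn V n) (ω : E4) ∂(volume : Measure E4).toSphere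
      = Lam (φ * Cn V n) := fun n => by
    rw [Lam_apply]; simp [evalR]
  simp only [hcoef] at hsum
  refine hsum.unique ?_
  apply hasSum_single
  intro n hn
  exact Lam_orth hφ (Cn_hom V n) hl (lapP_Cn V n) hn.symm

lemma eval_smul_hom {φ : MvPolynomial (Fin 4) ℂ} {m : ℕ} (hφ : φ.IsHomogeneous m)
    (c : ℂ) (v : Fin 4 → ℂ) : eval (fun i => c * v i) φ = c ^ m * eval v φ := by
  rw [eval_eq', eval_eq', Finset.mul_sum]
  apply Finset.sum_congr rfl
  intro a ha
  have hd : a.degree = m := by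
    by_contra h
    exact (mem_support_iff.1 ha) (hφ.coeff_eq_zero h)
  simp only [mul_pow, Finset.prod_mul_distrib, Finset.prod_pow_eq_pow_sum]
  rw [← hd, Finsupp.degree_eq_sum]
  ring

/-- the single-sphere formula -/
lemma single_formula (φ : MvPolynomial (Fin 4) ℂ) (hl : lapP φ = 0) (W : Fin 4 → ℂ) (R : ℝ)
    (hR : 0 < R) (hW : (((R ^ 2 : ℝ) : ℂ) • (1 : Matrix (Fin 2) (Fin 2) ℂ)
              - Zmat W * (Zmat W).conjTranspose).PosDef) :
    sphereInt R (fun X => evalR (tdegP φ) X / NC (W - fun i => ((X i : ℝ) : ℂ)))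
      = 2 * (Real.pi : ℂ) ^ 2 * R * eval W φ := by
  obtain ⟨ρ, hρ0, hρ1, hρ⟩ := root_bound hR hW
  have hRC : (R : ℂ) ≠ 0 := by exact_mod_cast hR.ne'
  set V : Fin 4 → ℂ := fun i => (R : ℂ)⁻¹ * W i with hV
  have hNC : ∀ (ω : Metric.sphere (0 : E4) 1) (z : ℂ),
      NC (W - fun i => z * R * (((ω : E4) i : ℝ) : ℂ))
        = (R : ℂ) ^ 2 * NC (V - fun i => z * (((ω : E4) i : ℝ) : ℂ)) := by
    intro ω z
    simp only [NC, Finset.mul_sum, Pi.sub_apply, hV]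
    apply Finset.sum_congr rfl
    intro i _
    field_simp
  have hρ' : ∀ (ω : Metric.sphere (0 : E4) 1) (z : ℂ),
      NC (V - fun i => z * (((ω : E4) i : ℝ) : ℂ)) = 0 → ‖z‖ ≤ ρ := by
    intro ω z h
    exact hρ ω z (by rw [hNC, h, mul_zero])
  have hne : ∀ ω : Metric.sphere (0 : E4) 1, NC (V - fun i => (((ω : E4) i : ℝ) : ℂ)) ≠ 0 := by
    intro ω h
    have := hρ' ω 1 (by simpa using h)
    rw [norm_one] at this
    linarith
  set k : Metric.sphere (0 : E4) 1 → ℂ :=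
    fun ω => 1 / NC (V - fun i => (((ω : E4) i : ℝ) : ℂ)) with hk
  have hkc : Continuous k := by
    rw [hk]
    refine continuous_const.div ?_ hne
    simp only [NC, Pi.sub_apply]
    fun_prop
  have hφs := sum_homogeneousComponent φ
  have hinteg : ∀ ω : Metric.sphere (0 : E4) 1,
      evalR (tdegP φ) (R • (ω : E4)) / NC (W - fun i => (((R • (ω : E4)) i : ℝ) : ℂ))
      = ∑ m ∈ Finset.range (φ.totalDegree + 1),
          ((R : ℂ) ^ m / R ^ 2 * ((m : ℂ) + 1)) *
            (evalR (homogeneousComponent m φ) (ω : E4) * k ω) := by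
    intro ω
    have e1 : NC (W - fun i => (((R • (ω : E4)) i : ℝ) : ℂ))
        = (R : ℂ) ^ 2 * NC (V - fun i => (((ω : E4) i : ℝ) : ℂ)) := by
      have := hNC ω 1
      simp only [one_mul] at this
      rw [← this]
      simp
    have e2 : evalR (tdegP φ) (R • (ω : E4)) = ∑ m ∈ Finset.range (φ.totalDegree + 1),
        ((m : ℂ) + 1) * ((R : ℂ) ^ m * evalR (homogeneousComponent m φ) (ω : E4)) := by
      have t1 : tdegP φ = ∑ m ∈ Finset.range (φ.totalDegree + 1),
          tdegP (homogeneousComponent m φ) := by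
        conv_lhs => rw [← hφs]
        simp only [tdegP, map_sum, Finset.mul_sum, Finset.sum_add_distrib]
        congr 1
        rw [Finset.sum_comm]
      rw [t1, evalR, map_sum]
      apply Finset.sum_congr rfl
      intro m _
      have hm := homogeneousComponent_isHomogeneous m φ
      rw [tdegP_hom hm, smul_eval, evalR, ← eval_smul_hom hm]
      simp
    rw [e1, e2, Finset.sum_div, hk]
    apply Finset.sum_congr rfl
    intro m _
    have := hne ω
    field_simp
  rw [sphereInt]
  simp only [hinteg]
  have hi : ∀ m ∈ Finset.range (φ.totalDegree + 1),
      Integrable (fun ω : Metric.sphere (0 : E4) 1 => ((R : ℂ) ^ m / R ^ 2 * ((m : ℂ) + 1)) *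
            (evalR (homogeneousComponent m φ) (ω : E4) * k ω)) (volume : Measure E4).toSphere :=
    fun m _ => (integrable_cont
      (((continuous_evalR _).comp continuous_subtype_val).mul hkc)).const_mul _
  rw [integral_finsetSum _ hi]
  simp only [integral_const_mul]
  have hfin : ∀ m : ℕ, ((R : ℂ) ^ m / R ^ 2 * ((m : ℂ) + 1)) *
      ∫ ω : Metric.sphere (0 : E4) 1, evalR (homogeneousComponent m φ) (ω : E4) * k ω
        ∂(volume : Measure E4).toSphere
      = 2 * (Real.pi : ℂ) ^ 2 / R ^ 2 * eval W (homogeneousComponent m φ) := by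
    intro m
    have hm := homogeneousComponent_isHomogeneous m φ
    rw [mul_assoc, unit_formula hm (lapP_homComp hl m) hρ0 hρ1 hρ', hV, eval_smul_hom hm]
    field_simp
    rw [← mul_pow, mul_one_div_cancel hRC, one_pow, one_mul]
  rw [Finset.sum_congr rfl fun m _ => hfin m, ← Finset.mul_sum, ← map_sum, hφs,
    Complex.real_smul]
  push_cast
  field_simp

/-- If `φ₁, φ₂` are harmonic polynomials, `R₁, R₂ > 0` and `W ∈ 𝔻⁺_{R₁} ∩ 𝔻⁺_{R₂}`, then
`(1/(2π²)²) ∫_{S³_{R₁}} ∫_{S³_{R₂}} (d̃eg φ₁)(X₁)(d̃eg φ₂)(X₂)/(N(W−X₁)N(W−X₂))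
dS(X₂)dS(X₁)/(R₁R₂) = φ₁(W)·φ₂(W)`. -/
theorem stmt15 (φ₁ φ₂ : MvPolynomial (Fin 4) ℂ)
    (hφ₁ : lapP φ₁ = 0) (hφ₂ : lapP φ₂ = 0)
    (R₁ R₂ : ℝ) (hR₁ : 0 < R₁) (hR₂ : 0 < R₂) (W : Fin 4 → ℂ)
    (hW₁ : (((R₁ ^ 2 : ℝ) : ℂ) • (1 : Matrix (Fin 2) (Fin 2) ℂ)
              - Zmat W * (Zmat W).conjTranspose).PosDef)
    (hW₂ : (((R₂ ^ 2 : ℝ) : ℂ) • (1 : Matrix (Fin 2) (Fin 2) ℂ)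
              - Zmat W * (Zmat W).conjTranspose).PosDef) :
    ((1 / (2 * Real.pi ^ 2) ^ 2 / (R₁ * R₂) : ℝ) : ℂ) *
      sphereInt R₁ (fun X₁ =>
        sphereInt R₂ (fun X₂ =>
          evalR (tdegP φ₁) X₁ * evalR (tdegP φ₂) X₂ /
            (NC (W - fun i => ((X₁ i : ℝ) : ℂ)) * NC (W - fun i => ((X₂ i : ℝ) : ℂ)))))
    = eval W φ₁ * eval W φ₂ := by
  have h1 := single_formula φ₁ hφ₁ W R₁ hR₁ hW₁
  have h2 := single_formula φ₂ hφ₂ W R₂ hR₂ hW₂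
  have hin : ∀ X₁ : E4, sphereInt R₂ (fun X₂ =>
          evalR (tdegP φ₁) X₁ * evalR (tdegP φ₂) X₂ /
            (NC (W - fun i => ((X₁ i : ℝ) : ℂ)) * NC (W - fun i => ((X₂ i : ℝ) : ℂ))))
      = evalR (tdegP φ₁) X₁ / NC (W - fun i => ((X₁ i : ℝ) : ℂ)) *
        (2 * (Real.pi : ℂ) ^ 2 * R₂ * eval W φ₂) := by
    intro X₁
    rw [← h2, sphereInt, sphereInt, mul_smul_comm, ← integral_const_mul]
    congr 2
    ext ω
    rw [mul_div_mul_comm]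
  simp only [hin]
  have hout : sphereInt R₁ (fun X₁ => evalR (tdegP φ₁) X₁ / NC (W - fun i => ((X₁ i : ℝ) : ℂ)) *
        (2 * (Real.pi : ℂ) ^ 2 * R₂ * eval W φ₂))
      = 2 * (Real.pi : ℂ) ^ 2 * R₁ * eval W φ₁ * (2 * (Real.pi : ℂ) ^ 2 * R₂ * eval W φ₂) := by
    rw [← h1, sphereInt, sphereInt, smul_mul_assoc, ← integral_mul_const]
  rw [hout]
  have hR1 : (R₁ : ℂ) ≠ 0 := by exact_mod_cast hR₁.ne'
  have hR2 : (R₂ : ℂ) ≠ 0 := by exact_mod_cast hR₂.ne'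
  have hpi : (Real.pi : ℂ) ≠ 0 := by exact_mod_cast Real.pi_ne_zero
  push_cast
  field_simp
end
end

section
/- Let R > 0, let f be any polynomial in the entries z₁₁, z₁₂, z₂₁, z₂₂ of a 2×2 complex matrix, and let Z be a 2×2 complex matrix with R²·1 − ZZ* positive definite. Then (i/2π³) ∫_{U(2)_R} f(W) / (det(W−Z))² dV = f(Z), where the integral over U(2)_R is the explicit parametrized iterated integral described below. -/
noncomputable section

open MvPolynomial
open scoped ComplexOrder

/-- The parametrization of `U(2)_R`:
`W(α,φ,θ,ψ) = Re^{iα}·[[e^{i(φ+ψ)/2}cos(θ/2), i e^{i(φ−ψ)/2}sin(θ/2)],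
[i e^{i(ψ−φ)/2}sin(θ/2), e^{−i(φ+ψ)/2}cos(θ/2)]]`. -/
def Wparam (R α φ θ ψ : ℝ) : Matrix (Fin 2) (Fin 2) ℂ :=
  ((R : ℂ) * Complex.exp (Complex.I * α)) •
    !![Complex.exp (Complex.I * (φ + ψ) / 2) * (Real.cos (θ / 2) : ℂ),
         Complex.I * Complex.exp (Complex.I * (φ - ψ) / 2) * (Real.sin (θ / 2) : ℂ);
       Complex.I * Complex.exp (Complex.I * (ψ - φ) / 2) * (Real.sin (θ / 2) : ℂ),
         Complex.exp (-Complex.I * (φ + ψ) / 2) * (Real.cos (θ / 2) : ℂ)]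

/-- `∫_{U(2)_R} g dV`, defined as the iterated integral of
`g(W(α,φ,θ,ψ)) · (R⁴/(8i)) e^{4iα} sinθ` over
`(α,φ,θ,ψ) ∈ [0,π)×[0,2π)×(0,π)×[−2π,2π)`; with this orientation
`∫_{U(2)_R} dV/(det W)² = −2π³i`. -/
def U2int (R : ℝ) (g : Matrix (Fin 2) (Fin 2) ℂ → ℂ) : ℂ :=
  ∫ α in (0 : ℝ)..Real.pi, ∫ φ in (0 : ℝ)..(2 * Real.pi),
    ∫ θ in (0 : ℝ)..Real.pi, ∫ ψ in (-(2 * Real.pi))..(2 * Real.pi),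
      g (Wparam R α φ θ ψ) * ((R : ℂ) ^ 4 / (8 * Complex.I)) *
        Complex.exp (4 * Complex.I * α) * (Real.sin θ : ℂ)

/-- The iterated integral over the parameter box. -/
def I4 (G : ℝ → ℝ → ℝ → ℝ → ℂ) : ℂ :=
  ∫ α in (0 : ℝ)..Real.pi, ∫ φ in (0 : ℝ)..(2 * Real.pi),
    ∫ θ in (0 : ℝ)..Real.pi, ∫ ψ in (-(2 * Real.pi))..(2 * Real.pi), G α φ θ ψ

/-- Joint continuity in four variables. -/
def C4 (G : ℝ → ℝ → ℝ → ℝ → ℂ) : Prop :=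
  Continuous fun p : ℝ × ℝ × ℝ × ℝ => G p.1 p.2.1 p.2.2.1 p.2.2.2

lemma C4.comp {G : ℝ → ℝ → ℝ → ℝ → ℂ} (h : C4 G) {X : Type*} [TopologicalSpace X]
    {a b c d : X → ℝ} (ha : Continuous a) (hb : Continuous b) (hc : Continuous c)
    (hd : Continuous d) : Continuous fun x => G (a x) (b x) (c x) (d x) :=
  Continuous.comp (g := fun p : ℝ × ℝ × ℝ × ℝ => G p.1 p.2.1 p.2.2.1 p.2.2.2) h
    (f := fun x => (a x, b x, c x, d x)) (by fun_prop)

lemma cont_int {X : Type*} [TopologicalSpace X] [FirstCountableTopology X]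
    {f : X → ℝ → ℂ} (a b : ℝ)
    (h : Continuous fun p : X × ℝ => f p.1 p.2) : Continuous fun x => ∫ t in a..b, f x t :=
  intervalIntegral.continuous_parametric_intervalIntegral_of_continuous' h a b

lemma swap_int {f : ℝ → ℝ → ℂ} (h : Continuous fun p : ℝ × ℝ => f p.1 p.2)
    {a b c d : ℝ} (hab : a ≤ b) (hcd : c ≤ d) :
    ∫ x in a..b, ∫ y in c..d, f x y = ∫ y in c..d, ∫ x in a..b, f x y := by
  simp only [intervalIntegral.integral_of_le hab, intervalIntegral.integral_of_le hcd]
  apply MeasureTheory.integral_integral_swap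
  rw [MeasureTheory.Measure.prod_restrict]
  have h1 : MeasureTheory.IntegrableOn (Function.uncurry f) (Set.Icc a b ×ˢ Set.Icc c d)
      (MeasureTheory.volume.prod MeasureTheory.volume) :=
    ContinuousOn.integrableOn_compact (isCompact_Icc.prod isCompact_Icc)
      (Continuous.continuousOn h)
  exact h1.mono_set (Set.prod_mono Set.Ioc_subset_Icc_self Set.Ioc_subset_Icc_self)

section levels
variable {G : ℝ → ℝ → ℝ → ℝ → ℂ} (h : C4 G)

lemma C4.l1 (h : C4 G) (a b : ℝ) :
    Continuous fun p : ℝ × ℝ × ℝ => ∫ ψ in a..b, G p.1 p.2.1 p.2.2 ψ :=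
  cont_int _ _ (h.comp (by fun_prop) (by fun_prop) (by fun_prop) (by fun_prop))

lemma C4.l2 (h : C4 G) (a b c d : ℝ) :
    Continuous fun p : ℝ × ℝ => ∫ θ in a..b, ∫ ψ in c..d, G p.1 p.2 θ ψ :=
  cont_int _ _ ((h.l1 c d).comp (f := fun p : (ℝ × ℝ) × ℝ => (p.1.1, p.1.2, p.2)) (by fun_prop))

lemma C4.l3 (h : C4 G) (a b c d a' b' : ℝ) :
    Continuous fun p : ℝ => ∫ φ in a'..b', ∫ θ in a..b, ∫ ψ in c..d, G p φ θ ψ :=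
  cont_int _ _ (h.l2 a b c d)
end levels

lemma I4_add {G H : ℝ → ℝ → ℝ → ℝ → ℂ} (hG : C4 G) (hH : C4 H) :
    I4 (fun a b c d => G a b c d + H a b c d) = I4 G + I4 H := by
  unfold I4
  have e1 : ∀ a b c, (∫ ψ in (-(2 * Real.pi))..(2 * Real.pi), (G a b c ψ + H a b c ψ))
      = (∫ ψ in (-(2 * Real.pi))..(2 * Real.pi), G a b c ψ)
       + ∫ ψ in (-(2 * Real.pi))..(2 * Real.pi), H a b c ψ := fun a b c =>
    intervalIntegral.integral_add
      (Continuous.intervalIntegrable (hG.comp (by fun_prop) (by fun_prop) (by fun_prop) (by fun_prop)) _ _)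
      (Continuous.intervalIntegrable (hH.comp (by fun_prop) (by fun_prop) (by fun_prop) (by fun_prop)) _ _)
  simp only [e1]
  have e2 : ∀ a b, (∫ θ in (0:ℝ)..Real.pi, ((∫ ψ in (-(2 * Real.pi))..(2 * Real.pi), G a b θ ψ)
       + ∫ ψ in (-(2 * Real.pi))..(2 * Real.pi), H a b θ ψ)) =
       (∫ θ in (0:ℝ)..Real.pi, (∫ ψ in (-(2 * Real.pi))..(2 * Real.pi), G a b θ ψ)) +
       (∫ θ in (0:ℝ)..Real.pi, (∫ ψ in (-(2 * Real.pi))..(2 * Real.pi), H a b θ ψ)) := fun a b =>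
    intervalIntegral.integral_add
      (Continuous.intervalIntegrable ((hG.l1 _ _).comp (f := fun θ => (a, b, θ)) (by fun_prop)) _ _)
      (Continuous.intervalIntegrable ((hH.l1 _ _).comp (f := fun θ => (a, b, θ)) (by fun_prop)) _ _)
  simp only [e2]
  have e3 := fun a : ℝ => intervalIntegral.integral_add (a := 0) (b := 2 * Real.pi)
      (μ := MeasureTheory.volume)
      (Continuous.intervalIntegrable ((hG.l2 0 Real.pi (-(2 * Real.pi)) (2 * Real.pi)).comp
        (f := fun θ => (a, θ)) (by fun_prop)) _ _)
      (Continuous.intervalIntegrable ((hH.l2 0 Real.pi (-(2 * Real.pi)) (2 * Real.pi)).comp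
        (f := fun θ => (a, θ)) (by fun_prop)) _ _)
  simp only [Function.comp] at e3
  simp only [e3]
  exact intervalIntegral.integral_add
      (Continuous.intervalIntegrable (hG.l3 _ _ _ _ _ _) _ _)
      (Continuous.intervalIntegrable (hH.l3 _ _ _ _ _ _) _ _)

lemma I4_mul (k : ℂ) (G : ℝ → ℝ → ℝ → ℝ → ℂ) :
    I4 (fun a b c d => k * G a b c d) = k * I4 G := by
  unfold I4
  simp only [intervalIntegral.integral_const_mul]

lemma I4_sub {G H : ℝ → ℝ → ℝ → ℝ → ℂ} (hG : C4 G) (hH : C4 H) :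
    I4 (fun a b c d => G a b c d - H a b c d) = I4 G - I4 H := by
  have : C4 (fun a b c d => (-1) * H a b c d) := by
    unfold C4 at *; fun_prop
  have e := I4_add hG this
  rw [I4_mul] at e
  rw [sub_eq_add_neg, ← neg_one_mul (I4 H), ← e]
  congr 1; funext a b c d; ring

/-- swap with a fifth variable -/
lemma I4_swap {G : ℝ → ℝ → ℝ → ℝ → ℝ → ℂ}
    (hG : Continuous fun p : ℝ × ℝ × ℝ × ℝ × ℝ => G p.1 p.2.1 p.2.2.1 p.2.2.2.1 p.2.2.2.2)
    {a b : ℝ} (hab : a ≤ b) :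
    I4 (fun α φ θ ψ => ∫ t in a..b, G t α φ θ ψ) = ∫ t in a..b, I4 (G t) := by
  have hpi := Real.pi_pos
  have hc : ∀ {X : Type} [TopologicalSpace X] {t a b c d : X → ℝ}, Continuous t → Continuous a →
      Continuous b → Continuous c → Continuous d →
      Continuous fun x => G (t x) (a x) (b x) (c x) (d x) := by
    intro X _ t a b c d ht ha hb hc hd
    exact hG.comp (f := fun x => (t x, a x, b x, c x, d x)) (by fun_prop)
  unfold I4
  have e1 : ∀ α φ θ, (∫ ψ in (-(2 * Real.pi))..(2 * Real.pi), ∫ t in a..b, G t α φ θ ψ)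
      = ∫ t in a..b, ∫ ψ in (-(2 * Real.pi))..(2 * Real.pi), G t α φ θ ψ := fun α φ θ =>
    swap_int (f := fun ψ t => G t α φ θ ψ)
      (hc (by fun_prop) (by fun_prop) (by fun_prop) (by fun_prop) (by fun_prop)) (by linarith) hab
  have c1 : Continuous fun p : ℝ × ℝ × ℝ × ℝ =>
      ∫ ψ in (-(2 * Real.pi))..(2 * Real.pi), G p.1 p.2.1 p.2.2.1 p.2.2.2 ψ :=
    cont_int _ _ (hc (by fun_prop) (by fun_prop) (by fun_prop) (by fun_prop) (by fun_prop))
  simp only [e1]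
  have e2 : ∀ α φ, (∫ θ in (0:ℝ)..Real.pi, ∫ t in a..b,
      ∫ ψ in (-(2 * Real.pi))..(2 * Real.pi), G t α φ θ ψ)
      = ∫ t in a..b, ∫ θ in (0:ℝ)..Real.pi, ∫ ψ in (-(2 * Real.pi))..(2 * Real.pi), G t α φ θ ψ :=
    fun α φ => swap_int (f := fun θ t => ∫ ψ in (-(2 * Real.pi))..(2 * Real.pi), G t α φ θ ψ)
      (c1.comp (f := fun p : ℝ × ℝ => (p.2, α, φ, p.1)) (by fun_prop)) (by linarith) hab
  simp only [e2]
  have c2 : Continuous fun p : ℝ × ℝ × ℝ => ∫ θ in (0:ℝ)..Real.pi,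
      ∫ ψ in (-(2 * Real.pi))..(2 * Real.pi), G p.1 p.2.1 p.2.2 θ ψ :=
    cont_int _ _ (c1.comp (f := fun p : (ℝ × ℝ × ℝ) × ℝ => (p.1.1, p.1.2.1, p.1.2.2, p.2))
      (by fun_prop))
  have e3 : ∀ α, (∫ φ in (0:ℝ)..(2 * Real.pi), ∫ t in a..b, ∫ θ in (0:ℝ)..Real.pi,
      ∫ ψ in (-(2 * Real.pi))..(2 * Real.pi), G t α φ θ ψ)
      = ∫ t in a..b, ∫ φ in (0:ℝ)..(2 * Real.pi), ∫ θ in (0:ℝ)..Real.pi,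
        ∫ ψ in (-(2 * Real.pi))..(2 * Real.pi), G t α φ θ ψ :=
    fun α => swap_int (f := fun φ t => ∫ θ in (0:ℝ)..Real.pi,
        ∫ ψ in (-(2 * Real.pi))..(2 * Real.pi), G t α φ θ ψ)
      (c2.comp (f := fun p : ℝ × ℝ => (p.2, α, p.1)) (by fun_prop)) (by linarith) hab
  simp only [e3]
  have c3 : Continuous fun p : ℝ × ℝ => ∫ φ in (0:ℝ)..(2 * Real.pi), ∫ θ in (0:ℝ)..Real.pi,
      ∫ ψ in (-(2 * Real.pi))..(2 * Real.pi), G p.1 p.2 φ θ ψ :=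
    cont_int _ _ (c2.comp (f := fun p : (ℝ × ℝ) × ℝ => (p.1.1, p.1.2, p.2)) (by fun_prop))
  exact swap_int (f := fun α t => ∫ φ in (0:ℝ)..(2 * Real.pi), ∫ θ in (0:ℝ)..Real.pi,
        ∫ ψ in (-(2 * Real.pi))..(2 * Real.pi), G t α φ θ ψ)
      (c3.comp (f := fun p : ℝ × ℝ => (p.2, p.1)) (by fun_prop)) (by linarith) hab

/-- The periodicity properties of functions on `U(2)`. -/
structure Per (G : ℝ → ℝ → ℝ → ℝ → ℂ) : Prop where
  p1 : ∀ a b c d, G a b c (d + 4 * Real.pi) = G a b c d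
  p2 : ∀ a b c d, G a (b + 2 * Real.pi) c d = G a b c (d + 2 * Real.pi)
  p3 : ∀ a b c d, G (a + Real.pi) b c d = G a b c (d + 2 * Real.pi)

lemma Per.int_shift {G : ℝ → ℝ → ℝ → ℝ → ℂ} (h : Per G) (a b c : ℝ) :
    ∫ ψ in (-(2 * Real.pi))..(2 * Real.pi), G a b c (ψ + 2 * Real.pi)
      = ∫ ψ in (-(2 * Real.pi))..(2 * Real.pi), G a b c ψ := by
  rw [intervalIntegral.integral_comp_add_right (fun ψ => G a b c ψ)]
  have := Function.Periodic.intervalIntegral_add_eq (f := fun ψ => G a b c ψ) (T := 4 * Real.pi)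
    (h.p1 a b c) (-(2 * Real.pi) + 2 * Real.pi) (-(2 * Real.pi))
  convert this using 2 <;> ring

lemma I4_psi {G G' : ℝ → ℝ → ℝ → ℝ → ℂ} (h : Per G) (hG' : C4 G')
    (hd : ∀ a b c d, HasDerivAt (fun x => G a b c x) (G' a b c d) d) : I4 G' = 0 := by
  have : ∀ a b c, ∫ ψ in (-(2 * Real.pi))..(2 * Real.pi), G' a b c ψ = 0 := by
    intro a b c
    rw [intervalIntegral.integral_eq_sub_of_hasDerivAt (fun x _ => hd a b c x)
      (Continuous.intervalIntegrable
        (hG'.comp (by fun_prop) (by fun_prop) (by fun_prop) (by fun_prop)) _ _)]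
    rw [sub_eq_zero, ← h.p1 a b c (-(2 * Real.pi))]
    congr 1; ring
  simp [I4, this]

lemma I4_theta {G G' : ℝ → ℝ → ℝ → ℝ → ℂ} (h0 : ∀ a b d, G a b 0 d = 0)
    (h1 : ∀ a b d, G a b Real.pi d = 0) (hG' : C4 G')
    (hd : ∀ a b c d, HasDerivAt (fun x => G a b x d) (G' a b c d) c) : I4 G' = 0 := by
  have hpi := Real.pi_pos
  have e : ∀ a b d, ∫ θ in (0:ℝ)..Real.pi, G' a b θ d = 0 := by
    intro a b d
    rw [intervalIntegral.integral_eq_sub_of_hasDerivAt (fun x _ => hd a b x d)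
      (Continuous.intervalIntegrable
        (hG'.comp (by fun_prop) (by fun_prop) (by fun_prop) (by fun_prop)) _ _)]
    rw [h0, h1, sub_zero]
  have : ∀ a b, (∫ θ in (0:ℝ)..Real.pi, ∫ ψ in (-(2 * Real.pi))..(2 * Real.pi), G' a b θ ψ) = 0 := by
    intro a b
    rw [swap_int (f := fun θ ψ => G' a b θ ψ)
        (hG'.comp (by fun_prop) (by fun_prop) (by fun_prop) (by fun_prop)) hpi.le (by linarith)]
    simp [e]
  simp [I4, this]

lemma I4_phi {G G' : ℝ → ℝ → ℝ → ℝ → ℂ} (h : Per G) (hG : C4 G) (hG' : C4 G')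
    (hd : ∀ a b c d, HasDerivAt (fun x => G a x c d) (G' a b c d) b) : I4 G' = 0 := by
  have hpi := Real.pi_pos
  have e : ∀ a c, ∫ φ in (0:ℝ)..(2 * Real.pi),
      ∫ ψ in (-(2 * Real.pi))..(2 * Real.pi), G' a φ c ψ = 0 := by
    intro a c
    rw [swap_int (f := fun φ ψ => G' a φ c ψ)
        (hG'.comp (by fun_prop) (by fun_prop) (by fun_prop) (by fun_prop)) (by linarith)
        (by linarith)]
    have : ∀ d, ∫ φ in (0:ℝ)..(2 * Real.pi), G' a φ c d = G a 0 c (d + 2 * Real.pi) - G a 0 c d := by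
      intro d
      rw [intervalIntegral.integral_eq_sub_of_hasDerivAt (fun x _ => hd a x c d)
        (Continuous.intervalIntegrable
          (hG'.comp (by fun_prop) (by fun_prop) (by fun_prop) (by fun_prop)) _ _)]
      rw [← h.p2, zero_add]
    simp only [this]
    rw [intervalIntegral.integral_sub
      (Continuous.intervalIntegrable
        (hG.comp (by fun_prop) (by fun_prop) (by fun_prop) (by fun_prop)) _ _)
      (Continuous.intervalIntegrable
        (hG.comp (by fun_prop) (by fun_prop) (by fun_prop) (by fun_prop)) _ _),
      h.int_shift, sub_self]
  have : ∀ a, (∫ φ in (0:ℝ)..(2 * Real.pi), ∫ θ in (0:ℝ)..Real.pi,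
      ∫ ψ in (-(2 * Real.pi))..(2 * Real.pi), G' a φ θ ψ) = 0 := by
    intro a
    rw [swap_int (f := fun φ θ => ∫ ψ in (-(2 * Real.pi))..(2 * Real.pi), G' a φ θ ψ)
        ((hG'.l1 (-(2 * Real.pi)) (2 * Real.pi)).comp (f := fun p : ℝ × ℝ => (a, p.1, p.2)) (by fun_prop))
        (by linarith) hpi.le]
    simp [e]
  simp [I4, this]

lemma I4_alpha {G G' : ℝ → ℝ → ℝ → ℝ → ℂ} (h : Per G) (hG : C4 G) (hG' : C4 G')
    (hd : ∀ a b c d, HasDerivAt (fun x => G x b c d) (G' a b c d) a) : I4 G' = 0 := by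
  have hpi := Real.pi_pos
  have e : ∀ b c, ∫ α in (0:ℝ)..Real.pi,
      ∫ ψ in (-(2 * Real.pi))..(2 * Real.pi), G' α b c ψ = 0 := by
    intro b c
    rw [swap_int (f := fun φ ψ => G' φ b c ψ)
        (hG'.comp (by fun_prop) (by fun_prop) (by fun_prop) (by fun_prop)) (by linarith)
        (by linarith)]
    have : ∀ d, ∫ φ in (0:ℝ)..Real.pi, G' φ b c d = G 0 b c (d + 2 * Real.pi) - G 0 b c d := by
      intro d
      rw [intervalIntegral.integral_eq_sub_of_hasDerivAt (fun x _ => hd x b c d)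
        (Continuous.intervalIntegrable
          (hG'.comp (by fun_prop) (by fun_prop) (by fun_prop) (by fun_prop)) _ _)]
      rw [← h.p3, zero_add]
    simp only [this]
    rw [intervalIntegral.integral_sub
      (Continuous.intervalIntegrable
        (hG.comp (by fun_prop) (by fun_prop) (by fun_prop) (by fun_prop)) _ _)
      (Continuous.intervalIntegrable
        (hG.comp (by fun_prop) (by fun_prop) (by fun_prop) (by fun_prop)) _ _),
      h.int_shift, sub_self]
  have e2 : ∀ b, (∫ α in (0:ℝ)..Real.pi, ∫ θ in (0:ℝ)..Real.pi,
      ∫ ψ in (-(2 * Real.pi))..(2 * Real.pi), G' α b θ ψ) = 0 := by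
    intro a
    rw [swap_int (f := fun φ θ => ∫ ψ in (-(2 * Real.pi))..(2 * Real.pi), G' φ a θ ψ)
        ((hG'.l1 (-(2 * Real.pi)) (2 * Real.pi)).comp (f := fun p : ℝ × ℝ => (p.1, a, p.2)) (by fun_prop))
        (by linarith) hpi.le]
    simp [e]
  unfold I4
  rw [swap_int (f := fun α φ => ∫ θ in (0:ℝ)..Real.pi,
      ∫ ψ in (-(2 * Real.pi))..(2 * Real.pi), G' α φ θ ψ) (hG'.l2 _ _ _ _) hpi.le (by linarith)]
  simp [e2]

/-- Determinant of `w - z`. -/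
def DD (w z : Fin 2 × Fin 2 → ℂ) : ℂ :=
  (w (0, 0) - z (0, 0)) * (w (1, 1) - z (1, 1)) - (w (0, 1) - z (0, 1)) * (w (1, 0) - z (1, 0))

/-- Differential of `DD` in the first variable. -/
def dDD (w z w' : Fin 2 × Fin 2 → ℂ) : ℂ :=
  w' (0, 0) * (w (1, 1) - z (1, 1)) + (w (0, 0) - z (0, 0)) * w' (1, 1)
    - (w' (0, 1) * (w (1, 0) - z (1, 0)) + (w (0, 1) - z (0, 1)) * w' (1, 0))

/-- Directional derivative of a polynomial, evaluated. -/
def dEv (f : MvPolynomial (Fin 2 × Fin 2) ℂ) (w w' : Fin 2 × Fin 2 → ℂ) : ℂ :=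
  ∑ q, w' q * eval w (pderiv q f)

/-- The integrand `f(W) / det(W-Z)^2`. -/
def gg (f : MvPolynomial (Fin 2 × Fin 2) ℂ) (z w : Fin 2 × Fin 2 → ℂ) : ℂ :=
  eval w f / DD w z ^ 2

/-- The differential of `gg` in `w`. -/
def dgg (f : MvPolynomial (Fin 2 × Fin 2) ℂ) (z w w' : Fin 2 × Fin 2 → ℂ) : ℂ :=
  dEv f w w' / DD w z ^ 2 - 2 * eval w f * dDD w z w' / DD w z ^ 3

lemma hasDerivAt_ev (f : MvPolynomial (Fin 2 × Fin 2) ℂ) {w : ℝ → Fin 2 × Fin 2 → ℂ}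
    {w' : Fin 2 × Fin 2 → ℂ} {t : ℝ} (h : ∀ q, HasDerivAt (fun x => w x q) (w' q) t) :
    HasDerivAt (fun x => eval (w x) f) (dEv f (w t) w') t := by
  induction f using MvPolynomial.induction_on with
  | C a => simpa [dEv] using hasDerivAt_const t a
  | add p q hp hq =>
    have := hp.add hq
    simpa [dEv, mul_add, Finset.sum_add_distrib, Pi.add_def] using this
  | mul_X p q hp =>
    have := hp.mul (h q)
    have e0 : (fun x => eval (w x) (p * X q)) = fun x => eval (w x) p * w x q := by
      funext x; simp
    rw [e0]
    refine this.congr_deriv (Eq.symm ?_)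
    simp only [dEv, Derivation.leibniz, pderiv_X, smul_eq_mul, map_add, map_mul, eval_X, mul_add,
      Finset.sum_add_distrib]
    have e : ∑ x, w' x * (eval (w t) p * eval (w t) (Pi.single (M := fun _ => MvPolynomial (Fin 2 × Fin 2) ℂ) x 1 q)) = eval (w t) p * w' q := by
      rw [Finset.sum_eq_single q]
      · simp; ring
      · intro b _ hb
        simp [hb.symm]
      · simp
    rw [e, Finset.sum_mul, add_comm]
    congr 1
    apply Finset.sum_congr rfl
    intro x _
    ring

lemma hasDerivAt_gg (f : MvPolynomial (Fin 2 × Fin 2) ℂ) (z : Fin 2 × Fin 2 → ℂ)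
    {w : ℝ → Fin 2 × Fin 2 → ℂ}
    {w' : Fin 2 × Fin 2 → ℂ} {t : ℝ} (h : ∀ q, HasDerivAt (fun x => w x q) (w' q) t)
    (hD : DD (w t) z ≠ 0) :
    HasDerivAt (fun x => gg f z (w x)) (dgg f z (w t) w') t := by
  have h1 : HasDerivAt (fun x => DD (w x) z) (dDD (w t) z w') t :=
    (((h (0,0)).sub_const _).mul ((h (1,1)).sub_const _)).sub
      (((h (0,1)).sub_const _).mul ((h (1,0)).sub_const _))
  have h2 := (hasDerivAt_ev f h).div (h1.pow 2) (pow_ne_zero 2 hD)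
  refine h2.congr_deriv ?_
  simp only [dgg, Pi.pow_apply]
  field_simp
  ring

lemma hasDerivAt_gg_z (f : MvPolynomial (Fin 2 × Fin 2) ℂ) (w z : Fin 2 × Fin 2 → ℂ) (t : ℝ)
    (hD : DD w (fun q => (Real.sin t : ℂ) * z q) ≠ 0) :
    HasDerivAt (fun x : ℝ => gg f (fun q => (Real.sin x : ℂ) * z q) w)
      ((Real.cos t : ℂ) * (dEv f w z / DD w (fun q => (Real.sin t : ℂ) * z q) ^ 2
        - dgg f (fun q => (Real.sin t : ℂ) * z q) w z)) t := by
  have hs : HasDerivAt (fun x : ℝ => (Real.sin x : ℂ)) (Real.cos t : ℂ) t :=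
    (Real.hasDerivAt_sin t).ofReal_comp
  have hq : ∀ q, HasDerivAt (fun x : ℝ => w q - (Real.sin x : ℂ) * z q)
      (-((Real.cos t : ℂ) * z q)) t := fun q => (hs.mul_const (z q)).const_sub (w q)
  have h1 : HasDerivAt (fun x : ℝ => DD w (fun q => (Real.sin x : ℂ) * z q)) _ t :=
    ((hq (0,0)).mul (hq (1,1))).sub ((hq (0,1)).mul (hq (1,0)))
  have h2 := (hasDerivAt_const t (eval w f)).div (h1.pow 2) (pow_ne_zero 2 hD)
  refine h2.congr_deriv ?_
  simp only [dgg, dDD, Pi.pow_apply]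
  field_simp
  ring

lemma dgg_lin (f : MvPolynomial (Fin 2 × Fin 2) ℂ) (z w w1 w2 w3 w4 w0 : Fin 2 × Fin 2 → ℂ)
    (p1 p2 p3 p4 k : ℂ)
    (h : ∀ q, p1 * w1 q + p2 * w2 q + p3 * w3 q + p4 * w4 q = k * w0 q) :
    p1 * dgg f z w w1 + p2 * dgg f z w w2 + p3 * dgg f z w w3 + p4 * dgg f z w w4
      = k * dgg f z w w0 := by
  have e1 : p1 * dEv f w w1 + p2 * dEv f w w2 + p3 * dEv f w w3 + p4 * dEv f w w4
      = k * dEv f w w0 := by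
    simp only [dEv, Finset.mul_sum, ← Finset.sum_add_distrib]
    apply Finset.sum_congr rfl
    intro q _
    linear_combination (eval w (pderiv q f)) * h q
  have e2 : p1 * dDD w z w1 + p2 * dDD w z w2 + p3 * dDD w z w3 + p4 * dDD w z w4
      = k * dDD w z w0 := by
    simp only [dDD]
    linear_combination (w (1, 1) - z (1, 1)) * h (0,0) + (w (0, 0) - z (0, 0)) * h (1,1)
      - (w (1, 0) - z (1, 0)) * h (0,1) - (w (0, 1) - z (0, 1)) * h (1,0)
  simp only [dgg]
  linear_combination (1 / DD w z ^ 2) * e1 - 2 * eval w f / DD w z ^ 3 * e2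

/-- Building blocks of the parametrization. -/
def xE (a : ℝ) : ℂ := Complex.exp (Complex.I * a)
/-- `e^{i(φ+ψ)/2}` -/
def xu (b d : ℝ) : ℂ := Complex.exp (Complex.I * (b + d) / 2)
/-- `e^{-i(φ+ψ)/2}` -/
def xu' (b d : ℝ) : ℂ := Complex.exp (-Complex.I * (b + d) / 2)
/-- `e^{i(φ-ψ)/2}` -/
def xv (b d : ℝ) : ℂ := Complex.exp (Complex.I * (b - d) / 2)
/-- `e^{i(ψ-φ)/2}` -/
def xv' (b d : ℝ) : ℂ := Complex.exp (Complex.I * (d - b) / 2)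
/-- `cos(θ/2)` -/
def xc (c : ℝ) : ℂ := (Real.cos (c / 2) : ℂ)
/-- `sin(θ/2)` -/
def xs (c : ℝ) : ℂ := (Real.sin (c / 2) : ℂ)

lemma xuu (b d : ℝ) : xu b d * xu' b d = 1 := by
  rw [xu, xu', ← Complex.exp_add, ← Complex.exp_zero]; congr 1; ring
lemma xvv (b d : ℝ) : xv b d * xv' b d = 1 := by
  rw [xv, xv', ← Complex.exp_add, ← Complex.exp_zero]; congr 1; ring
lemma xE_ne (a : ℝ) : xE a ≠ 0 := Complex.exp_ne_zero _
lemma xcs (c : ℝ) : xc c ^ 2 + xs c ^ 2 = 1 := by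
  unfold xc xs; norm_cast; exact Real.cos_sq_add_sin_sq _
lemma xsin (c : ℝ) : (Real.sin c : ℂ) = 2 * xs c * xc c := by
  unfold xc xs; norm_cast; rw [← Real.sin_two_mul]; congr 1; ring

lemma exp_shift (x y : ℂ) (h : x = y + Real.pi * Complex.I) : Complex.exp x = -Complex.exp y := by
  rw [h, Complex.exp_add, Complex.exp_pi_mul_I]; ring
lemma exp_shift' (x y : ℂ) (h : x = y - Real.pi * Complex.I) : Complex.exp x = -Complex.exp y := by
  rw [exp_shift y x (by rw [h]; ring), neg_neg]

lemma xE_p (a : ℝ) : xE (a + Real.pi) = -xE a := by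
  apply exp_shift; push_cast; ring
lemma xu_p (b d : ℝ) : xu b (d + 2 * Real.pi) = -xu b d := by
  apply exp_shift; push_cast; ring
lemma xu_p2 (b d : ℝ) : xu (b + 2 * Real.pi) d = -xu b d := by
  apply exp_shift; push_cast; ring
lemma xu'_p (b d : ℝ) : xu' b (d + 2 * Real.pi) = -xu' b d := by
  apply exp_shift'; push_cast; ring
lemma xu'_p2 (b d : ℝ) : xu' (b + 2 * Real.pi) d = -xu' b d := by
  apply exp_shift'; push_cast; ring
lemma xv_p (b d : ℝ) : xv b (d + 2 * Real.pi) = -xv b d := by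
  apply exp_shift'; push_cast; ring
lemma xv_p2 (b d : ℝ) : xv (b + 2 * Real.pi) d = -xv b d := by
  apply exp_shift; push_cast; ring
lemma xv'_p (b d : ℝ) : xv' b (d + 2 * Real.pi) = -xv' b d := by
  apply exp_shift; push_cast; ring
lemma xv'_p2 (b d : ℝ) : xv' (b + 2 * Real.pi) d = -xv' b d := by
  apply exp_shift'; push_cast; ring

lemma hasDerivAt_cexp_lin (k l : ℂ) (t : ℝ) {g : ℝ → ℂ}
    (hg : ∀ x : ℝ, g x = Complex.exp (k * x + l)) :
    HasDerivAt g (k * g t) t := by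
  have h0 : HasDerivAt (fun x : ℝ => (x : ℂ)) 1 t := Complex.ofRealCLM.hasDerivAt
  have h1 : HasDerivAt (fun x : ℝ => k * (x : ℂ) + l) (k * 1) t := (h0.const_mul k).add_const l
  have h2 := h1.cexp
  rw [funext hg]
  refine h2.congr_deriv ?_
  ring

lemma xE_d (a : ℝ) : HasDerivAt xE (Complex.I * xE a) a :=
  hasDerivAt_cexp_lin Complex.I 0 a fun x => by unfold xE; congr 1; ring
lemma xu_db (b d : ℝ) : HasDerivAt (fun x => xu x d) (Complex.I / 2 * xu b d) b :=
  hasDerivAt_cexp_lin _ (Complex.I * d / 2) b fun x => by unfold xu; congr 1; ring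
lemma xu_dd (b d : ℝ) : HasDerivAt (fun x => xu b x) (Complex.I / 2 * xu b d) d :=
  hasDerivAt_cexp_lin _ (Complex.I * b / 2) d fun x => by unfold xu; congr 1; ring
lemma xu'_db (b d : ℝ) : HasDerivAt (fun x => xu' x d) (-Complex.I / 2 * xu' b d) b :=
  hasDerivAt_cexp_lin _ (-Complex.I * d / 2) b fun x => by unfold xu'; congr 1; ring
lemma xu'_dd (b d : ℝ) : HasDerivAt (fun x => xu' b x) (-Complex.I / 2 * xu' b d) d :=
  hasDerivAt_cexp_lin _ (-Complex.I * b / 2) d fun x => by unfold xu'; congr 1; ring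
lemma xv_db (b d : ℝ) : HasDerivAt (fun x => xv x d) (Complex.I / 2 * xv b d) b :=
  hasDerivAt_cexp_lin _ (-Complex.I * d / 2) b fun x => by unfold xv; congr 1; ring
lemma xv_dd (b d : ℝ) : HasDerivAt (fun x => xv b x) (-Complex.I / 2 * xv b d) d :=
  hasDerivAt_cexp_lin _ (Complex.I * b / 2) d fun x => by unfold xv; congr 1; ring
lemma xv'_db (b d : ℝ) : HasDerivAt (fun x => xv' x d) (-Complex.I / 2 * xv' b d) b :=
  hasDerivAt_cexp_lin _ (Complex.I * d / 2) b fun x => by unfold xv'; congr 1; ring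
lemma xv'_dd (b d : ℝ) : HasDerivAt (fun x => xv' b x) (Complex.I / 2 * xv' b d) d :=
  hasDerivAt_cexp_lin _ (-Complex.I * b / 2) d fun x => by unfold xv'; congr 1; ring

lemma xc_d (c : ℝ) : HasDerivAt xc (-(1 / 2) * xs c) c := by
  have h : HasDerivAt (fun x : ℝ => Real.cos (x / 2)) (-Real.sin (c / 2) * (1 / 2)) c :=
    ((hasDerivAt_id c).div_const 2).cos
  refine h.ofReal_comp.congr_deriv ?_
  unfold xs; push_cast; ring
lemma xs_d (c : ℝ) : HasDerivAt xs (1 / 2 * xc c) c := by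
  have h : HasDerivAt (fun x : ℝ => Real.sin (x / 2)) (Real.cos (c / 2) * (1 / 2)) c :=
    ((hasDerivAt_id c).div_const 2).sin
  refine h.ofReal_comp.congr_deriv ?_
  unfold xc; push_cast; ring

@[fun_prop] lemma xE_c : Continuous xE := by unfold xE; fun_prop
@[fun_prop] lemma xc_c : Continuous xc := by unfold xc; fun_prop
@[fun_prop] lemma xs_c : Continuous xs := by unfold xs; fun_prop
@[fun_prop] lemma xu_c {X : Type*} [TopologicalSpace X] {b d : X → ℝ} (hb : Continuous b)
    (hd : Continuous d) : Continuous fun x => xu (b x) (d x) := by unfold xu; fun_prop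
@[fun_prop] lemma xu'_c {X : Type*} [TopologicalSpace X] {b d : X → ℝ} (hb : Continuous b)
    (hd : Continuous d) : Continuous fun x => xu' (b x) (d x) := by unfold xu'; fun_prop
@[fun_prop] lemma xv_c {X : Type*} [TopologicalSpace X] {b d : X → ℝ} (hb : Continuous b)
    (hd : Continuous d) : Continuous fun x => xv (b x) (d x) := by unfold xv; fun_prop
@[fun_prop] lemma xv'_c {X : Type*} [TopologicalSpace X] {b d : X → ℝ} (hb : Continuous b)
    (hd : Continuous d) : Continuous fun x => xv' (b x) (d x) := by unfold xv'; fun_prop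

/-- A function on `Fin 2 × Fin 2` from its four values. -/
def mk4 (x y z t : ℂ) : Fin 2 × Fin 2 → ℂ := fun q => !![x, y; z, t] q.1 q.2

@[simp] lemma mk4_00 (x y z t : ℂ) : mk4 x y z t (0, 0) = x := rfl
@[simp] lemma mk4_01 (x y z t : ℂ) : mk4 x y z t (0, 1) = y := rfl
@[simp] lemma mk4_10 (x y z t : ℂ) : mk4 x y z t (1, 0) = z := rfl
@[simp] lemma mk4_11 (x y z t : ℂ) : mk4 x y z t (1, 1) = t := rfl

lemma forall_q {p : Fin 2 × Fin 2 → Prop} (h1 : p (0, 0)) (h2 : p (0, 1)) (h3 : p (1, 0))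
    (h4 : p (1, 1)) : ∀ q, p q := by
  rintro ⟨i, j⟩
  fin_cases i <;> fin_cases j <;> assumption

/-- The parametrization in terms of the building blocks. -/
def ww (R a b c d : ℝ) : Fin 2 × Fin 2 → ℂ :=
  mk4 (R * xE a * (xu b d * xc c)) (R * xE a * (Complex.I * xv b d * xs c))
    (R * xE a * (Complex.I * xv' b d * xs c)) (R * xE a * (xu' b d * xc c))

lemma ww_eq (R a b c d : ℝ) : (fun q : Fin 2 × Fin 2 => Wparam R a b c d q.1 q.2) = ww R a b c d := by
  funext q
  revert q
  apply forall_q <;> simp [Wparam, ww, xE, xu, xu', xv, xv', xc, xs]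

lemma neg_mk4 (x y z t : ℂ) : -mk4 x y z t = mk4 (-x) (-y) (-z) (-t) := by
  funext q; revert q; apply forall_q <;> simp

lemma ww_pa (R a b c d : ℝ) : ww R (a + Real.pi) b c d = -ww R a b c d := by
  simp only [ww, neg_mk4, xE_p]; congr 1 <;> ring
lemma ww_pb (R a b c d : ℝ) : ww R a (b + 2 * Real.pi) c d = -ww R a b c d := by
  simp only [ww, neg_mk4, xu_p2, xu'_p2, xv_p2, xv'_p2]; congr 1 <;> ring
lemma ww_pd (R a b c d : ℝ) : ww R a b c (d + 2 * Real.pi) = -ww R a b c d := by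
  simp only [ww, neg_mk4, xu_p, xu'_p, xv_p, xv'_p]; congr 1 <;> ring

lemma Per.mk' {G : ℝ → ℝ → ℝ → ℝ → ℂ} (T : ℝ → ℝ → ℝ → ℝ → ℂ)
    (h0 : ∀ a b c d, T a b c (d + 2 * Real.pi) = G a b c d)
    (h1 : ∀ a b c d, G a b c (d + 2 * Real.pi) = T a b c d)
    (h2 : ∀ a b c d, G a (b + 2 * Real.pi) c d = T a b c d)
    (h3 : ∀ a b c d, G (a + Real.pi) b c d = T a b c d) : Per G where
  p1 a b c d := by
    rw [← h0 a b c d, ← h1 a b c (d + 2 * Real.pi)]; congr 1; ring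
  p2 a b c d := by rw [h1, h2]
  p3 a b c d := by rw [h1, h3]

/-- `∂w/∂α` -/
def wa (R a b c d : ℝ) : Fin 2 × Fin 2 → ℂ := fun q => Complex.I * ww R a b c d q
/-- `∂w/∂φ` -/
def wb (R a b c d : ℝ) : Fin 2 × Fin 2 → ℂ :=
  mk4 (R * xE a * (Complex.I / 2 * xu b d * xc c))
    (R * xE a * (Complex.I * (Complex.I / 2 * xv b d) * xs c))
    (R * xE a * (Complex.I * (-Complex.I / 2 * xv' b d) * xs c))
    (R * xE a * (-Complex.I / 2 * xu' b d * xc c))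
/-- `∂w/∂ψ` -/
def wd (R a b c d : ℝ) : Fin 2 × Fin 2 → ℂ :=
  mk4 (R * xE a * (Complex.I / 2 * xu b d * xc c))
    (R * xE a * (Complex.I * (-Complex.I / 2 * xv b d) * xs c))
    (R * xE a * (Complex.I * (Complex.I / 2 * xv' b d) * xs c))
    (R * xE a * (-Complex.I / 2 * xu' b d * xc c))
/-- `∂w/∂θ` -/
def wc (R a b c d : ℝ) : Fin 2 × Fin 2 → ℂ :=
  mk4 (R * xE a * (xu b d * (-(1 / 2) * xs c)))
    (R * xE a * (Complex.I * xv b d * (1 / 2 * xc c)))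
    (R * xE a * (Complex.I * xv' b d * (1 / 2 * xc c)))
    (R * xE a * (xu' b d * (-(1 / 2) * xs c)))

lemma ww_da (R a b c d : ℝ) (q) : HasDerivAt (fun x => ww R x b c d q) (wa R a b c d q) a := by
  revert q
  apply forall_q <;> simp only [ww, wa, mk4_00, mk4_01, mk4_10, mk4_11]
  all_goals exact (((xE_d a).const_mul (R : ℂ)).mul_const _).congr_deriv (by ring)
lemma ww_db (R a b c d : ℝ) (q) : HasDerivAt (fun x => ww R a x c d q) (wb R a b c d q) b := by
  revert q
  apply forall_q <;> simp only [ww, wb, mk4_00, mk4_01, mk4_10, mk4_11]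
  · exact ((xu_db b d).mul_const _).const_mul _
  · exact (((xv_db b d).const_mul _).mul_const _).const_mul _
  · exact (((xv'_db b d).const_mul _).mul_const _).const_mul _
  · exact ((xu'_db b d).mul_const _).const_mul _
lemma ww_dd (R a b c d : ℝ) (q) : HasDerivAt (fun x => ww R a b c x q) (wd R a b c d q) d := by
  revert q
  apply forall_q <;> simp only [ww, wd, mk4_00, mk4_01, mk4_10, mk4_11]
  · exact ((xu_dd b d).mul_const _).const_mul _
  · exact (((xv_dd b d).const_mul _).mul_const _).const_mul _
  · exact (((xv'_dd b d).const_mul _).mul_const _).const_mul _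
  · exact ((xu'_dd b d).mul_const _).const_mul _
lemma ww_dc (R a b c d : ℝ) (q) : HasDerivAt (fun x => ww R a b x d q) (wc R a b c d q) c := by
  revert q
  apply forall_q <;> simp only [ww, wc, mk4_00, mk4_01, mk4_10, mk4_11]
  · exact ((xc_d c).const_mul _).const_mul _
  · exact ((xs_d c).const_mul _).const_mul _
  · exact ((xs_d c).const_mul _).const_mul _
  · exact ((xc_d c).const_mul _).const_mul _

lemma C4.add {G H : ℝ → ℝ → ℝ → ℝ → ℂ} (hG : C4 G) (hH : C4 H) :
    C4 (fun a b c d => G a b c d + H a b c d) := Continuous.add hG hH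

section cont
variable {X : Type*} [TopologicalSpace X]

lemma mk4_c {x y z t : X → ℂ} (hx : Continuous x) (hy : Continuous y) (hz : Continuous z)
    (ht : Continuous t) : Continuous fun p => mk4 (x p) (y p) (z p) (t p) := by
  apply continuous_pi
  apply forall_q <;> simpa

lemma ev_c (f : MvPolynomial (Fin 2 × Fin 2) ℂ) {w : X → Fin 2 × Fin 2 → ℂ} (hw : Continuous w) :
    Continuous fun x => eval (w x) f :=
  (MvPolynomial.continuous_eval f).comp hw

lemma dEv_c (f : MvPolynomial (Fin 2 × Fin 2) ℂ) {w w' : X → Fin 2 × Fin 2 → ℂ}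
    (hw : Continuous w) (hw' : Continuous w') : Continuous fun x => dEv f (w x) (w' x) := by
  unfold dEv
  refine continuous_finsetSum _ fun q _ => ?_
  exact ((continuous_apply q).comp hw').mul (ev_c _ hw)

lemma DD_c {w z : X → Fin 2 × Fin 2 → ℂ}
    (hw : Continuous w) (hz : Continuous z) : Continuous fun x => DD (w x) (z x) := by
  unfold DD; fun_prop

lemma dDD_c {w z w' : X → Fin 2 × Fin 2 → ℂ}
    (hw : Continuous w) (hz : Continuous z) (hw' : Continuous w') :
    Continuous fun x => dDD (w x) (z x) (w' x) := by
  unfold dDD; fun_prop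

lemma gg_c (f : MvPolynomial (Fin 2 × Fin 2) ℂ) {w z : X → Fin 2 × Fin 2 → ℂ}
    (hw : Continuous w) (hz : Continuous z) (h : ∀ x, DD (w x) (z x) ≠ 0) :
    Continuous fun x => gg f (z x) (w x) :=
  (ev_c f hw).div ((DD_c hw hz).pow 2) fun x => pow_ne_zero 2 (h x)

lemma dgg_c (f : MvPolynomial (Fin 2 × Fin 2) ℂ) {w z w' : X → Fin 2 × Fin 2 → ℂ}
    (hw : Continuous w) (hz : Continuous z) (hw' : Continuous w') (h : ∀ x, DD (w x) (z x) ≠ 0) :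
    Continuous fun x => dgg f (z x) (w x) (w' x) :=
  ((dEv_c f hw hw').div ((DD_c hw hz).pow 2) fun x => pow_ne_zero 2 (h x)).sub
    (((continuous_const.mul (ev_c f hw)).mul (dDD_c hw hz hw')).div ((DD_c hw hz).pow 3)
      fun x => pow_ne_zero 3 (h x))

variable {a b c d : X → ℝ} (R : ℝ)

lemma ww_c (ha : Continuous a) (hb : Continuous b)
    (hc : Continuous c) (hd : Continuous d) : Continuous fun x => ww R (a x) (b x) (c x) (d x) := by
  unfold ww; apply mk4_c <;> fun_prop
lemma wa_c (ha : Continuous a) (hb : Continuous b)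
    (hc : Continuous c) (hd : Continuous d) : Continuous fun x => wa R (a x) (b x) (c x) (d x) := by
  have := ww_c R ha hb hc hd
  unfold wa; fun_prop
lemma wb_c (ha : Continuous a) (hb : Continuous b)
    (hc : Continuous c) (hd : Continuous d) : Continuous fun x => wb R (a x) (b x) (c x) (d x) := by
  unfold wb; apply mk4_c <;> fun_prop
lemma wc_c (ha : Continuous a) (hb : Continuous b)
    (hc : Continuous c) (hd : Continuous d) : Continuous fun x => wc R (a x) (b x) (c x) (d x) := by
  unfold wc; apply mk4_c <;> fun_prop
lemma wd_c (ha : Continuous a) (hb : Continuous b)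
    (hc : Continuous c) (hd : Continuous d) : Continuous fun x => wd R (a x) (b x) (c x) (d x) := by
  unfold wd; apply mk4_c <;> fun_prop
end cont

/-- `m₀` -/
def m0 (z : Fin 2 × Fin 2 → ℂ) (a b d : ℝ) : ℂ :=
  xE a ^ 3 * (z (0, 0) * xu' b d + z (1, 1) * xu b d)
/-- `m₀` with signs -/
def n0 (z : Fin 2 × Fin 2 → ℂ) (a b d : ℝ) : ℂ :=
  xE a ^ 3 * (z (0, 0) * xu' b d - z (1, 1) * xu b d)
/-- `m₁` -/
def m1 (z : Fin 2 × Fin 2 → ℂ) (a b d : ℝ) : ℂ :=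
  -Complex.I * xE a ^ 3 * (z (0, 1) * xv' b d + z (1, 0) * xv b d)
/-- `m₁` with signs -/
def n1 (z : Fin 2 × Fin 2 → ℂ) (a b d : ℝ) : ℂ :=
  -Complex.I * xE a ^ 3 * (z (0, 1) * xv' b d - z (1, 0) * xv b d)

/-- The components of the vector field. -/
def Pa (z : Fin 2 × Fin 2 → ℂ) (a b c d : ℝ) : ℂ :=
  -Complex.I * (xc c ^ 2 * xs c * m0 z a b d + xs c ^ 2 * xc c * m1 z a b d)
/-- θ component -/
def Pc (z : Fin 2 × Fin 2 → ℂ) (a b c d : ℝ) : ℂ :=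
  2 * (-(xs c ^ 2 * xc c * m0 z a b d) + xs c * xc c ^ 2 * m1 z a b d)
/-- φ component -/
def Pb (z : Fin 2 × Fin 2 → ℂ) (a b c d : ℝ) : ℂ :=
  -Complex.I * (xs c * n0 z a b d + xc c * n1 z a b d)
/-- ψ component -/
def Pd (z : Fin 2 × Fin 2 → ℂ) (a b c d : ℝ) : ℂ :=
  -Complex.I * (xs c * n0 z a b d - xc c * n1 z a b d)

lemma Pa_d (z) (a b c d : ℝ) :
    HasDerivAt (fun x => Pa z x b c d) (3 * Complex.I * Pa z a b c d) a := by
  unfold Pa m0 m1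
  have h := (xE_d a).pow 3
  refine ((((h.mul_const _).const_mul _).add (((h.const_mul _).mul_const _).const_mul _)).const_mul
    _).congr_deriv ?_
  push_cast
  ring

lemma Pc_d (z) (a b c d : ℝ) :
    HasDerivAt (fun x => Pc z a b x d) ((-2 * xs c * xc c ^ 2 + xs c ^ 3) * m0 z a b d
      + (xc c ^ 3 - 2 * xs c ^ 2 * xc c) * m1 z a b d) c := by
  unfold Pc
  refine ((((((xs_d c).pow 2).mul (xc_d c)).mul_const _).neg.add
    (((xs_d c).mul ((xc_d c).pow 2)).mul_const _)).const_mul _).congr_deriv ?_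
  simp only [Pi.pow_apply]
  push_cast
  ring

lemma Pb_d (z) (a b c d : ℝ) :
    HasDerivAt (fun x => Pb z a x c d) (-(1 / 2) * (xs c * m0 z a b d + xc c * m1 z a b d)) b := by
  unfold Pb n0 n1 m0 m1
  refine (((((((xu'_db b d).const_mul _).sub ((xu_db b d).const_mul _)).const_mul _).const_mul _).add
    (((((xv'_db b d).const_mul _).sub ((xv_db b d).const_mul _)).const_mul _).const_mul _)).const_mul
      _).congr_deriv ?_
  ring_nf
  simp only [Complex.I_sq, Complex.I_pow_three]
  ring

lemma Pd_d (z) (a b c d : ℝ) :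
    HasDerivAt (fun x => Pd z a b c x) (-(1 / 2) * (xs c * m0 z a b d + xc c * m1 z a b d)) d := by
  unfold Pd n0 n1 m0 m1
  refine (((((((xu'_dd b d).const_mul _).sub ((xu_dd b d).const_mul _)).const_mul _).const_mul _).sub
    (((((xv'_dd b d).const_mul _).sub ((xv_dd b d).const_mul _)).const_mul _).const_mul _)).const_mul
      _).congr_deriv ?_
  ring_nf
  simp only [Complex.I_sq, Complex.I_pow_three]
  ring

lemma P_div (z) (a b c d : ℝ) :
    3 * Complex.I * Pa z a b c d + -(1 / 2) * (xs c * m0 z a b d + xc c * m1 z a b d)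
     + ((-2 * xs c * xc c ^ 2 + xs c ^ 3) * m0 z a b d
      + (xc c ^ 3 - 2 * xs c ^ 2 * xc c) * m1 z a b d)
     + -(1 / 2) * (xs c * m0 z a b d + xc c * m1 z a b d) = 0 := by
  unfold Pa
  linear_combination (xs c * m0 z a b d + xc c * m1 z a b d) * xcs c
    - 3 * (xc c ^ 2 * xs c * m0 z a b d + xs c ^ 2 * xc c * m1 z a b d) * Complex.I_sq

lemma P_w (R : ℝ) (z) (a b c d : ℝ) (q) :
    Pa z a b c d * wa R a b c d q + Pb z a b c d * wb R a b c d q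
      + Pc z a b c d * wc R a b c d q + Pd z a b c d * wd R a b c d q
      = (R * (xE a ^ 4 * (2 * xs c * xc c))) * z q := by
  have hI := Complex.I_sq
  have hu := xuu b d
  have hv := xvv b d
  have hc := xcs c
  revert q
  simp only [Pa, Pb, Pc, Pd, wa, wb, wc, wd, m0, m1, n0, n1, ww]
  generalize xu b d = u at *
  generalize xu' b d = u' at *
  generalize xv b d = v at *
  generalize xv' b d = v' at *
  generalize xc c = C at *
  generalize xs c = S at *
  generalize xE a = E at *
  generalize Complex.I = I at *
  have hC : C ^ 2 = 1 - S ^ 2 := by linear_combination hc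
  apply forall_q <;> simp only [mk4_00, mk4_01, mk4_10, mk4_11]
  all_goals grind

lemma P_ca (z) {X : Type*} [TopologicalSpace X] {a b c d : X → ℝ} (ha : Continuous a)
    (hb : Continuous b) (hc : Continuous c) (hd : Continuous d) :
    Continuous (fun x => Pa z (a x) (b x) (c x) (d x)) ∧
    Continuous (fun x => Pb z (a x) (b x) (c x) (d x)) ∧
    Continuous (fun x => Pc z (a x) (b x) (c x) (d x)) ∧
    Continuous (fun x => Pd z (a x) (b x) (c x) (d x)) ∧
    Continuous (fun x => m0 z (a x) (b x) (d x)) ∧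
    Continuous (fun x => m1 z (a x) (b x) (d x)) := by
  unfold Pa Pb Pc Pd m0 m1 n0 n1
  refine ⟨?_, ?_, ?_, ?_, ?_, ?_⟩ <;> fun_prop

lemma P_per (z) (P : ℝ → ℝ → ℝ → ℝ → ℂ) (hP : P = Pa z ∨ P = Pb z ∨ P = Pd z)
    (R : ℝ) (g : (Fin 2 × Fin 2 → ℂ) → ℂ) :
    Per (fun a b c d => P a b c d * g (ww R a b c d)) := by
  apply Per.mk' (fun a b c d => - P a b c d * g (-ww R a b c d))
  all_goals
    intro a b c d
    simp only [ww_pa, ww_pb, ww_pd, neg_neg]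
    rcases hP with rfl | rfl | rfl <;>
      simp only [Pa, Pb, Pd, m0, m1, n0, n1, xE_p, xu_p, xu'_p, xv_p, xv'_p,
        xu_p2, xu'_p2, xv_p2, xv'_p2] <;> ring

lemma stokes (R : ℝ) (f : MvPolynomial (Fin 2 × Fin 2) ℂ) (z z' : Fin 2 × Fin 2 → ℂ)
    (h : ∀ a b c d, DD (ww R a b c d) z' ≠ 0) :
    I4 (fun a b c d => (R * (xE a ^ 4 * (2 * xs c * xc c))) * dgg f z' (ww R a b c d) z) = 0 := by
  have cg : C4 fun a b c d => gg f z' (ww R a b c d) :=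
    gg_c f (ww_c R (by fun_prop) (by fun_prop) (by fun_prop) (by fun_prop)) continuous_const
      (fun x => h _ _ _ _)
  have cga : C4 fun a b c d => dgg f z' (ww R a b c d) (wa R a b c d) :=
    dgg_c f (ww_c R (by fun_prop) (by fun_prop) (by fun_prop) (by fun_prop)) continuous_const
      (wa_c R (by fun_prop) (by fun_prop) (by fun_prop) (by fun_prop)) (fun x => h _ _ _ _)
  have cgb : C4 fun a b c d => dgg f z' (ww R a b c d) (wb R a b c d) :=
    dgg_c f (ww_c R (by fun_prop) (by fun_prop) (by fun_prop) (by fun_prop)) continuous_const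
      (wb_c R (by fun_prop) (by fun_prop) (by fun_prop) (by fun_prop)) (fun x => h _ _ _ _)
  have cgc : C4 fun a b c d => dgg f z' (ww R a b c d) (wc R a b c d) :=
    dgg_c f (ww_c R (by fun_prop) (by fun_prop) (by fun_prop) (by fun_prop)) continuous_const
      (wc_c R (by fun_prop) (by fun_prop) (by fun_prop) (by fun_prop)) (fun x => h _ _ _ _)
  have cgd : C4 fun a b c d => dgg f z' (ww R a b c d) (wd R a b c d) :=
    dgg_c f (ww_c R (by fun_prop) (by fun_prop) (by fun_prop) (by fun_prop)) continuous_const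
      (wd_c R (by fun_prop) (by fun_prop) (by fun_prop) (by fun_prop)) (fun x => h _ _ _ _)
  obtain ⟨c1, c2, c3, c4, c5, c6⟩ := P_ca z (X := ℝ × ℝ × ℝ × ℝ) (a := fun p => p.1)
    (b := fun p => p.2.1) (c := fun p => p.2.2.1) (d := fun p => p.2.2.2)
    (by fun_prop) (by fun_prop) (by fun_prop) (by fun_prop)
  unfold C4 at cg cga cgb cgc cgd
  have ka : C4 fun a b c d => 3 * Complex.I * Pa z a b c d * gg f z' (ww R a b c d)
      + Pa z a b c d * dgg f z' (ww R a b c d) (wa R a b c d) := by unfold C4; fun_prop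
  have kb : C4 fun a b c d => -(1 / 2) * (xs c * m0 z a b d + xc c * m1 z a b d)
        * gg f z' (ww R a b c d)
      + Pb z a b c d * dgg f z' (ww R a b c d) (wb R a b c d) := by unfold C4; fun_prop
  have kc : C4 fun a b c d => ((-2 * xs c * xc c ^ 2 + xs c ^ 3) * m0 z a b d
      + (xc c ^ 3 - 2 * xs c ^ 2 * xc c) * m1 z a b d) * gg f z' (ww R a b c d)
      + Pc z a b c d * dgg f z' (ww R a b c d) (wc R a b c d) := by unfold C4; fun_prop
  have kd : C4 fun a b c d => -(1 / 2) * (xs c * m0 z a b d + xc c * m1 z a b d)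
        * gg f z' (ww R a b c d)
      + Pd z a b c d * dgg f z' (ww R a b c d) (wd R a b c d) := by unfold C4; fun_prop
  have ia := I4_alpha (P_per z (Pa z) (by simp) R (gg f z')) (c1.mul cg) ka
    (fun a b c d => (Pa_d z a b c d).mul (hasDerivAt_gg f z' (ww_da R a b c d) (h a b c d)))
  have ib := I4_phi (P_per z (Pb z) (by simp) R (gg f z')) (c2.mul cg) kb
    (fun a b c d => (Pb_d z a b c d).mul (hasDerivAt_gg f z' (ww_db R a b c d) (h a b c d)))
  have ic := I4_theta (G := fun a b c d => Pc z a b c d * gg f z' (ww R a b c d))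
    (by intro a b d; simp [Pc, xs]) (by intro a b d; simp [Pc, xc]) kc
    (fun a b c d => (Pc_d z a b c d).mul (hasDerivAt_gg f z' (ww_dc R a b c d) (h a b c d)))
  have id' := I4_psi (P_per z (Pd z) (by simp) R (gg f z')) kd
    (fun a b c d => (Pd_d z a b c d).mul (hasDerivAt_gg f z' (ww_dd R a b c d) (h a b c d)))
  have kab : C4 _ := C4.add ka kb
  have kabc : C4 _ := C4.add kab kc
  have s1 := I4_add ka kb
  have s2 := I4_add kab kc
  have s3 := I4_add kabc kd
  rw [ia, ib] at s1
  rw [s1, ic] at s2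
  rw [s2, id'] at s3
  simp only [add_zero] at s3
  rw [← s3]
  congr 1
  funext a b c d
  rw [← dgg_lin f z' (ww R a b c d) _ _ _ _ z _ _ _ _ _ (P_w R z a b c d)]
  linear_combination (-gg f z' (ww R a b c d)) * P_div z a b c d

/-- Jacobian factor. -/
def JJ (a c : ℝ) : ℂ := xE a ^ 4 * (2 * xs c * xc c)

@[fun_prop] lemma JJ_c {X : Type*} [TopologicalSpace X] {a c : X → ℝ} (ha : Continuous a)
    (hc : Continuous c) : Continuous fun x => JJ (a x) (c x) := by unfold JJ; fun_prop

/-- The (unnormalized) integral. -/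
def NN (R : ℝ) (f : MvPolynomial (Fin 2 × Fin 2) ℂ) (z : Fin 2 × Fin 2 → ℂ) : ℂ :=
  I4 (fun a b c d => JJ a c * gg f z (ww R a b c d))

/-- Nonvanishing of the denominator along the segment. -/
def Good (R : ℝ) (z : Fin 2 × Fin 2 → ℂ) : Prop :=
  ∀ t : ℝ, |t| ≤ 1 → ∀ a b c d, DD (ww R a b c d) (fun q => (t : ℂ) * z q) ≠ 0

lemma Good.smul {R : ℝ} {z : Fin 2 × Fin 2 → ℂ} (h : Good R z) {s : ℝ} (hs : |s| ≤ 1) :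
    Good R (fun q => (s : ℂ) * z q) := by
  intro t ht a b c d
  have := h (t * s) (by rw [abs_mul]; exact mul_le_one₀ ht (abs_nonneg _) hs) a b c d
  simpa [mul_assoc] using this

/-- Directional derivative polynomial. -/
def Dz (z : Fin 2 × Fin 2 → ℂ) (f : MvPolynomial (Fin 2 × Fin 2) ℂ) :
    MvPolynomial (Fin 2 × Fin 2) ℂ := ∑ q, C (z q) * pderiv q f

lemma eval_Dz (z w) (f : MvPolynomial (Fin 2 × Fin 2) ℂ) : eval w (Dz z f) = dEv f w z := by
  simp [Dz, dEv]

lemma key_step {R : ℝ} (hR : 0 < R) (f : MvPolynomial (Fin 2 × Fin 2) ℂ)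
    {z : Fin 2 × Fin 2 → ℂ} (h : Good R z) :
    NN R f z - NN R f 0 = ∫ t in (0:ℝ)..(Real.pi / 2),
      (Real.cos t : ℂ) * NN R (Dz z f) (fun q => (Real.sin t : ℂ) * z q) := by
  have hs : ∀ t a b c d, DD (ww R a b c d) (fun q => (Real.sin t : ℂ) * z q) ≠ 0 :=
    fun t => h (Real.sin t) (Real.abs_sin_le_one t)
  have cz : Continuous fun p : ℝ × ℝ × ℝ × ℝ × ℝ => fun q => (Real.sin p.1 : ℂ) * z q := by
    fun_prop
  have cw : Continuous fun p : ℝ × ℝ × ℝ × ℝ × ℝ => ww R p.2.1 p.2.2.1 p.2.2.2.1 p.2.2.2.2 :=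
    ww_c R (by fun_prop) (by fun_prop) (by fun_prop) (by fun_prop)
  have c1 := gg_c (Dz z f) cw cz (fun p => hs _ _ _ _ _)
  have c2 := dgg_c f cw cz (continuous_const (y := z)) (fun p => hs _ _ _ _ _)
  have c0 := gg_c f cw cz (fun p => hs _ _ _ _ _)
  set H : ℝ → ℝ → ℝ → ℝ → ℝ → ℂ := fun t a b c d => JJ a c * ((Real.cos t : ℂ) *
    (gg (Dz z f) (fun q => (Real.sin t : ℂ) * z q) (ww R a b c d)
      - dgg f (fun q => (Real.sin t : ℂ) * z q) (ww R a b c d) z)) with hH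
  have cH : Continuous fun p : ℝ × ℝ × ℝ × ℝ × ℝ => H p.1 p.2.1 p.2.2.1 p.2.2.2.1 p.2.2.2.2 := by
    simp only [hH]; fun_prop
  have e1 : ∀ a b c d, ∫ t in (0:ℝ)..(Real.pi / 2), H t a b c d
      = JJ a c * gg f z (ww R a b c d) - JJ a c * gg f 0 (ww R a b c d) := by
    intro a b c d
    rw [intervalIntegral.integral_eq_sub_of_hasDerivAt
      (f := fun t : ℝ => JJ a c * gg f (fun q => (Real.sin t : ℂ) * z q) (ww R a b c d))]
    · have z1 : (fun q => ((Real.sin (Real.pi / 2) : ℝ) : ℂ) * z q) = z := by simp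
      have z0 : (fun q => ((Real.sin 0 : ℝ) : ℂ) * z q) = 0 := by funext q; simp
      simp only [z1, z0]
    · intro t _
      refine ((hasDerivAt_gg_z f (ww R a b c d) z t (hs t a b c d)).const_mul (JJ a c)).congr_deriv ?_
      simp only [hH, gg, eval_Dz]
    · exact (cH.comp (f := fun t => (t, a, b, c, d)) (by fun_prop)).intervalIntegrable _ _
  have cgz : ∀ (f : MvPolynomial (Fin 2 × Fin 2) ℂ) (t : ℝ), C4 (fun a b c d => JJ a c * gg f (fun q => (Real.sin t : ℂ) * z q)
      (ww R a b c d)) := by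
    intro f t
    have := gg_c f cw cz (fun p => hs _ _ _ _ _)
    have := this.comp (f := fun p : ℝ × ℝ × ℝ × ℝ => (t, p)) (by fun_prop)
    simp only [Function.comp_def] at this
    unfold C4
    fun_prop
  have h0 := cgz f 0
  have h1 := cgz f (Real.pi / 2)
  have z1 : (fun q => ((Real.sin (Real.pi / 2) : ℝ) : ℂ) * z q) = z := by simp
  have z0 : (fun q => ((Real.sin 0 : ℝ) : ℂ) * z q) = 0 := by funext q; simp
  simp only [z0] at h0
  simp only [z1] at h1
  unfold NN
  rw [← I4_sub h1 h0]
  simp only [← e1]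
  rw [I4_swap cH (by positivity)]
  congr 1
  funext t
  have e2 : H t = fun a b c d => (Real.cos t : ℂ) * (JJ a c * gg (Dz z f)
      (fun q => (Real.sin t : ℂ) * z q) (ww R a b c d) - ((R : ℂ)⁻¹ *
        ((R * (xE a ^ 4 * (2 * xs c * xc c))) *
          dgg f (fun q => (Real.sin t : ℂ) * z q) (ww R a b c d) z))) := by
    have hR' : (R : ℂ) ≠ 0 := by exact_mod_cast hR.ne'
    funext a b c d
    simp only [hH, JJ]
    field_simp
  rw [e2, I4_mul, I4_sub (cgz _ t), I4_mul, stokes R f z _ (hs t)]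
  · simp
  · have := c2.comp (f := fun p : ℝ × ℝ × ℝ × ℝ => (t, p)) (by fun_prop)
    simp only [Function.comp_def] at this
    unfold C4
    fun_prop

lemma DD_zero (R a b c d : ℝ) : DD (ww R a b c d) 0 = R ^ 2 * xE a ^ 2 := by
  have hI := Complex.I_sq
  have hu := xuu b d
  have hv := xvv b d
  have hc := xcs c
  simp only [DD, ww, mk4_00, mk4_01, mk4_10, mk4_11, Pi.zero_apply, sub_zero]
  linear_combination (R:ℂ)^2 * xE a ^2 * (xc c ^2 * hu + hc
    - xs c ^ 2 * xv b d * xv' b d * hI + xs c ^ 2 * hv)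

lemma JJ_gg_zero {R : ℝ} (hR : 0 < R) (f : MvPolynomial (Fin 2 × Fin 2) ℂ) (a b c d : ℝ) :
    JJ a c * gg f 0 (ww R a b c d) = ((R : ℂ) ^ 4)⁻¹ * ((Real.sin c : ℂ) * eval (ww R a b c d) f) := by
  have hR' : (R : ℂ) ≠ 0 := by exact_mod_cast hR.ne'
  have := xE_ne a
  rw [JJ, gg, DD_zero, xsin]
  field_simp

lemma NN_zero {R : ℝ} (hR : 0 < R) {n : ℕ} (f : MvPolynomial (Fin 2 × Fin 2) ℂ)
    (hf : f.IsHomogeneous n) :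
    NN R f 0 = (16 * (Real.pi : ℂ) ^ 3 / (R : ℂ) ^ 4) * eval 0 f := by
  have hR' : (R : ℂ) ≠ 0 := by exact_mod_cast hR.ne'
  unfold NN
  simp only [JJ_gg_zero hR]
  rw [I4_mul]
  rcases Nat.eq_zero_or_pos n with rfl | hn
  · rw [← totalDegree_zero_iff_isHomogeneous, totalDegree_eq_zero_iff_eq_C] at hf
    rw [hf]
    simp only [eval_C, I4]
    have : ∫ θ in (0:ℝ)..Real.pi, (Real.sin θ : ℂ) = 2 := by
      rw [intervalIntegral.integral_ofReal, integral_sin]; norm_num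
    have h2 : ∫ θ in (0:ℝ)..Real.pi, (∫ _ψ in (-(2 * Real.pi))..(2 * Real.pi),
        (Real.sin θ : ℂ) * coeff 0 f) = 8 * Real.pi * coeff 0 f := by
      simp only [intervalIntegral.integral_const, Complex.real_smul,
        intervalIntegral.integral_const_mul, intervalIntegral.integral_mul_const, this]
      push_cast
      ring
    simp only [h2]
    simp only [intervalIntegral.integral_const, Complex.real_smul]
    push_cast
    field_simp
    ring
  · have h0 : eval 0 f = 0 := by
      rw [MvPolynomial.eval_zero, constantCoeff_eq]
      exact hf.coeff_eq_zero (by simpa using hn.ne)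
    have cw : C4 (fun a b c d => eval (ww R a b c d) f) :=
      ev_c f (ww_c R (by fun_prop) (by fun_prop) (by fun_prop) (by fun_prop))
    unfold C4 at cw
    have cH : C4 (fun a b c d => (Real.sin c : ℂ) * eval (ww R a b c d) f) := by
      unfold C4; fun_prop
    have cH' : C4 (fun a b c d => (n * Complex.I : ℂ) * ((Real.sin c : ℂ) * eval (ww R a b c d) f)) := by
      unfold C4; fun_prop
    have hper : Per (fun a b c d => (Real.sin c : ℂ) * eval (ww R a b c d) f) := by
      apply Per.mk' (fun a b c d => (Real.sin c : ℂ) * eval (-ww R a b c d) f) <;>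
      · intro a b c d
        simp only [ww_pa, ww_pb, ww_pd, neg_neg]
    have := I4_alpha hper cH cH' (fun a b c d => by
      refine ((hasDerivAt_ev f (ww_da R a b c d)).const_mul _).congr_deriv ?_
      have e := congrArg (eval (ww R a b c d)) hf.sum_X_mul_pderiv
      simp only [map_sum, map_mul, eval_X, nsmul_eq_mul, map_natCast] at e
      simp only [dEv, wa, mul_assoc, ← Finset.mul_sum, e]
      ring)
    rw [I4_mul] at this
    have hnI : (n * Complex.I : ℂ) ≠ 0 := by
      simp [hn.ne']
    rw [(mul_eq_zero.mp this).resolve_left hnI, h0]; simp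

lemma NN_hom {R : ℝ} (hR : 0 < R) (n : ℕ) : ∀ (f : MvPolynomial (Fin 2 × Fin 2) ℂ)
    (_ : f.IsHomogeneous n) (z : Fin 2 × Fin 2 → ℂ) (_ : Good R z),
    NN R f z = (16 * (Real.pi : ℂ) ^ 3 / (R : ℂ) ^ 4) * eval z f := by
  induction n with
  | zero =>
    intro f hf z hz
    have k := key_step hR f hz
    rw [NN_zero hR f hf] at k
    rw [← totalDegree_zero_iff_isHomogeneous, totalDegree_eq_zero_iff_eq_C] at hf
    have e : Dz z f = 0 := by rw [hf]; simp [Dz]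
    have e2 : ∀ z, NN R 0 z = 0 := by intro z; simp [NN, gg, I4]
    simp only [e, e2, mul_zero, intervalIntegral.integral_zero] at k
    rw [sub_eq_zero.mp k, hf]; simp
  | succ n ih =>
    intro f hf z hz
    have k := key_step hR f hz
    rw [NN_zero hR f hf] at k
    have hD : (Dz z f).IsHomogeneous n := by
      apply IsHomogeneous.sum
      intro q _
      exact (hf.pderiv (i := q)).C_mul _
    have e : ∀ t : ℝ, NN R (Dz z f) (fun q => (Real.sin t : ℂ) * z q) =
        (16 * (Real.pi : ℂ) ^ 3 / (R : ℂ) ^ 4) * dEv f (fun q => (Real.sin t : ℂ) * z q) z := by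
      intro t
      rw [ih _ hD _ (hz.smul (Real.abs_sin_le_one t)), eval_Dz]
    have hd : ∀ t : ℝ, HasDerivAt (fun t : ℝ => (16 * (Real.pi : ℂ) ^ 3 / (R : ℂ) ^ 4) *
        eval (fun q => (Real.sin t : ℂ) * z q) f) ((Real.cos t : ℂ) *
        ((16 * (Real.pi : ℂ) ^ 3 / (R : ℂ) ^ 4) * dEv f (fun q => (Real.sin t : ℂ) * z q) z)) t := by
      intro t
      refine ((hasDerivAt_ev f (w := fun (t : ℝ) q => (Real.sin t : ℂ) * z q)
        (w' := fun q => (Real.cos t : ℂ) * z q) (t := t)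
        (fun q => ((Real.hasDerivAt_sin t).ofReal_comp).mul_const (z q))).const_mul _).congr_deriv ?_
      simp only [dEv, mul_assoc, ← Finset.mul_sum]
      ring
    simp only [e] at k
    rw [intervalIntegral.integral_eq_sub_of_hasDerivAt (fun t _ => hd t)] at k
    · have z1 : (fun q => ((Real.sin (Real.pi / 2) : ℝ) : ℂ) * z q) = z := by simp
      have z0 : (fun q => ((Real.sin 0 : ℝ) : ℂ) * z q) = 0 := by funext q; simp
      rw [z1, z0] at k
      linear_combination k
    · apply Continuous.intervalIntegrable
      have := dEv_c f (X := ℝ) (w := fun t q => (Real.sin t : ℂ) * z q) (w' := fun _ => z)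
        (by fun_prop) continuous_const
      fun_prop

lemma NN_all {R : ℝ} (hR : 0 < R) (f : MvPolynomial (Fin 2 × Fin 2) ℂ)
    (z : Fin 2 × Fin 2 → ℂ) (hz : Good R z) :
    NN R f z = (16 * (Real.pi : ℂ) ^ 3 / (R : ℂ) ^ 4) * eval z f := by
  have hz1 : ∀ a b c d, DD (ww R a b c d) z ≠ 0 := by
    intro a b c d
    simpa using hz 1 (by simp) a b c d
  induction f using MvPolynomial.monomial_add_induction_on with
  | C a => exact NN_hom hR 0 _ (isHomogeneous_C _ a) z hz
  | monomial_add m r f _ _ hf =>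
    have cg : ∀ f, C4 fun a b c d => JJ a c * gg f z (ww R a b c d) := by
      intro f
      have := gg_c f (X := ℝ × ℝ × ℝ × ℝ) (w := fun p => ww R p.1 p.2.1 p.2.2.1 p.2.2.2)
        (z := fun _ => z)
        (ww_c R (by fun_prop) (by fun_prop) (by fun_prop) (by fun_prop)) continuous_const
        (fun x => hz1 _ _ _ _)
      unfold C4; fun_prop
    have h1 := NN_hom hR _ _ (isHomogeneous_monomial (d := m) r rfl) z hz
    have : NN R (monomial m r + f) z = NN R (monomial m r) z + NN R f z := by
      unfold NN
      rw [← I4_add (cg _) (cg _)]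
      congr 1
      funext a b c d
      simp only [gg, map_add]
      ring
    rw [this, h1, hf, map_add]; ring

lemma good_of_posDef {R : ℝ} (Z : Matrix (Fin 2) (Fin 2) ℂ)
    (hZ : (((R ^ 2 : ℝ) : ℂ) • (1 : Matrix (Fin 2) (Fin 2) ℂ)
             - Z * Z.conjTranspose).PosDef) : Good R (fun q => Z q.1 q.2) := by
  intro t ht a b c d h0
  have hdet : (Wparam R a b c d - (t : ℂ) • Z).det = 0 := by
    rw [← h0, ← ww_eq, DD, Matrix.det_fin_two]
    simp
  obtain ⟨v, hv, hv0⟩ := Matrix.exists_vecMul_eq_zero_iff.mpr hdet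
  have hw := fun q => congrFun (ww_eq R a b c d) q
  have hpos := (Matrix.posDef_iff_dotProduct_mulVec.mp hZ).2 (x := star v) (by simpa using hv)
  have e0 := congrFun hv0 0
  have e1 := congrFun hv0 1
  have w00 := hw (0, 0)
  have w01 := hw (0, 1)
  have w10 := hw (1, 0)
  have w11 := hw (1, 1)
  simp only [ww, mk4_00, mk4_01, mk4_10, mk4_11] at w00 w01 w10 w11
  simp only [Matrix.vecMul, dotProduct, Fin.sum_univ_two, Matrix.sub_apply, Matrix.smul_apply,
    smul_eq_mul, Pi.zero_apply, w00, w01, w10, w11] at e0 e1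
  have cE : xE a * (starRingEnd ℂ) (xE a) = 1 := by
    rw [xE, ← Complex.exp_conj, ← Complex.exp_add, ← Complex.exp_zero]; congr 1; simp
  have h2 : (starRingEnd ℂ) (2:ℂ) = 2 := by simpa using Complex.conj_ofReal 2
  have cu : (starRingEnd ℂ) (xu b d) = xu' b d := by
    rw [xu, xu', ← Complex.exp_conj]; congr 1; simp [h2]
  have cu' : (starRingEnd ℂ) (xu' b d) = xu b d := by
    rw [← cu, Complex.conj_conj]
  have cv : (starRingEnd ℂ) (xv b d) = xv' b d := by
    rw [xv, xv', ← Complex.exp_conj]; congr 1; simp [h2]; ring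
  have cv' : (starRingEnd ℂ) (xv' b d) = xv b d := by
    rw [← cv, Complex.conj_conj]
  have cc : (starRingEnd ℂ) (xc c) = xc c := Complex.conj_ofReal _
  have cs : (starRingEnd ℂ) (xs c) = xs c := Complex.conj_ofReal _
  set A := v 0 * Z 0 0 + v 1 * Z 1 0 with hA
  set B := v 0 * Z 0 1 + v 1 * Z 1 1 with hB
  have f0 : v 0 * (R * xE a * (xu b d * xc c)) + v 1 * (R * xE a * (Complex.I * xv' b d * xs c))
      = t * A := by rw [hA]; linear_combination e0
  have f1 : v 0 * (R * xE a * (Complex.I * xv b d * xs c)) + v 1 * (R * xE a * (xu' b d * xc c))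
      = t * B := by rw [hB]; linear_combination e1
  have g0 := congrArg (starRingEnd ℂ) f0
  have g1 := congrArg (starRingEnd ℂ) f1
  simp only [map_add, map_mul, Complex.conj_ofReal, cu, cu', cv, cv', cc, cs, Complex.conj_I]
    at g0 g1
  have key : (R : ℂ) ^ 2 * (v 0 * (starRingEnd ℂ) (v 0) + v 1 * (starRingEnd ℂ) (v 1))
      = (t : ℂ) ^ 2 * (A * (starRingEnd ℂ) A + B * (starRingEnd ℂ) B) := by
    have hu := xuu b d
    have hv := xvv b d
    have hc := xcs c
    have hI := Complex.I_sq
    have k1 : (t : ℂ) ^ 2 * (A * (starRingEnd ℂ) A + B * (starRingEnd ℂ) B)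
      = (t * A) * (t * (starRingEnd ℂ) A) + (t * B) * (t * (starRingEnd ℂ) B) := by ring
    rw [k1, ← f0, ← f1, ← g0, ← g1]
    clear k1 f0 f1 g0 g1 e0 e1 w00 w01 w10 w11 cu cu' cv cv' cc cs hA hB hpos hw hv0 hdet h0
    generalize xu b d = u at *
    generalize xu' b d = u' at *
    generalize xv b d = v at *
    generalize xv' b d = v' at *
    generalize xc c = C at *
    generalize xs c = S at *
    generalize (starRingEnd ℂ) (xE a) = E' at *
    generalize xE a = E at *
    generalize Complex.I = I at *
    grind
  have hpos' : (0 : ℂ) < (R : ℂ) ^ 2 * (v 0 * (starRingEnd ℂ) (v 0) + v 1 * (starRingEnd ℂ) (v 1))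
      - (A * (starRingEnd ℂ) A + B * (starRingEnd ℂ) B) := by
    convert hpos using 1
    simp [Matrix.mulVec, dotProduct, Fin.sum_univ_two, Matrix.mul_apply, Matrix.one_apply, hA, hB]
    ring
  rw [key] at hpos'
  simp only [Complex.mul_conj] at hpos'
  norm_cast at hpos'
  have n1 := Complex.normSq_nonneg A
  have n2 := Complex.normSq_nonneg B
  have ht2 : t ^ 2 ≤ 1 := (sq_le_one_iff_abs_le_one t).mpr ht
  nlinarith

theorem stmt16 (R : ℝ) (hR : 0 < R) (f : MvPolynomial (Fin 2 × Fin 2) ℂ)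
    (Z : Matrix (Fin 2) (Fin 2) ℂ)
    (hZ : (((R ^ 2 : ℝ) : ℂ) • (1 : Matrix (Fin 2) (Fin 2) ℂ)
             - Z * Z.conjTranspose).PosDef) :
    (Complex.I / (2 * (Real.pi : ℂ) ^ 3)) *
      U2int R (fun W => eval (fun q => W q.1 q.2) f / (W - Z).det ^ 2)
    = eval (fun q => Z q.1 q.2) f := by
  have hR' : (R : ℂ) ≠ 0 := by exact_mod_cast hR.ne'
  have hpi : (Real.pi : ℂ) ≠ 0 := by exact_mod_cast Real.pi_ne_zero
  have h := NN_all hR f _ (good_of_posDef Z hZ)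
  have e : U2int R (fun W => eval (fun q => W q.1 q.2) f / (W - Z).det ^ 2)
      = ((R : ℂ) ^ 4 / (8 * Complex.I)) * NN R f (fun q => Z q.1 q.2) := by
    unfold NN
    rw [← I4_mul]
    unfold U2int I4
    have : ∀ α φ θ ψ : ℝ, eval (fun q => Wparam R α φ θ ψ q.1 q.2) f / (Wparam R α φ θ ψ - Z).det ^ 2
        * ((R : ℂ) ^ 4 / (8 * Complex.I)) *
        Complex.exp (4 * Complex.I * α) * (Real.sin θ : ℂ) =
        (R : ℂ) ^ 4 / (8 * Complex.I) * (JJ α θ * gg f (fun q => Z q.1 q.2) (ww R α φ θ ψ)) := by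
      intro α φ θ ψ
      have e4 : Complex.exp (4 * Complex.I * α) = xE α ^ 4 := by
        rw [xE, ← Complex.exp_nat_mul]; congr 1; push_cast; ring
      rw [e4, xsin, ← ww_eq, JJ, gg, DD, Matrix.det_fin_two]
      simp only [Matrix.sub_apply]
      ring
    simp only [this]
  rw [e, h]
  have hI := Complex.I_ne_zero
  field_simp
  norm_num
end
end
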